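/- arXiv:2408.14046 — 2 statements merged into one kernel-verified Lean document; each statement's English description precedes it below -/
import Mathlib

section
/- Let q be an odd prime power, r and n_0 positive integers, and g ∈ GL(n_0, F_q). Then the proportion of irreducible complex characters χ of GL(n, F_q) such that 2^r does not divide χ(g) tends to 0 as n → ∞: lim_{n→∞} #{χ ∈ Irr(GL(n,q)) : 2^r ∤ χ(g)} / |Irr(GL(n,q))| = 0. -/
open Matrix

noncomputable def blockOneHom (F : Type*) [Field F] (n₀ n : ℕ) (h : n₀ ≤ n) :
    Matrix (Fin n₀) (Fin n₀) F →* Matrix (Fin n) (Fin n) F :=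
  (Matrix.reindexAlgEquiv F F
      ((finSumFinEquiv (m := n₀) (n := n - n₀)).trans
        (finCongr (Nat.add_sub_cancel' h)))).toAlgHom.toMonoidHom.comp
    { toFun := fun A => Matrix.fromBlocks A 0 0 (1 : Matrix (Fin (n - n₀)) (Fin (n - n₀)) F)
      map_one' := by simp [Matrix.fromBlocks_one]
      map_mul' := fun A B => by
        simp [Matrix.fromBlocks_multiply] }

noncomputable def glEmbed {F : Type*} [Field F] {n₀ n : ℕ} (h : n₀ ≤ n) :
    GL (Fin n₀) F →* GL (Fin n) F :=
  Units.map (blockOneHom F n₀ n h)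

def IsIrrChar (G : Type) [Group G] (f : G → ℂ) : Prop :=
  ∃ V : FDRep ℂ G, CategoryTheory.Simple V ∧ FDRep.character V = f

/-- `d` divides the algebraic number `z`, i.e. `z / d` is an algebraic integer. -/
def NatDvdAlg (d : ℕ) (z : ℂ) : Prop := IsIntegral ℤ (z / (d : ℂ))

/-!
Characters are evaluated on elements `T` of the group algebra with `T ^ (N + 1) = T`, where their
values are algebraic integers, and the induction on `r` runs over all such `T`. For the step, let
`K / F` have degree `2 ^ (k + 1)`, larger than the block on which `T` lives, and let `Kˣ` act on `K`
by multiplication. Some `η` in `ℂ[Kˣ]` is supported on non-squares and satisfies `η ^ 2 = 1`, so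
`P = (1 + η) / 2` is idempotent and `P ⊗ T` is again of the required kind. If `χ` vanishes at
`diag(x, y, 1)` for every non-square `x`, then `χ (P ⊗ T) = χ (T) / 2`, so that `2 ^ r ∣ χ (P ⊗ T)`
gives `2 ^ (r + 1) ∣ χ (T)`.

For a non-square `x`, all elements with diagonal blocks `x` and `diag(y, 1)` are conjugate, so `χ`
vanishes at `diag(x, y, 1)` as soon as its sum over the unipotent radical does. The Fourier
coefficients of these sums along `Kˣ` are governed by multiplicities, which are natural numbers
bounded on average by Bessel's inequality. They are constant on Frobenius orbits, and all but few
characters of `Kˣ` have an orbit of size `2 ^ (k + 1)`, so at most `56 / 2 ^ k * q ^ n` irreducible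
characters are exceptional. On the other hand `GL(n, q)` has at least `q ^ n / 2` irreducible
characters.
-/

section Characters

open scoped ComplexConjugate ComplexOrder

lemma isIntegral_trace_of_pow_succ_eq_self {k V : Type*} [Field k] [IsAlgClosed k]
    [AddCommGroup V] [Module k V] [FiniteDimensional k V] {T : Module.End k V} {N : ℕ}
    (hN : 1 ≤ N) (hT : T ^ (N + 1) = T) : IsIntegral ℤ (LinearMap.trace k V T) := by
  rw [Module.End.trace_eq_sum_roots_charpoly_of_splits (IsAlgClosed.splits _)]
  refine Subalgebra.multiset_sum_mem (S := integralClosure ℤ k) fun μ hμ => ?_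
  have hμ_eigen : T.HasEigenvalue μ :=
    (Module.End.hasEigenvalue_iff_isRoot_charpoly _ _).2 (Polynomial.mem_roots'.1 hμ).2
  obtain ⟨v, hv⟩ := hμ_eigen.exists_hasEigenvector
  have hμ_pow : μ ^ (N + 1) = μ := by
    have := hv.pow_apply (N + 1)
    rw [hT, hv.apply_eq_smul] at this
    exact (smul_left_injective k hv.2 this).symm
  refine ⟨Polynomial.X ^ (N + 1) - Polynomial.X, Polynomial.monic_X_pow_sub ?_, by simp [hμ_pow]⟩
  rw [Polynomial.degree_X]
  exact_mod_cast Nat.lt_succ_of_le hN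

lemma exists_natCast_eq_average_mul_character {k H W : Type*} [Field k] [Group H] [Fintype H]
    [NeZero (Nat.card H : k)] [AddCommGroup W] [Module k W] [FiniteDimensional k W]
    (σ : Representation k H W) (c : H →* k) :
    ∃ n : ℕ, (Nat.card H : k)⁻¹ * ∑ h, c h * σ.character h = n := by
  let twisted : Representation k H W :=
    { toFun := fun h => c h • σ h
      map_one' := by simp
      map_mul' := fun a b => by rw [map_mul, map_mul, smul_mul_smul_comm] }
  let : Invertible (Nat.card H : k) := invertibleOfNonzero (NeZero.ne _)
  refine ⟨Module.finrank k twisted.invariants, ?_⟩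
  rw [← Representation.card_inv_mul_sum_char_eq_finrank twisted]
  simp [Representation.character, twisted]

-- The representation preserves the positive definite form `∑ₕ ρ(h)ᴴ ρ(h)`, so `ρ(g)⁻¹` is
-- conjugate to `ρ(g)ᴴ`.
lemma character_inv_eq_conj {G V : Type*} [Group G] [Finite G] [AddCommGroup V] [Module ℂ V]
    [FiniteDimensional ℂ V] (ρ : Representation ℂ G V) (g : G) :
    ρ.character g⁻¹ = conj (ρ.character g) := by
  classical
  have := Fintype.ofFinite G
  let b := Module.finBasis ℂ V
  let A : G → Matrix _ _ ℂ := fun h => LinearMap.toMatrixAlgEquiv b (ρ h)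
  have hA_mul (h k : G) : A (h * k) = A h * A k := by simp only [A, map_mul]
  have hA_one : A 1 = 1 := by simp only [A, map_one]
  have hA_trace (h : G) : (A h).trace = ρ.character h :=
    (LinearMap.trace_eq_matrix_trace ℂ b (ρ h)).symm
  let M := ∑ h, (A h)ᴴ * A h
  have hM_posDef : M.PosDef := by
    rw [show M = (A 1)ᴴ * A 1 + ∑ h ∈ Finset.univ.erase 1, (A h)ᴴ * A h from
      (Finset.add_sum_erase _ _ (Finset.mem_univ 1)).symm, hA_one]
    exact Matrix.PosDef.add_posSemidef (by simpa using Matrix.PosDef.one)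
      (Matrix.posSemidef_sum _ fun h _ => Matrix.posSemidef_conjTranspose_mul_self _)
  have hM_inv : (A g)ᴴ * M = M * A g⁻¹ := by
    simp only [M, Finset.mul_sum, Finset.sum_mul]
    refine Fintype.sum_equiv (Equiv.mulRight g) _ _ fun h => ?_
    rw [Equiv.coe_mulRight, Matrix.mul_assoc _ _ (A g⁻¹), ← hA_mul, mul_inv_cancel_right, hA_mul,
      Matrix.conjTranspose_mul, Matrix.mul_assoc]
  have hM_conj : A g⁻¹ = M⁻¹ * (A g)ᴴ * M := by
    rw [Matrix.mul_assoc, hM_inv, Matrix.nonsing_inv_mul_cancel_left _ _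
      ((Matrix.isUnit_iff_isUnit_det M).1 hM_posDef.isUnit)]
  rw [← hA_trace, ← hA_trace, hM_conj, Matrix.trace_conj' hM_posDef.isUnit,
    Matrix.trace_conjTranspose]
  rfl

namespace IsIrrChar

variable {G : Type} [Group G] {χ ψ : G → ℂ}

lemma apply_inv [Finite G] (hχ : IsIrrChar G χ) (g : G) : χ g⁻¹ = conj (χ g) := by
  obtain ⟨V, _, rfl⟩ := hχ
  exact character_inv_eq_conj V.ρ g

lemma apply_conj (hχ : IsIrrChar G χ) (g h : G) : χ (h * g * h⁻¹) = χ g := by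
  obtain ⟨V, _, rfl⟩ := hχ
  exact V.char_conj g h

lemma sum_mul_conj_self [Fintype G] (hχ : IsIrrChar G χ) :
    ∑ g, χ g * conj (χ g) = Nat.card G := by
  simp_rw [← hχ.apply_inv]
  obtain ⟨V, hV, rfl⟩ := hχ
  exact (FDRep.simple_iff_char_is_norm_one V).1 hV

lemma sum_mul_conj_of_ne [Fintype G] (hχ : IsIrrChar G χ) (hψ : IsIrrChar G ψ) (hne : χ ≠ ψ) :
    ∑ g, χ g * conj (ψ g) = 0 := by
  simp_rw [← hψ.apply_inv]
  obtain ⟨V, hV, rfl⟩ := hχ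
  obtain ⟨W, hW, rfl⟩ := hψ
  have hcard : (Nat.card G : ℂ) ≠ 0 := by simp
  let : Invertible (Nat.card G : ℂ) := invertibleOfNonzero hcard
  have hiso : ¬ Nonempty (V ≅ W) := fun ⟨i⟩ => hne (FDRep.char_iso i)
  have := FDRep.char_orthonormal V W
  rw [if_neg hiso] at this
  exact (mul_eq_zero.1 this).resolve_left (inv_ne_zero hcard)

lemma of_isIrreducible [Finite G] {V : Type} [AddCommGroup V] [Module ℂ V]
    [FiniteDimensional ℂ V] (ρ : Representation ℂ G V) [ρ.IsIrreducible] :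
    IsIrrChar G ρ.character := by
  have := Fintype.ofFinite G
  refine ⟨FDRep.of ρ, ?_, rfl⟩
  rw [FDRep.simple_iff_char_is_norm_one]
  have hcard : (Nat.card G : ℂ) ≠ 0 := by simp
  let : Invertible (Nat.card G : ℂ) := invertibleOfNonzero hcard
  have := Representation.char_orthonormal ρ ρ
  rwa [if_pos ⟨Representation.Equiv.refl ρ⟩, inv_mul_eq_iff_eq_mul₀ hcard, mul_one] at this

-- The left side is the multiplicity of `c⁻¹` in `Hom(π₂^* V, π₁^* V)`.
lemma exists_natCast_eq_average_mul_conj [Finite G] (hχ : IsIrrChar G χ) {H : Type*} [Group H]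
    [Fintype H] (π₁ π₂ : H →* G) (c : H →* ℂ) :
    ∃ n : ℕ, (Nat.card H : ℂ)⁻¹ * ∑ h, c h * (χ (π₁ h) * conj (χ (π₂ h))) = n := by
  simp_rw [← hχ.apply_inv]
  obtain ⟨V, _, rfl⟩ := hχ
  let σ₁ : Representation ℂ H V := V.ρ.comp π₁
  let σ₂ : Representation ℂ H V := V.ρ.comp π₂
  obtain ⟨n, hn⟩ := exists_natCast_eq_average_mul_character (Representation.linHom σ₂ σ₁) c
  refine ⟨n, ?_⟩
  simp_rw [← hn, Representation.char_linHom, mul_comm (σ₂.character _), ← map_inv]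
  rfl

end IsIrrChar

/-- `Irr(G)`, the set of irreducible complex characters of `G`, as a subtype of functions. -/
abbrev Irr (G : Type) [Group G] : Type := {χ : G → ℂ // IsIrrChar G χ}

/-- An irreducible character scaled to be a unit vector of `ℓ²(G)` for the counting measure. -/
noncomputable def irrVec {G : Type} [Group G] (χ : Irr G) : EuclideanSpace ℂ G :=
  ((√(Nat.card G) : ℝ) : ℂ)⁻¹ • WithLp.toLp 2 χ.1

/-- `∑ₕ δ_{h x h⁻¹}`, the indicator of the conjugacy class of `x` scaled by the order of the
centralizer of `x`. -/
noncomputable def classVec {G : Type} [Group G] [Fintype G] [DecidableEq G] (x : G) :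
    EuclideanSpace ℂ G :=
  ∑ h : G, EuclideanSpace.single (h * x * h⁻¹) (1 : ℂ)

section Bessel

lemma ofReal_sqrt_natCast_mul_self (n : ℕ) : ((√n : ℝ) : ℂ) * (√n : ℝ) = n := by
  rw [← Complex.ofReal_mul, Real.mul_self_sqrt n.cast_nonneg, Complex.ofReal_natCast]

variable {G : Type} [Group G] [Fintype G]

lemma inner_irrVec_irrVec (χ ψ : Irr G) :
    inner ℂ (irrVec χ) (irrVec ψ) = (Nat.card G : ℂ)⁻¹ * ∑ g, ψ.1 g * conj (χ.1 g) := by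
  rw [irrVec, irrVec, inner_smul_left, inner_smul_right, ← mul_assoc, map_inv₀, Complex.conj_ofReal,
    ← mul_inv, ofReal_sqrt_natCast_mul_self, PiLp.inner_apply]
  simp only [RCLike.inner_apply]

variable (G) in
lemma orthonormal_irrVec : Orthonormal ℂ (irrVec (G := G)) := by
  classical
  rw [orthonormal_iff_ite]
  intro χ ψ
  rw [inner_irrVec_irrVec]
  split_ifs with h
  · subst h
    rw [χ.2.sum_mul_conj_self, inv_mul_cancel₀ (by simp)]
  · rw [ψ.2.sum_mul_conj_of_ne χ.2 (fun e => h (Subtype.ext e.symm)), mul_zero]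

section ClassVec

variable [DecidableEq G]

lemma inner_irrVec_classVec (χ : Irr G) (x : G) :
    inner ℂ (irrVec χ) (classVec x) = (√(Nat.card G) : ℝ) * conj (χ.1 x) := by
  rw [irrVec, classVec, inner_smul_left, inner_sum]
  simp only [EuclideanSpace.inner_single_right, χ.2.apply_conj, Finset.sum_const, Finset.card_univ,
    one_mul, nsmul_eq_mul, map_inv₀, Complex.conj_ofReal, ← Nat.card_eq_fintype_card]
  rw [← ofReal_sqrt_natCast_mul_self, mul_assoc, inv_mul_cancel_left₀ (by simp)]

lemma inner_classVec_classVec (x y : G) :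
    inner ℂ (classVec x) (classVec y) =
      (Nat.card G * Nat.card {h : G // h * x = y * h} : ℕ) := by
  have inner_single_single (k : G) :
      (∑ h : G, inner ℂ (EuclideanSpace.single (h * x * h⁻¹) (1 : ℂ))
        (EuclideanSpace.single (k * y * k⁻¹) 1)) =
      (Nat.card {h : G // h * x = y * h} : ℂ) := by
    simp only [EuclideanSpace.inner_single_left, map_one, one_mul, PiLp.single_apply]
    rw [Finset.sum_boole, Nat.card_eq_fintype_card, Fintype.card_subtype, Nat.cast_inj]
    refine Finset.card_equiv (Equiv.mulLeft k⁻¹) fun h => ?_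
    simp only [Finset.mem_filter_univ, Equiv.coe_mulLeft]
    rw [mul_inv_eq_iff_eq_mul, mul_assoc k⁻¹, inv_mul_eq_iff_eq_mul]
    simp only [mul_assoc]
  simp only [classVec, sum_inner, inner_sum]
  simp only [inner_single_single, Finset.sum_const, Finset.card_univ, nsmul_eq_mul,
    Nat.card_eq_fintype_card, Nat.cast_mul]

end ClassVec

lemma sum_norm_sq_character_le {G : Type} [Group G] [Finite G] (S : Finset (Irr G))
    {I : Type*} [Fintype I] (c : I → ℂ) (y : I → G) :
    ∑ χ ∈ S, ‖∑ i, c i * χ.1 (y i)‖ ^ 2 ≤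
      ∑ i, ∑ j, ‖c i‖ * ‖c j‖ * (Nat.card {h : G // h * y i = y j * h} : ℝ) := by
  classical
  have := Fintype.ofFinite G
  let φ : EuclideanSpace ℂ G := ∑ i, conj (c i) • classVec (y i)
  have norm_inner_sq (χ : Irr G) :
      ‖inner ℂ (irrVec χ) φ‖ ^ 2 = Nat.card G * ‖∑ i, c i * χ.1 (y i)‖ ^ 2 := by
    have : inner ℂ (irrVec χ) φ = (√(Nat.card G) : ℝ) * conj (∑ i, c i * χ.1 (y i)) := by
      simp only [φ, inner_sum, inner_smul_right, inner_irrVec_classVec, map_sum, map_mul,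
        Finset.mul_sum]
      exact Finset.sum_congr rfl fun i _ => by ring
    rw [this, norm_mul, RCLike.norm_conj, mul_pow, Complex.norm_real, Real.norm_eq_abs, sq_abs,
      Real.sq_sqrt (by positivity)]
  have norm_sq_le : ‖φ‖ ^ 2 ≤ Nat.card G *
      ∑ i, ∑ j, ‖c i‖ * ‖c j‖ * (Nat.card {h : G // h * y i = y j * h} : ℝ) := by
    rw [← inner_self_eq_norm_sq (𝕜 := ℂ)]
    refine (RCLike.re_le_norm _).trans ?_
    simp only [φ, sum_inner, inner_sum, inner_smul_left, inner_smul_right, inner_classVec_classVec,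
      Finset.mul_sum]
    rw [Finset.sum_comm]
    refine (norm_sum_le _ _).trans (Finset.sum_le_sum fun i _ => (norm_sum_le _ _).trans
      (Finset.sum_le_sum fun j _ => le_of_eq ?_))
    simp only [norm_mul, RCLike.norm_conj, Complex.norm_natCast, Nat.cast_mul]
    ring
  have bessel := (orthonormal_irrVec G).sum_inner_products_le φ (s := S)
  simp_rw [norm_inner_sq, ← Finset.mul_sum] at bessel
  exact le_of_mul_le_mul_left (bessel.trans norm_sq_le) (by exact_mod_cast Nat.card_pos)

end Bessel

instance finite_irr {G : Type} [Group G] [Finite G] : Finite (Irr G) := by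
  have := Fintype.ofFinite G
  exact (orthonormal_irrVec G).linearIndependent.finite

section ClassFunctions

open MonoidAlgebra

lemma trace_asAlgebraHom {k G V : Type*} [Field k] [Monoid G] [Fintype G] [AddCommGroup V]
    [Module k V] (ρ : Representation k G V) (z : MonoidAlgebra k G) :
    LinearMap.trace k V (ρ.asAlgebraHom z) = ∑ g, z.coeff g * ρ.character g := by
  conv_lhs => rw [← MonoidAlgebra.sum_coeff_single z]
  rw [Finsupp.sum_fintype _ _ (by simp)]
  simp [Representation.character]

lemma asAlgebraHom_eq_zero_of_trace_eq_zero {k G V : Type*} [Field k] [IsAlgClosed k] [CharZero k]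
    [Monoid G] [AddCommGroup V] [Module k V] [FiniteDimensional k V] (ρ : Representation k G V)
    [ρ.IsIrreducible] {z : MonoidAlgebra k G} (hz : ∀ x, Commute z x)
    (htrace : LinearMap.trace k V (ρ.asAlgebraHom z) = 0) : ρ.asAlgebraHom z = 0 := by
  let T : Representation.IntertwiningMap ρ ρ := ⟨ρ.asAlgebraHom z, fun g => by
    rw [← Representation.asAlgebraHom_of]
    exact ((hz _).map ρ.asAlgebraHom).eq⟩
  obtain ⟨a, ha⟩ :=
    (Representation.IsIrreducible.algebraMap_intertwiningMap_bijective_of_isAlgClosed).2 T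
  have hscalar : ρ.asAlgebraHom z = a • LinearMap.id :=
    (congrArg Representation.IntertwiningMap.toLinearMap ha).symm
  rw [hscalar, map_smul, LinearMap.trace_id, smul_eq_mul, mul_eq_zero, Nat.cast_eq_zero] at htrace
  rcases htrace with rfl | hdim
  · rw [hscalar, zero_smul]
  · have := Module.finrank_zero_iff.1 hdim
    exact Subsingleton.elim _ _

/-- The representation of `G` on a `k[G]`-module; unlike `Representation.ofModule` it keeps the
`k`-module structure that `M` already carries. -/
noncomputable def moduleRep (k G M : Type*) [Field k] [Monoid G] [AddCommGroup M] [Module k M]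
    [Module (MonoidAlgebra k G) M] [IsScalarTower k (MonoidAlgebra k G) M] :
    Representation k G M :=
  (Algebra.lsmul k k M : MonoidAlgebra k G →ₐ[k] Module.End k M).toMonoidHom.comp
    (MonoidAlgebra.of k G)

section ModuleRep

variable (k G M : Type*) [Field k] [Monoid G] [AddCommGroup M] [Module k M]
  [Module (MonoidAlgebra k G) M] [IsScalarTower k (MonoidAlgebra k G) M]

lemma asAlgebraHom_moduleRep : (moduleRep k G M).asAlgebraHom = Algebra.lsmul k k M := by
  refine MonoidAlgebra.algHom_ext' ?_ (Subsingleton.elim _ _)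
  ext1 g
  simp [moduleRep]

instance isIrreducible_moduleRep [IsSimpleModule (MonoidAlgebra k G) M] :
    (moduleRep k G M).IsIrreducible := by
  rw [Representation.irreducible_iff_isSimpleModule_asModule]
  let e : (moduleRep k G M).asModule ≃ₗ[MonoidAlgebra k G] M :=
    { (moduleRep k G M).asModuleEquiv.toAddEquiv with
      map_smul' := fun x m => by
        change (moduleRep k G M).asModuleEquiv (x • m) = _
        rw [Representation.asModuleEquiv_map_smul, asAlgebraHom_moduleRep]
        rfl }
  exact IsSimpleModule.congr e

end ModuleRep

variable {G : Type} [Group G] [Fintype G]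

lemma smul_eq_zero_of_sum_coeff_mul_irr_eq_zero {M : Type} [AddCommGroup M] [Module ℂ M]
    [FiniteDimensional ℂ M] [Module (MonoidAlgebra ℂ G) M] [IsScalarTower ℂ (MonoidAlgebra ℂ G) M]
    [IsSimpleModule (MonoidAlgebra ℂ G) M] {z : MonoidAlgebra ℂ G} (hz : ∀ x, Commute z x)
    (horth : ∀ χ : Irr G, ∑ g, z.coeff g * χ.1 g = 0) (m : M) : z • m = 0 := by
  have htrace := trace_asAlgebraHom (moduleRep ℂ G M) z
  rw [horth ⟨_, .of_isIrreducible (moduleRep ℂ G M)⟩] at htrace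
  have := LinearMap.congr_fun (asAlgebraHom_eq_zero_of_trace_eq_zero _ hz htrace) m
  rwa [asAlgebraHom_moduleRep] at this

lemma eq_zero_of_sum_coeff_mul_irr_eq_zero {z : MonoidAlgebra ℂ G} (hz : ∀ x, Commute z x)
    (horth : ∀ χ : Irr G, ∑ g, z.coeff g * χ.1 g = 0) : z = 0 := by
  have simples_le : sSup {S : Submodule (MonoidAlgebra ℂ G) (MonoidAlgebra ℂ G) |
      IsSimpleModule (MonoidAlgebra ℂ G) S} ≤
        LinearMap.ker (LinearMap.toSpanSingleton (MonoidAlgebra ℂ G) (MonoidAlgebra ℂ G) z) := by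
    refine sSup_le fun S hS s hs => ?_
    have : IsSimpleModule (MonoidAlgebra ℂ G) S := hS
    have : FiniteDimensional ℂ S := FiniteDimensional.of_injective
      (S.subtype.restrictScalars ℂ) S.subtype_injective
    have hzero := smul_eq_zero_of_sum_coeff_mul_irr_eq_zero hz horth (⟨s, hs⟩ : S)
    rw [LinearMap.mem_ker, LinearMap.toSpanSingleton_apply, smul_eq_mul, ← (hz s).eq]
    exact congrArg Subtype.val hzero
  rw [IsSemisimpleModule.sSup_simples_eq_top] at simples_le
  simpa using simples_le (Submodule.mem_top (x := (1 : MonoidAlgebra ℂ G)))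

/-- The central element `∑ g, f(class of g) • g` of the group algebra attached to a class
function. -/
noncomputable def classSum (f : ConjClasses G → ℂ) : MonoidAlgebra ℂ G :=
  MonoidAlgebra.ofCoeff (Finsupp.equivFunOnFinite.symm fun g => f (ConjClasses.mk g))

lemma coeff_classSum (f : ConjClasses G → ℂ) (g : G) :
    (classSum f).coeff g = f (ConjClasses.mk g) :=
  rfl

lemma commute_classSum (f : ConjClasses G → ℂ) (x : MonoidAlgebra ℂ G) :
    Commute (classSum f) x := by
  induction x using MonoidAlgebra.induction_on with
  | of g =>
    ext h
    have hconj : ConjClasses.mk (h * g⁻¹) = ConjClasses.mk (g⁻¹ * h) :=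
      ConjClasses.mk_eq_mk_iff_isConj.2 (isConj_iff.2 ⟨g⁻¹, by group⟩)
    rw [MonoidAlgebra.of_apply, MonoidAlgebra.coeff_single_mul_eq_mul_coeff (g⁻¹ * h)
        (fun _ _ => eq_inv_mul_iff_mul_eq.symm),
      MonoidAlgebra.coeff_mul_single_eq_coeff_mul (h * g⁻¹)
        (fun _ _ => eq_mul_inv_iff_mul_eq.symm), one_mul, mul_one, coeff_classSum, coeff_classSum,
      hconj]
  | add a b ha hb => exact ha.add_right hb
  | smul a x hx => exact hx.smul_right a

lemma card_conjClasses_le_card_irr (G : Type) [Group G] [Finite G] :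
    Nat.card (ConjClasses G) ≤ Nat.card (Irr G) := by
  classical
  have := Fintype.ofFinite G
  have := Fintype.ofFinite (Irr G)
  let pairing : (ConjClasses G → ℂ) →ₗ[ℂ] (Irr G → ℂ) :=
    { toFun := fun f χ => ∑ g, f (ConjClasses.mk g) * χ.1 g
      map_add' := fun f f' => by ext; simp [add_mul, Finset.sum_add_distrib]
      map_smul' := fun c f => by ext; simp [Finset.mul_sum, mul_assoc] }
  have pairing_injective : Function.Injective pairing := by
    refine (injective_iff_map_eq_zero _).2 fun f hf => ?_
    have hzero := eq_zero_of_sum_coeff_mul_irr_eq_zero (commute_classSum f) (congrFun hf)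
    ext c
    obtain ⟨g, rfl⟩ := ConjClasses.mk_surjective c
    exact congrArg (fun z : MonoidAlgebra ℂ G => z.coeff g) hzero
  simpa [Nat.card_eq_fintype_card] using
    LinearMap.finrank_le_finrank_of_injective pairing_injective

end ClassFunctions

end Characters

section ConjugacyClasses

open Polynomial

section MonicPolynomials

variable (F : Type*) [Field F] (k : ℕ)

/-- The monic polynomials of degree `k`. -/
abbrev MonicOfDegree : Type _ := {p : F[X] // p.Monic ∧ p.natDegree = k}

/-- A monic polynomial of degree `k` is determined by its lower coefficients. -/
noncomputable def monicOfDegreeEquiv : MonicOfDegree F k ≃ (Fin k → F) :=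
  (monicEquivDegreeLT k).trans (degreeLTEquiv F k).toEquiv

instance [Finite F] : Finite (MonicOfDegree F k) :=
  Finite.of_equiv _ (monicOfDegreeEquiv F k).symm

lemma natCard_monicOfDegree : Nat.card (MonicOfDegree F k) = Nat.card F ^ k := by
  rw [Nat.card_congr (monicOfDegreeEquiv F k), Nat.card_fun, Nat.card_fin]

end MonicPolynomials

lemma exists_charpoly_eq {F : Type*} [Field F] {k : ℕ} (p : MonicOfDegree F k) :
    ∃ A : Matrix (Fin k) (Fin k) F, A.charpoly = p := by
  obtain ⟨p, hp, rfl⟩ := p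
  refine ⟨Algebra.leftMulMatrix (AdjoinRoot.powerBasis hp.ne_zero).basis
    (AdjoinRoot.powerBasis hp.ne_zero).gen, ?_⟩
  exact (charpoly_leftMulMatrix (AdjoinRoot.powerBasis hp.ne_zero)).trans
    (AdjoinRoot.minpoly_powerBasis_gen_of_monic hp)

lemma charpoly_eq_of_isConj {F κ : Type*} [Field F] [Fintype κ] [DecidableEq κ] {A B : GL κ F}
    (h : IsConj A B) : A.1.charpoly = B.1.charpoly := by
  obtain ⟨c, rfl⟩ := isConj_iff.1 h
  rw [Units.val_mul, Units.val_mul, Matrix.coe_units_inv, Matrix.charpoly_units_conj]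

/-- The monic polynomial `X * p + u`, whose constant coefficient is the unit `u`. -/
noncomputable def mulXAddUnit {F : Type*} [Field F] {k : ℕ} (u : Fˣ) (p : MonicOfDegree F k) :
    MonicOfDegree F (k + 1) :=
  have hdeg : (C u.1).degree < (p.1 * X).degree := by
    rw [degree_mul, degree_X, degree_C u.ne_zero, degree_eq_natDegree p.2.1.ne_zero]
    exact_mod_cast Nat.succ_pos _
  ⟨p.1 * X + C u.1, (p.2.1.mul monic_X).add_of_left hdeg, by
    rw [natDegree_add_eq_left_of_degree_lt hdeg, natDegree_mul_X p.2.1.ne_zero, p.2.2]⟩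

lemma coeff_zero_mulXAddUnit {F : Type*} [Field F] {k : ℕ} (u : Fˣ) (p : MonicOfDegree F k) :
    (mulXAddUnit u p).1.coeff 0 = u := by
  simp [mulXAddUnit]

lemma mulXAddUnit_injective {F : Type*} [Field F] {k : ℕ} :
    Function.Injective fun up : Fˣ × MonicOfDegree F k => (mulXAddUnit up.1 up.2).1 := by
  rintro ⟨u, p⟩ ⟨v, p'⟩ h
  obtain rfl : u = v := Units.ext <| by
    rw [← coeff_zero_mulXAddUnit u p, ← coeff_zero_mulXAddUnit v p']
    exact congrArg (fun f : F[X] => f.coeff 0) h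
  exact Prod.ext rfl (Subtype.ext (mul_right_cancel₀ X_ne_zero (add_right_cancel h)))

lemma mul_pow_le_card_conjClasses_GL (F : Type*) [Field F] [Finite F] (k : ℕ) :
    (Nat.card F - 1) * Nat.card F ^ k ≤ Nat.card (ConjClasses (GL (Fin (k + 1)) F)) := by
  have hexists (up : Fˣ × MonicOfDegree F k) :
      ∃ A : GL (Fin (k + 1)) F, A.1.charpoly = mulXAddUnit up.1 up.2 := by
    obtain ⟨A, hA⟩ := exists_charpoly_eq (mulXAddUnit up.1 up.2)
    have hdet : IsUnit A.det := by
      rw [Matrix.det_eq_sign_charpoly_coeff, hA, coeff_zero_mulXAddUnit, isUnit_iff_ne_zero]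
      exact mul_ne_zero (by simp) up.1.ne_zero
    exact ⟨Matrix.GeneralLinearGroup.mk'' A hdet, hA⟩
  choose A hA using hexists
  have hinj : Function.Injective fun up => ConjClasses.mk (A up) := by
    intro up up' h
    have hcharpoly := charpoly_eq_of_isConj (ConjClasses.mk_eq_mk_iff_isConj.1 h)
    rw [hA, hA] at hcharpoly
    exact mulXAddUnit_injective hcharpoly
  calc (Nat.card F - 1) * Nat.card F ^ k = Nat.card (Fˣ × MonicOfDegree F k) := by
        rw [Nat.card_prod, natCard_monicOfDegree, Nat.card_units]
    _ ≤ _ := Nat.card_le_card_of_injective _ hinj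

lemma pow_div_two_le_card_irr_GL (F : Type) [Field F] [Finite F] {n : ℕ} (hn : 1 ≤ n) :
    (Nat.card F : ℝ) ^ n / 2 ≤ Nat.card (Irr (GL (Fin n) F)) := by
  obtain ⟨k, rfl⟩ : ∃ k, n = k + 1 := ⟨n - 1, by omega⟩
  have hq : 2 ≤ Nat.card F := Finite.one_lt_card
  have hqk : (2 : ℝ) * Nat.card F ^ k ≤ Nat.card F * Nat.card F ^ k := by gcongr; exact_mod_cast hq
  calc (Nat.card F : ℝ) ^ (k + 1) / 2 ≤ ((Nat.card F - 1) * Nat.card F ^ k : ℕ) := by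
        push_cast [Nat.cast_sub (one_le_two.trans hq)]
        rw [pow_succ']
        linarith
    _ ≤ Nat.card (Irr (GL (Fin (k + 1)) F)) := by
        exact_mod_cast (mul_pow_le_card_conjClasses_GL F k).trans (card_conjClasses_le_card_irr _)

section ElementaryDivisors

open UniqueFactorizationMonoid

variable {F : Type*} [Field F]

open Classical in
/-- The `F[X]`-module whose elementary divisors are the powers `p ^ (i + 1)`, where `p` runs over
the monic irreducible factors of `g i` with multiplicity. -/
abbrev ElementaryModule {m : ℕ} (g : Fin m → F[X]) : Type _ :=
  ∀ x : Σ i : Fin m, (normalizedFactors (g i)).ToType, F[X] ⧸ F[X] ∙ x.2.1 ^ (x.1.1 + 1)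

lemma exists_equiv_toType_map {ι X : Type*} [Fintype ι] [DecidableEq X] (f : ι → X) :
    ∃ σ : ι ≃ (Finset.univ.val.map f).ToType, ∀ i, (σ i).1 = f i := by
  classical
  have hbij : Function.Bijective (fun x : (Finset.univ (α := ι)).val.ToType => x.1) :=
    (Fintype.bijective_iff_surjective_and_card _).2
      ⟨fun i => ⟨⟨i, 0, by simp⟩, rfl⟩, by rw [Multiset.card_coe]; rfl⟩
  let τ := Equiv.ofBijective _ hbij
  refine ⟨τ.symm.trans (Multiset.mapEquiv _ f), fun i => ?_⟩
  rw [Equiv.trans_apply, Multiset.mapEquiv_apply]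
  exact congrArg f (τ.apply_symm_apply i)

/-- The factors that are trivial modules may be dropped from a product. -/
noncomputable def piSubtypeEquiv {R ι : Type*} [Semiring R] {M : ι → Type*}
    [∀ i, AddCommMonoid (M i)] [∀ i, Module R (M i)] (P : ι → Prop)
    (hP : ∀ i, ¬ P i → Subsingleton (M i)) : (∀ i, M i) ≃ₗ[R] ∀ i : Subtype P, M i :=
  LinearEquiv.ofBijective (LinearMap.pi fun i => LinearMap.proj i.1) <| by
    classical
    refine ⟨fun a b h => funext fun i => ?_, fun b => ⟨fun i => if hi : P i then b ⟨i, hi⟩ else 0,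
      funext fun i => dif_pos i.2⟩⟩
    by_cases hi : P i
    · exact congrFun h ⟨i, hi⟩
    · have := hP i hi
      exact Subsingleton.elim _ _

lemma nonempty_pi_quotient_span_equiv {R ι ι' : Type*} [CommRing R] [IsDomain R] (ρ : ι ≃ ι')
    {a : ι → R} {b : ι' → R} (h : ∀ i, Associated (a i) (b (ρ i))) :
    Nonempty ((∀ i, R ⧸ R ∙ a i) ≃ₗ[R] ∀ j, R ⧸ R ∙ b j) :=
  ⟨(LinearEquiv.piCongrRight fun i => Submodule.quotEquivOfEq _ _
      (Ideal.span_singleton_eq_span_singleton.2 (h i))).trans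
    (LinearEquiv.piCongrLeft R (fun j => R ⧸ R ∙ b j) ρ)⟩

lemma normalizedFactors_prod_normalize [DecidableEq F] {ι : Type*} [Fintype ι] {p : ι → F[X]}
    (hp : ∀ i, Irreducible (p i)) :
    normalizedFactors (∏ i, normalize (p i)) = Finset.univ.val.map fun i => normalize (p i) := by
  rw [Finset.prod, normalizedFactors_prod_eq, Multiset.map_map]
  · simp only [Function.comp_apply, normalize_idem]
  · intro x hx
    obtain ⟨i, -, rfl⟩ := Multiset.mem_map.1 hx
    exact (normalize_associated (p i)).symm.irreducible (hp i)

lemma exists_elementaryModule_equiv_pi {ι : Type*} [Finite ι] {p : ι → F[X]}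
    (hp : ∀ i, Irreducible (p i)) {m : ℕ} (e : ι → Fin m) :
    ∃ g : Fin m → F[X], (∀ i, (g i).Monic) ∧
      Nonempty ((∀ i, F[X] ⧸ F[X] ∙ p i ^ ((e i).1 + 1)) ≃ₗ[F[X]] ElementaryModule g) := by
  classical
  have := Fintype.ofFinite ι
  let g (i : Fin m) : F[X] := ∏ j : {j // e j = i}, normalize (p j)
  have hg (i : Fin m) :
      normalizedFactors (g i) = Finset.univ.val.map fun j : {j // e j = i} => normalize (p j) :=
    normalizedFactors_prod_normalize fun j => hp j
  have hτ (i : Fin m) : ∃ τ : {j // e j = i} ≃ (normalizedFactors (g i)).ToType,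
      ∀ j, (τ j).1 = normalize (p j) := by
    rw [hg]
    exact exists_equiv_toType_map fun j : {j // e j = i} => normalize (p j)
  choose τ hτ using hτ
  let ρ : ι ≃ Σ i : Fin m, (normalizedFactors (g i)).ToType :=
    (Equiv.sigmaFiberEquiv e).symm.trans (Equiv.sigmaCongrRight τ)
  have hassoc (j : ι) : Associated (p j ^ ((e j).1 + 1)) ((ρ j).2.1 ^ ((ρ j).1.1 + 1)) := by
    rw [show (ρ j).2.1 = normalize (p j) from hτ (e j) ⟨j, rfl⟩]
    exact (normalize_associated (p j)).symm.pow_pow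
  exact ⟨g, fun i => monic_prod_of_monic _ _ fun j _ => monic_normalize (hp j).ne_zero,
    nonempty_pi_quotient_span_equiv ρ hassoc⟩

variable {V : Type*} [AddCommGroup V] [Module F V]

lemma finrank_aeval (f : Module.End F V) :
    Module.finrank F (Module.AEval' f) = Module.finrank F V :=
  (Module.AEval'.of f).finrank_eq.symm

lemma sum_mul_natDegree_eq_finrank {f : Module.End F V} {m : ℕ} {g : Fin m → F[X]}
    (hg : ∀ i, (g i).Monic) (E : Module.AEval' f ≃ₗ[F[X]] ElementaryModule g) :
    ∑ i, (i.1 + 1) * (g i).natDegree = Module.finrank F V := by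
  classical
  have hmonic (i : Fin m) : ∀ p ∈ normalizedFactors (g i), p.Monic := fun p hp => by
    rw [← normalize_normalized_factor p hp]
    exact monic_normalize (irreducible_of_normalized_factor p hp).ne_zero
  have hdeg (i : Fin m) :
      ∑ p : (normalizedFactors (g i)).ToType, p.1.natDegree = (g i).natDegree := by
    conv_rhs => rw [← (hg i).normalize_eq_self, ← prod_normalizedFactors_eq (hg i).ne_zero,
      natDegree_multiset_prod_of_monic _ (hmonic i), ← Multiset.map_univ]
    rfl
  have (x : Σ i : Fin m, (normalizedFactors (g i)).ToType) :
      Module.Finite F (F[X] ⧸ F[X] ∙ x.2.1 ^ (x.1.1 + 1)) :=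
    ((hmonic x.1 _ Multiset.coe_mem).pow _).finite_quotient
  rw [← finrank_aeval f, (E.restrictScalars F).finrank_eq, Module.finrank_pi_fintype,
    Fintype.sum_sigma]
  simp_rw [finrank_quotient_span_eq_natDegree, natDegree_pow, ← Finset.mul_sum, hdeg]

lemma exists_aeval_equiv_elementaryModule [FiniteDimensional F V] (f : Module.End F V) :
    ∃ g : Fin (Module.finrank F V) → F[X], (∀ i, (g i).Monic) ∧
      Nonempty (Module.AEval' f ≃ₗ[F[X]] ElementaryModule g) := by
  classical
  obtain ⟨ι, _, p, hp, e, ⟨E⟩⟩ := Module.equiv_directSum_of_isTorsion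
    (Module.AEval.isTorsion_of_finiteDimensional F V f)
  have E := E.trans (DirectSum.linearEquivFunOnFintype F[X] ι _)
  have e_le (i : ι) : e i ≤ Module.finrank F V := by
    have hsurj : Function.Surjective
        (((LinearMap.proj i).comp E.toLinearMap).restrictScalars F) :=
      (Function.surjective_eval i).comp E.surjective
    have hfinrank := LinearMap.finrank_le_finrank_of_surjective hsurj
    rw [finrank_aeval, finrank_quotient_span_eq_natDegree, natDegree_pow] at hfinrank
    exact (Nat.le_mul_of_pos_right _ (hp i).natDegree_pos).trans hfinrank
  have hzero (i : ι) (hi : ¬ 1 ≤ e i) : Subsingleton (F[X] ⧸ F[X] ∙ p i ^ e i) := by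
    rw [Submodule.Quotient.subsingleton_iff, Nat.lt_one_iff.1 (not_le.1 hi), pow_zero]
    exact Ideal.span_singleton_one
  obtain ⟨g, hg, ⟨E'⟩⟩ := exists_elementaryModule_equiv_pi (fun i : {i // 1 ≤ e i} => hp i)
    fun i => (⟨e i - 1, by have := e_le i; have := i.2; omega⟩ : Fin (Module.finrank F V))
  have hspan (i : {i // 1 ≤ e i}) : (F[X] ∙ p i ^ e i) = F[X] ∙ p i ^ (e i - 1 + 1) := by
    rw [Nat.sub_add_cancel i.2]
  exact ⟨g, hg, ⟨(E.trans (piSubtypeEquiv _ hzero)).trans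
    ((LinearEquiv.piCongrRight fun i => Submodule.quotEquivOfEq _ _ (hspan i)).trans E')⟩⟩

end ElementaryDivisors

lemma isConj_of_aeval_equiv {F κ : Type*} [Field F] [Fintype κ] [DecidableEq κ] {A B : GL κ F}
    (E : Module.AEval' (Matrix.toLin' A.1) ≃ₗ[F[X]] Module.AEval' (Matrix.toLin' B.1)) :
    IsConj A B := by
  let ψ : (κ → F) ≃ₗ[F] (κ → F) := ((Module.AEval'.of _).trans (E.restrictScalars F)).trans
    (Module.AEval'.of _).symm
  have hψ (v : κ → F) : ψ (A.1 *ᵥ v) = B.1 *ᵥ ψ v := by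
    apply (Module.AEval'.of (Matrix.toLin' B.1)).injective
    rw [← Matrix.toLin'_apply, ← Matrix.toLin'_apply, ← Module.AEval'.X_smul_of]
    simp only [ψ, LinearEquiv.trans_apply, LinearEquiv.apply_symm_apply,
      LinearEquiv.restrictScalars_apply]
    rw [← map_smul, Module.AEval'.X_smul_of]
  let P : GL κ F := Matrix.GeneralLinearGroup.toLin.symm
    ((LinearMap.GeneralLinearGroup.generalLinearEquiv F (κ → F)).symm ψ)
  have hP : P.1 = LinearMap.toMatrix' ψ.toLinearMap := rfl
  refine isConj_iff.2 ⟨P, mul_inv_eq_iff_eq_mul.2 (Units.ext ?_)⟩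
  rw [Units.val_mul, Units.val_mul, hP]
  apply Matrix.toLin'.injective
  rw [Matrix.toLin'_mul, Matrix.toLin'_mul, Matrix.toLin'_toMatrix']
  exact LinearMap.ext hψ

/-- The multiplicity vectors of the partitions of `m`: `k i` is the number of parts `i + 1`. -/
abbrev PartMultiplicities (m : ℕ) : Type :=
  {k : Fin m → Fin (m + 1) // ∑ i, (i.1 + 1) * (k i).1 = m}

lemma card_conjClasses_GL_le_sum (F κ : Type*) [Field F] [Finite F] [Fintype κ] [DecidableEq κ] :
    Nat.card (ConjClasses (GL κ F)) ≤
      ∑ k : PartMultiplicities (Fintype.card κ), ∏ i, Nat.card F ^ (k.1 i).1 := by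
  set m := Fintype.card κ
  have hfinrank : Module.finrank F (κ → F) = m := Module.finrank_fintype_fun_eq_card F
  have hexists (c : ConjClasses (GL κ F)) :
      ∃ (A : GL κ F) (t : Σ k : PartMultiplicities m, ∀ i, MonicOfDegree F (k.1 i).1),
        ConjClasses.mk A = c ∧ Nonempty (Module.AEval' (Matrix.toLin' A.1) ≃ₗ[F[X]]
          ElementaryModule fun i => (t.2 i).1) := by
    obtain ⟨A, rfl⟩ := ConjClasses.exists_rep c
    obtain ⟨g, hg, ⟨E⟩⟩ := hfinrank ▸ exists_aeval_equiv_elementaryModule (Matrix.toLin' A.1)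
    have hsum := hfinrank ▸ sum_mul_natDegree_eq_finrank hg E
    have hdeg (i : Fin m) : (g i).natDegree < m + 1 := by
      have := Finset.single_le_sum (f := fun i : Fin m => (i.1 + 1) * (g i).natDegree)
        (fun _ _ => Nat.zero_le _) (Finset.mem_univ i)
      nlinarith
    exact ⟨A, ⟨⟨fun i => ⟨_, hdeg i⟩, hsum⟩, fun i => ⟨g i, hg i, rfl⟩⟩, rfl, ⟨E⟩⟩
  choose A t hA E using hexists
  have t_injective : Function.Injective t := fun c c' h => by
    rw [← hA c, ← hA c', ConjClasses.mk_eq_mk_iff_isConj]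
    obtain ⟨Ec⟩ := E c
    obtain ⟨Ec'⟩ := h ▸ E c'
    exact isConj_of_aeval_equiv (Ec.trans Ec'.symm)
  refine (Nat.card_le_card_of_injective t t_injective).trans_eq ?_
  simp_rw [Nat.card_sigma, Nat.card_pi, natCard_monicOfDegree]

lemma half_add_half_pow_le_prod_one_sub_pow {r : ℝ} (hr₀ : 0 ≤ r) (hr : r ≤ 1 / 3) (n : ℕ) :
    1 / 2 + r ^ n / 2 ≤ ∏ i : Fin n, (1 - r ^ (i.1 + 1)) := by
  induction n with
  | zero => norm_num
  | succ n ih =>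
    rw [Fin.prod_univ_castSucc]
    simp only [Fin.val_castSucc, Fin.val_last]
    have hr_pow : r ^ (n + 1) ≤ 1 / 3 := (pow_le_of_le_one hr₀ (by linarith) (by omega)).trans hr
    calc 1 / 2 + r ^ (n + 1) / 2 ≤ (1 / 2 + r ^ n / 2) * (1 - r ^ (n + 1)) := by
          have : 0 ≤ r ^ n * (1 - 2 * r - r ^ (n + 1)) :=
            mul_nonneg (by positivity) (by linarith)
          have : r ^ n * r = r ^ (n + 1) := (pow_succ r n).symm
          nlinarith
      _ ≤ _ := mul_le_mul_of_nonneg_right ih (by linarith)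

lemma sum_prod_pow_le_two {r : ℝ} (hr₀ : 0 ≤ r) (hr : r ≤ 1 / 3) (n N : ℕ) :
    ∑ k : Fin n → Fin N, ∏ i, (r ^ (i.1 + 1)) ^ (k i).1 ≤ 2 := by
  have hgeom (i : Fin n) : ∑ k : Fin N, (r ^ (i.1 + 1)) ^ k.1 ≤ (1 - r ^ (i.1 + 1))⁻¹ := by
    have hlt : r ^ (i.1 + 1) < 1 := pow_lt_one₀ hr₀ (by linarith) (by omega)
    rw [← tsum_geometric_of_lt_one (by positivity) hlt,
      Fin.sum_univ_eq_sum_range (fun k => (r ^ (i.1 + 1)) ^ k)]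
    exact (summable_geometric_of_lt_one (by positivity) hlt).sum_le_tsum _ fun _ _ => by positivity
  calc ∑ k : Fin n → Fin N, ∏ i, (r ^ (i.1 + 1)) ^ (k i).1
      = ∏ i : Fin n, ∑ k : Fin N, (r ^ (i.1 + 1)) ^ k.1 := by
        rw [Finset.prod_univ_sum, Fintype.piFinset_univ]
    _ ≤ ∏ i : Fin n, (1 - r ^ (i.1 + 1))⁻¹ :=
        Finset.prod_le_prod (fun _ _ => Finset.sum_nonneg fun _ _ => by positivity)
          fun i _ => hgeom i
    _ = (∏ i : Fin n, (1 - r ^ (i.1 + 1)))⁻¹ := by rw [Finset.prod_inv_distrib]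
    _ ≤ (1 / 2)⁻¹ := inv_anti₀ (by norm_num) <|
        (le_add_of_nonneg_right (by positivity)).trans
          (half_add_half_pow_le_prod_one_sub_pow hr₀ hr n)
    _ = 2 := by norm_num

-- The number of parts of a partition with multiplicities `k` is `m - ∑ i, i * k i`, and the
-- multiplicity of the part `1` is determined by the other ones.
lemma sum_partMultiplicities_prod_pow_le {Q : ℝ} (hQ : 3 ≤ Q) (m : ℕ) :
    ∑ k : PartMultiplicities m, ∏ i, Q ^ (k.1 i).1 ≤ 2 * Q ^ m := by
  rcases m with _ | n
  · exact (Finset.sum_le_card_nsmul _ _ 1 (by simp)).trans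
      (by simpa using (Nat.cast_le (α := ℝ)).2 ((Fintype.card_subtype_le _).trans (by simp)))
  have hr : Q⁻¹ ≤ 1 / 3 := by rw [one_div]; exact inv_anti₀ (by norm_num) hQ
  have hprod (k : PartMultiplicities (n + 1)) : ∏ i, Q ^ (k.1 i).1 =
      Q ^ (n + 1) * ∏ i : Fin n, (Q⁻¹ ^ (i.1 + 1)) ^ (k.1 i.succ).1 := by
    have hk := k.2
    rw [Fin.sum_univ_succ] at hk
    simp only [← pow_mul, inv_pow]
    rw [Finset.prod_inv_distrib, Finset.prod_pow_eq_pow_sum, Finset.prod_pow_eq_pow_sum,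
      eq_mul_inv_iff_mul_eq₀ (by positivity), ← pow_add, Fin.sum_univ_succ, add_assoc,
      ← Finset.sum_add_distrib]
    congr 1
    refine Eq.trans ?_ hk
    congr 1
    · simp
    · exact Finset.sum_congr rfl fun i _ => by rw [Fin.val_succ]; ring
  have tail_injective : Function.Injective fun k : PartMultiplicities (n + 1) => Fin.tail k.1 := by
    intro k k' h
    have htail (i : Fin n) : k.1 i.succ = k'.1 i.succ := congrFun h i
    have hk := k.2.trans k'.2.symm
    simp only [Fin.sum_univ_succ, htail, add_left_inj] at hk
    refine Subtype.ext (funext (Fin.cases (Fin.ext ?_) htail))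
    simpa using hk
  simp_rw [hprod, ← Finset.mul_sum, mul_comm (2 : ℝ)]
  refine mul_le_mul_of_nonneg_left ?_ (by positivity)
  refine le_trans ?_ (sum_prod_pow_le_two (inv_nonneg.2 (by linarith)) hr n (n + 1 + 1))
  refine (Finset.sum_map Finset.univ ⟨_, tail_injective⟩
    fun k : Fin n → Fin (n + 1 + 1) => ∏ i, (Q⁻¹ ^ (i.1 + 1)) ^ (k i).1).symm.trans_le ?_
  exact Finset.sum_le_sum_of_subset_of_nonneg (Finset.subset_univ _) fun _ _ _ => by positivity

lemma card_conjClasses_GL_le {F : Type*} [Field F] [Finite F] (hq : 3 ≤ Nat.card F)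
    (κ : Type*) [Fintype κ] [DecidableEq κ] :
    (Nat.card (ConjClasses (GL κ F)) : ℝ) ≤ 2 * (Nat.card F : ℝ) ^ Fintype.card κ :=
  calc (Nat.card (ConjClasses (GL κ F)) : ℝ)
      ≤ ∑ k : PartMultiplicities (Fintype.card κ), ∏ i, (Nat.card F : ℝ) ^ (k.1 i).1 := by
        exact_mod_cast card_conjClasses_GL_le_sum F κ
    _ ≤ _ := sum_partMultiplicities_prod_pow_le (by exact_mod_cast hq) _

end ConjugacyClasses

section Intertwiners

/-- The square matrix `x` has no invariant subspaces besides `0` and the whole space. -/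
def ActsIrreducibly {F ι : Type*} [Field F] [Fintype ι] (x : Matrix ι ι F) : Prop :=
  ∀ W : Submodule F (ι → F), (∀ w ∈ W, x *ᵥ w ∈ W) → W = ⊥ ∨ W = ⊤

/-- The invertible matrices `α` with `α * x = x' * α`. -/
abbrev Intertwiner {F ι : Type*} [Field F] [Fintype ι] [DecidableEq ι] (x x' : Matrix ι ι F) :
    Type _ := {α : GL ι F // α.1 * x = x' * α.1}

section Irreducible

variable {F ι κ : Type*} [Field F] [Fintype ι] [Fintype κ] {x : Matrix ι ι F}

lemma ActsIrreducibly.eq_zero_or_mulVec_injective (hx : ActsIrreducibly x) {z : Matrix κ κ F}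
    {γ : Matrix κ ι F} (h : γ * x = z * γ) : γ = 0 ∨ Function.Injective γ.mulVec := by
  have hker : ∀ v ∈ LinearMap.ker γ.mulVecLin, x *ᵥ v ∈ LinearMap.ker γ.mulVecLin := by
    intro v hv
    rw [LinearMap.mem_ker, mulVecLin_apply] at hv ⊢
    rw [mulVec_mulVec, h, ← mulVec_mulVec, hv, mulVec_zero]
  rcases hx _ hker with hbot | htop
  · exact .inr (LinearMap.ker_eq_bot.1 hbot)
  · refine .inl (mulVec_injective ?_)
    funext v
    simpa using LinearMap.congr_fun (LinearMap.ker_eq_top.1 htop) v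

lemma ActsIrreducibly.eq_zero_of_card_lt (hx : ActsIrreducibly x) {z : Matrix κ κ F}
    {N : Matrix ι κ F} (h : x * N = N * z) (hcard : Fintype.card κ < Fintype.card ι) : N = 0 := by
  have hrange : ∀ v ∈ LinearMap.range N.mulVecLin, x *ᵥ v ∈ LinearMap.range N.mulVecLin := by
    rintro _ ⟨w, rfl⟩
    exact ⟨z *ᵥ w, by simp only [mulVecLin_apply, mulVec_mulVec, h]⟩
  rcases hx _ hrange with hbot | htop
  · refine mulVec_injective (funext fun v => ?_)
    simpa using LinearMap.congr_fun (LinearMap.range_eq_bot.1 hbot) v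
  · have := LinearMap.finrank_le_finrank_of_surjective (LinearMap.range_eq_top.1 htop)
    simp only [Module.finrank_fintype_fun_eq_card] at this
    omega

lemma ActsIrreducibly.card_intertwiner_le [DecidableEq ι] [Finite F] [Nonempty ι]
    (hx : ActsIrreducibly x) (x' : Matrix ι ι F) :
    Nat.card (Intertwiner x x') ≤ Nat.card F ^ Fintype.card ι := by
  obtain ⟨i⟩ := ‹Nonempty ι›
  rw [← Nat.card_eq_fintype_card (α := ι), ← Nat.card_fun]
  refine Nat.card_le_card_of_injective (fun α => α.1.1 *ᵥ (Pi.single i 1 : ι → F)) ?_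
  intro α α' h
  have hsub : (α.1.1 - α'.1.1) * x = x' * (α.1.1 - α'.1.1) := by
    rw [Matrix.sub_mul, Matrix.mul_sub, α.2, α'.2]
  rcases hx.eq_zero_or_mulVec_injective hsub with hzero | hinj
  · exact Subtype.ext (Units.ext (sub_eq_zero.1 hzero))
  · have hi : (Pi.single i 1 : ι → F) = 0 :=
      hinj <| by simpa only [sub_mulVec, mulVec_zero, sub_eq_zero] using h
    exact absurd (congrFun hi i) (by simp)

end Irreducible

section BlockMatrices

variable {F ι κ κ' : Type*} [Field F] [Fintype ι] [Fintype κ] [Fintype κ']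

lemma fromBlocks_mul_eq_iff {x x' α : Matrix ι ι F} {u u' β : Matrix ι κ F} {γ : Matrix κ ι F}
    {z δ : Matrix κ κ F} :
    fromBlocks α β γ δ * fromBlocks x u 0 z = fromBlocks x' u' 0 z * fromBlocks α β γ δ ↔
      α * x = x' * α + u' * γ ∧ α * u + β * z = x' * β + u' * δ ∧
        γ * x = z * γ ∧ γ * u + δ * z = z * δ := by
  simp [fromBlocks_multiply, fromBlocks_inj]

variable [DecidableEq κ]

lemma mul_mul_cancel_of_mul_eq_one {o : Type*} {k : Matrix κ κ' F} {k' : Matrix κ' κ F}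
    (hk : k * k' = 1) (X : Matrix κ o F) : k * (k' * X) = X := by
  rw [← Matrix.mul_assoc, hk, Matrix.one_mul]

variable [DecidableEq κ']

lemma isUnit_mul_mul {A : Matrix κ κ F} (hA : IsUnit A) {k l' : Matrix κ' κ F}
    {k' l : Matrix κ κ' F} (hk : k * k' = 1) (hl : l * l' = 1) : IsUnit (k * A * l) := by
  obtain ⟨A, rfl⟩ := hA
  refine .of_mul_eq_one (l' * A⁻¹.1 * k') ?_
  calc k * A.1 * l * (l' * A⁻¹.1 * k') = k * (A.1 * (l * l') * A⁻¹.1) * k' := by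
        simp only [Matrix.mul_assoc]
    _ = 1 := by rw [hl, Matrix.mul_one, Units.mul_inv, Matrix.mul_one, hk]

lemma exists_mul_eq_fromRows_one_zero [DecidableEq ι]
    (hcard : Fintype.card κ = Fintype.card ι + Fintype.card κ')
    {γ : Matrix κ ι F} (hγ : Function.Injective γ.mulVec) :
    ∃ (k : Matrix (ι ⊕ κ') κ F) (k' : Matrix κ (ι ⊕ κ') F), k * k' = 1 ∧ k' * k = 1 ∧
      k * γ = fromRows 1 0 := by
  have hli : LinearIndependent F γ.col := mulVec_injective_iff.1 hγ
  let b := Module.Basis.sumExtend hli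
  have : Finite (ι ⊕ Module.Basis.sumExtendIndex hli) := Module.Finite.finite_basis b
  have : Finite (Module.Basis.sumExtendIndex hli) := Finite.sum_right ι
  have := Fintype.ofFinite (Module.Basis.sumExtendIndex hli)
  have hcard' : Fintype.card (Module.Basis.sumExtendIndex hli) = Fintype.card κ' := by
    have hfinrank := Module.finrank_eq_card_basis b
    rw [Module.finrank_fintype_fun_eq_card, hcard, Fintype.card_sum] at hfinrank
    omega
  let b' := b.reindex (Equiv.sumCongr (Equiv.refl ι) (Fintype.equivOfCardEq hcard'))
  have hb' (i : ι) : b' (Sum.inl i) = γ.col i := by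
    simp only [b', b, Module.Basis.sumExtend, Module.Basis.reindex_apply,
      Module.Basis.extend_apply_self]
    rfl
  refine ⟨b'.toMatrix (Pi.basisFun F κ), (Pi.basisFun F κ).toMatrix b',
    Module.Basis.toMatrix_mul_toMatrix_flip _ _, Module.Basis.toMatrix_mul_toMatrix_flip _ _, ?_⟩
  have hγ' : (Pi.basisFun F κ).toMatrix γ.col = γ := by
    ext i j
    simp [Module.Basis.toMatrix_apply]
  conv_lhs => rw [← hγ', Module.Basis.toMatrix_mul_toMatrix]
  ext i j
  rw [Module.Basis.toMatrix_apply, ← hb', Module.Basis.repr_self]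
  rcases i with i | i <;> simp [Finsupp.single_apply, Matrix.one_apply, eq_comm]

lemma natCard_matrix (F ι κ : Type*) [Fintype ι] [Fintype κ] :
    Nat.card (Matrix ι κ F) = Nat.card F ^ (Fintype.card ι * Fintype.card κ) := by
  simp only [Matrix, Nat.card_fun, Nat.card_eq_fintype_card (α := ι),
    Nat.card_eq_fintype_card (α := κ), ← pow_mul, mul_comm]

-- An invertible matrix whose first columns are those of an injective `γ` is obtained by completing
-- them with an arbitrary basis of a complement.
lemma card_injective_mul_card_GL_le [Finite F]
    (hcard : Fintype.card κ = Fintype.card ι + Fintype.card κ') :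
    Nat.card {γ : Matrix κ ι F // Function.Injective γ.mulVec} *
      (Nat.card (GL κ' F) * Nat.card (Matrix ι κ' F)) ≤ Nat.card (GL κ F) := by
  classical
  choose k k' hk hk' hkγ using fun γ : {γ : Matrix κ ι F // Function.Injective γ.mulVec} =>
    exists_mul_eq_fromRows_one_zero hcard γ.2
  rcases isEmpty_or_nonempty {γ : Matrix κ ι F // Function.Injective γ.mulVec} with _ | ⟨⟨γ₁⟩⟩
  · simp
  let T (t : GL κ' F × Matrix ι κ' F) := fromBlocks (1 : Matrix ι ι F) t.2 0 t.1.1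
  let A (t : {γ : Matrix κ ι F // Function.Injective γ.mulVec} × GL κ' F × Matrix ι κ' F) :=
    k' t.1 * T t.2 * k γ₁
  have hA (t) : IsUnit (A t) :=
    isUnit_mul_mul (isUnit_fromBlocks_zero₂₁.2 ⟨isUnit_one, t.2.1.isUnit⟩) (hk' _) (hk _)
  rw [← Nat.card_prod, ← Nat.card_prod]
  refine Nat.card_le_card_of_injective (fun t => (hA t).unit) ?_
  rintro ⟨γ, t⟩ ⟨γ', t'⟩ h
  have hkT : k' γ * T t = k' γ' * T t' := by
    have := congrArg (fun M : GL κ F => M.1 * k' γ₁) h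
    simpa only [IsUnit.unit_spec, A, Matrix.mul_assoc, hk, Matrix.mul_one] using this
  have hfirst (t) : T t * (fromRows 1 0 : Matrix (ι ⊕ κ') ι F) = fromRows 1 0 := by
    simp [T, fromBlocks_mul_fromRows]
  have hγ (γ) : k' γ * (fromRows 1 0 : Matrix (ι ⊕ κ') ι F) = γ.1 := by
    rw [← hkγ γ, ← Matrix.mul_assoc, hk', Matrix.one_mul]
  obtain rfl : γ = γ' := Subtype.ext <| by
    rw [← hγ γ, ← hγ γ', ← hfirst t, ← Matrix.mul_assoc, hkT, Matrix.mul_assoc, hfirst, hfirst]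
  have hT : T t = T t' := by
    have := congrArg (k γ * ·) hkT
    simpa only [← Matrix.mul_assoc, hk, Matrix.one_mul] using this
  obtain ⟨-, hw, -, hg⟩ := fromBlocks_inj.1 hT
  exact Prod.ext rfl (Prod.ext (Units.ext hg) hw)

end BlockMatrices

/-- Let `P` be the group of block matrices `[x u; 0 z]`. An element of this type is an invertible
matrix `[α β; γ δ]` conjugating an element of `P` with upper left block `x` into an element of `P`
with upper left block `x'` and the same lower right block. -/
@[ext]
structure ParabolicIntertwiner {F ι : Type*} (κ : Type*) [Field F] [Fintype ι] [DecidableEq ι]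
    [Fintype κ] [DecidableEq κ] (x x' : Matrix ι ι F) where
  z : Matrix κ κ F
  u : Matrix ι κ F
  u' : Matrix ι κ F
  α : Matrix ι ι F
  β : Matrix ι κ F
  γ : Matrix κ ι F
  δ : Matrix κ κ F
  isUnit_z : IsUnit z
  isUnit_fromBlocks : IsUnit (fromBlocks α β γ δ)
  fromBlocks_mul :
    fromBlocks α β γ δ * fromBlocks x u 0 z = fromBlocks x' u' 0 z * fromBlocks α β γ δ

namespace ParabolicIntertwiner

section Reduction

variable {F ι κ κ' : Type*} [Field F] [Fintype ι] [DecidableEq ι] [Fintype κ] [DecidableEq κ]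
  [Fintype κ'] [DecidableEq κ'] {x x' : Matrix ι ι F}

instance [Finite F] : Finite (ParabolicIntertwiner κ x x') := by
  refine Finite.of_injective (β := Matrix κ κ F × Matrix ι κ F × Matrix ι κ F × Matrix ι ι F ×
    Matrix ι κ F × Matrix κ ι F × Matrix κ κ F)
    (fun c => (c.z, c.u, c.u', c.α, c.β, c.γ, c.δ)) fun c c' h => ?_
  simp only [Prod.mk.injEq] at h
  exact ParabolicIntertwiner.ext h.1 h.2.1 h.2.2.1 h.2.2.2.1 h.2.2.2.2.1 h.2.2.2.2.2.1
    h.2.2.2.2.2.2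

lemma block_eqs (c : ParabolicIntertwiner κ x x') :
    c.α * x = x' * c.α + c.u' * c.γ ∧ c.α * c.u + c.β * c.z = x' * c.β + c.u' * c.δ ∧
      c.γ * x = c.z * c.γ ∧ c.γ * c.u + c.δ * c.z = c.z * c.δ :=
  fromBlocks_mul_eq_iff.1 c.fromBlocks_mul

/-- Base change of the second block along the invertible matrix `k` with inverse `k'`. -/
def conj {k : Matrix κ' κ F} {k' : Matrix κ κ' F} (hk : k * k' = 1) (hk' : k' * k = 1)
    (c : ParabolicIntertwiner κ x x') : ParabolicIntertwiner κ' x x' where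
  z := k * c.z * k'
  u := c.u * k'
  u' := c.u' * k'
  α := c.α
  β := c.β * k'
  γ := k * c.γ
  δ := k * c.δ * k'
  isUnit_z := isUnit_mul_mul c.isUnit_z hk hk'
  isUnit_fromBlocks := by
    have hP : fromBlocks (1 : Matrix ι ι F) 0 0 k * fromBlocks (1 : Matrix ι ι F) 0 0 k' = 1 := by
      simp [fromBlocks_multiply, hk]
    have hP' : fromBlocks (1 : Matrix ι ι F) 0 0 k' * fromBlocks (1 : Matrix ι ι F) 0 0 k = 1 := by
      simp [fromBlocks_multiply, hk']
    simpa [fromBlocks_multiply] using isUnit_mul_mul c.isUnit_fromBlocks hP hP'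
  fromBlocks_mul := by
    obtain ⟨h₁₁, h₁₂, h₂₁, h₂₂⟩ := c.block_eqs
    refine fromBlocks_mul_eq_iff.2 ⟨?_, ?_, ?_, ?_⟩ <;>
      simp only [Matrix.mul_assoc, mul_mul_cancel_of_mul_eq_one hk']
    · exact h₁₁
    · simpa only [Matrix.add_mul, Matrix.mul_assoc] using congrArg (· * k') h₁₂
    · rw [h₂₁]
    · simpa only [Matrix.add_mul, Matrix.mul_add, Matrix.mul_assoc]
        using congrArg (fun X => k * (X * k')) h₂₂

lemma conj_injective {k : Matrix κ' κ F} {k' : Matrix κ κ' F} (hk : k * k' = 1)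
    (hk' : k' * k = 1) :
    Function.Injective (conj (x := x) (x' := x') hk hk') := by
  refine Function.LeftInverse.injective (g := conj hk' hk) fun c => ?_
  ext1 <;> simp only [conj, Matrix.mul_assoc, mul_mul_cancel_of_mul_eq_one hk', hk',
    Matrix.mul_one]

/-- Replacing `[α β; γ δ]` by `[1 -A; 0 1] * [α β; γ δ]`. -/
def shear (A : Matrix ι κ F) (c : ParabolicIntertwiner κ x x') : ParabolicIntertwiner κ x x' where
  z := c.z
  u := c.u
  u' := c.u' + x' * A - A * c.z
  α := c.α - A * c.γ
  β := c.β - A * c.δ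
  γ := c.γ
  δ := c.δ
  isUnit_z := c.isUnit_z
  isUnit_fromBlocks := by
    have hshear : IsUnit (fromBlocks (1 : Matrix ι ι F) (-A) 0 (1 : Matrix κ κ F)) :=
      isUnit_fromBlocks_zero₂₁.2 ⟨isUnit_one, isUnit_one⟩
    simpa [fromBlocks_multiply, sub_eq_add_neg] using hshear.mul c.isUnit_fromBlocks
  fromBlocks_mul := by
    obtain ⟨h₁₁, h₁₂, h₂₁, h₂₂⟩ := c.block_eqs
    refine fromBlocks_mul_eq_iff.2 ⟨?_, ?_, h₂₁, h₂₂⟩ <;>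
      simp only [Matrix.sub_mul, Matrix.mul_sub, Matrix.add_mul, Matrix.mul_assoc]
    · rw [h₁₁, h₂₁]
      abel
    · rw [← h₂₂, Matrix.mul_add, ← add_sub_assoc, sub_add_eq_add_sub, h₁₂]
      abel

lemma shear_injective (A : Matrix ι κ F) :
    Function.Injective (shear (x := x) (x' := x') A) := by
  refine Function.LeftInverse.injective (g := shear (-A)) fun c => ?_
  ext1 <;> simp only [shear, Matrix.neg_mul, Matrix.mul_neg, sub_neg_eq_add, sub_add_cancel]
  abel

variable {c : ParabolicIntertwiner (ι ⊕ κ') x x'}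

lemma z_eq_fromBlocks (hγ : c.γ = fromRows 1 0) :
    c.z = fromBlocks x c.z.toBlocks₁₂ 0 c.z.toBlocks₂₂ := by
  have h := c.block_eqs.2.2.1
  rw [hγ, ← fromBlocks_toBlocks c.z, fromBlocks_mul_fromRows, fromRows_mul] at h
  obtain ⟨h₁, h₂⟩ := (fromRows_ext_iff _ _ _ _).1 h
  conv_lhs => rw [← fromBlocks_toBlocks c.z]
  simp_all

lemma u'_eq_fromCols (hα : c.α = 0) (hγ : c.γ = fromRows 1 0) :
    c.u' = fromCols 0 c.u'.toCols₂ := by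
  have h := c.block_eqs.1
  rw [hα, hγ, ← fromCols_toCols c.u', fromCols_mul_fromRows] at h
  conv_lhs => rw [← fromCols_toCols c.u']
  simp_all

lemma isUnit_fromRows_of_eq (hα : c.α = 0) (hγ : c.γ = fromRows 1 0) :
    IsUnit (fromRows c.β c.δ.toRows₂) := by
  refine mulVec_injective_iff_isUnit.1 ((injective_iff_map_eq_zero
    (fromRows c.β c.δ.toRows₂).mulVecLin).2 fun v hv => ?_)
  have hv' := fromRows_mulVec c.β c.δ.toRows₂ v
  rw [← mulVecLin_apply, hv, eq_comm, ← Sum.elim_zero_zero] at hv'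
  obtain ⟨hβ, hδ⟩ := Sum.elim_eq_iff.1 hv'
  have hH : fromBlocks c.α c.β c.γ c.δ *ᵥ Sum.elim (-(c.δ.toRows₁ *ᵥ v)) v = 0 := by
    conv_lhs => rw [hα, hγ, ← fromRows_toRows c.δ]
    simp only [fromBlocks_mulVec, fromRows_mulVec, Sum.elim_comp_inl, Sum.elim_comp_inr,
      zero_mulVec, one_mulVec, hβ, hδ, ← Sum.elim_add_add, add_zero, toRows₁_fromRows,
      neg_add_cancel, Sum.elim_zero_zero]
  have := mulVec_injective_iff_isUnit.2 c.isUnit_fromBlocks (hH.trans (mulVec_zero _).symm)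
  simpa using congrArg (· ∘ Sum.inr) this

lemma row_eqs (hα : c.α = 0) (hγ : c.γ = fromRows 1 0) :
    c.β * c.z = x' * c.β + c.u'.toCols₂ * c.δ.toRows₂ ∧
      c.u + c.δ.toRows₁ * c.z = x * c.δ.toRows₁ + c.z.toBlocks₁₂ * c.δ.toRows₂ ∧
      c.δ.toRows₂ * c.z = c.z.toBlocks₂₂ * c.δ.toRows₂ := by
  obtain ⟨-, h₁₂, -, h₂₂⟩ := c.block_eqs
  have hu : c.u' * c.δ = c.u'.toCols₂ * c.δ.toRows₂ := by
    conv_lhs => rw [u'_eq_fromCols hα hγ, ← fromRows_toRows c.δ, fromCols_mul_fromRows]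
    rw [Matrix.zero_mul, zero_add]
  have hδz : c.δ * c.z = fromRows (c.δ.toRows₁ * c.z) (c.δ.toRows₂ * c.z) := by
    conv_lhs => rw [← fromRows_toRows c.δ, fromRows_mul]
  have hzδ : c.z * c.δ = fromRows (x * c.δ.toRows₁ + c.z.toBlocks₁₂ * c.δ.toRows₂)
      (c.z.toBlocks₂₂ * c.δ.toRows₂) := by
    conv_lhs => rw [z_eq_fromBlocks hγ, ← fromRows_toRows c.δ, fromBlocks_mul_fromRows]
    rw [Matrix.zero_mul, zero_add]
  rw [hα, hu, Matrix.zero_mul, zero_add] at h₁₂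
  rw [hγ, hδz, hzδ, fromRows_mul, Matrix.one_mul, Matrix.zero_mul] at h₂₂
  have h₂ := congrArg toRows₂ h₂₂
  rw [toRows₂_fromRows] at h₂
  refine ⟨h₁₂, congrArg toRows₁ h₂₂, h₂ ▸ (zero_add _).symm⟩

/-- The intertwiner of smaller size inside one whose matrix is `[0 β; [1; 0] δ]`. -/
def reduce (hα : c.α = 0) (hγ : c.γ = fromRows 1 0) : ParabolicIntertwiner κ' x x' where
  z := c.z.toBlocks₂₂
  u := c.z.toBlocks₁₂
  u' := c.u'.toCols₂
  α := c.β.toCols₁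
  β := c.β.toCols₂
  γ := c.δ.toRows₂.toCols₁
  δ := c.δ.toRows₂.toCols₂
  isUnit_z := by
    have h := c.isUnit_z
    rw [z_eq_fromBlocks hγ] at h
    exact (isUnit_fromBlocks_zero₂₁.1 h).2
  isUnit_fromBlocks := by
    rw [← fromRows_fromCols_eq_fromBlocks, fromCols_toCols, fromCols_toCols]
    exact isUnit_fromRows_of_eq hα hγ
  fromBlocks_mul := by
    obtain ⟨hβ, -, hδ⟩ := row_eqs hα hγ
    rw [← z_eq_fromBlocks hγ, ← fromRows_fromCols_eq_fromBlocks, fromCols_toCols,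
      fromCols_toCols, fromRows_mul, fromBlocks_mul_fromRows, hβ, hδ, Matrix.zero_mul, zero_add]

lemma eq_of_reduce_eq {c' : ParabolicIntertwiner (ι ⊕ κ') x x'} (hα : c.α = 0)
    (hγ : c.γ = fromRows 1 0) (hα' : c'.α = 0) (hγ' : c'.γ = fromRows 1 0)
    (hreduce : reduce hα hγ = reduce hα' hγ') (hδ₁ : c.δ.toRows₁ = c'.δ.toRows₁) : c = c' := by
  simp only [reduce, ParabolicIntertwiner.mk.injEq] at hreduce
  obtain ⟨hz₂₂, hz₁₂, hu', hβ₁, hβ₂, hδ₂₁, hδ₂₂⟩ := hreduce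
  have hz : c.z = c'.z := by rw [z_eq_fromBlocks hγ, z_eq_fromBlocks hγ', hz₁₂, hz₂₂]
  have hδ₂ : c.δ.toRows₂ = c'.δ.toRows₂ := by
    rw [← fromCols_toCols c.δ.toRows₂, hδ₂₁, hδ₂₂, fromCols_toCols]
  have hu : c.u = c'.u := by
    refine add_right_cancel ((row_eqs hα hγ).2.1.trans ?_)
    rw [hz, hδ₁, hδ₂]
    exact (row_eqs hα' hγ').2.1.symm
  refine ParabolicIntertwiner.ext hz hu ?_ (hα.trans hα'.symm) ?_ (hγ.trans hγ'.symm) ?_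
  · rw [u'_eq_fromCols hα hγ, u'_eq_fromCols hα' hγ', hu']
  · rw [← fromCols_toCols c.β, hβ₁, hβ₂, fromCols_toCols]
  · rw [← fromRows_toRows c.δ, hδ₁, hδ₂, fromRows_toRows]

end Reduction

section Counting

variable {F ι κ : Type*} [Field F] [Finite F] [Fintype ι] [DecidableEq ι] [Fintype κ]
  [DecidableEq κ] {x x' : Matrix ι ι F}

lemma card_γ_eq_zero_le :
    Nat.card {c : ParabolicIntertwiner κ x x' // c.γ = 0} ≤ Nat.card (Intertwiner x x') *
      (Nat.card {p : GL κ F × GL κ F // Commute p.1 p.2} *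
        (Nat.card (Matrix ι κ F) * Nat.card (Matrix ι κ F))) := by
  have hunit (c : {c : ParabolicIntertwiner κ x x' // c.γ = 0}) : IsUnit c.1.α ∧ IsUnit c.1.δ :=
    isUnit_fromBlocks_zero₂₁.1 (c.2 ▸ c.1.isUnit_fromBlocks)
  have hα (c : {c : ParabolicIntertwiner κ x x' // c.γ = 0}) : c.1.α * x = x' * c.1.α := by
    simpa only [c.2, Matrix.mul_zero, add_zero] using c.1.block_eqs.1
  have hδ (c : {c : ParabolicIntertwiner κ x x' // c.γ = 0}) : c.1.δ * c.1.z = c.1.z * c.1.δ := by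
    simpa only [c.2, Matrix.zero_mul, zero_add] using c.1.block_eqs.2.2.2
  rw [← Nat.card_prod, ← Nat.card_prod, ← Nat.card_prod]
  refine Nat.card_le_card_of_injective (fun c => (⟨(hunit c).1.unit, hα c⟩,
    ⟨(c.1.isUnit_z.unit, (hunit c).2.unit), Units.ext (hδ c).symm⟩, c.1.u, c.1.β)) ?_
  intro c c' h
  simp only [Prod.mk.injEq] at h
  obtain ⟨hα, hzδ, hu, hβ⟩ := h
  replace hα : c.1.α = c'.1.α := congrArg (fun A => A.1.1) hα
  have hz : c.1.z = c'.1.z := congrArg (fun p => p.1.1.1) hzδ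
  have hδ : c.1.δ = c'.1.δ := congrArg (fun p => p.1.2.1) hzδ
  refine Subtype.ext (ParabolicIntertwiner.ext hz hu ?_ hα hβ (c.2.trans c'.2.symm) hδ)
  have hmul : c.1.u' * c.1.δ = c'.1.u' * c.1.δ := by
    refine add_left_cancel (c.1.block_eqs.2.1.symm.trans ?_)
    rw [hα, hu, hβ, hz, hδ]
    exact c'.1.block_eqs.2.1
  obtain ⟨δ', hδ'⟩ := (hunit c).2.exists_right_inv
  have := congrArg (· * δ') hmul
  simpa only [Matrix.mul_assoc, hδ', Matrix.mul_one] using this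

lemma card_γ_injective_le {κ' : Type*} [Fintype κ'] [DecidableEq κ']
    (hcard : Fintype.card κ = Fintype.card ι + Fintype.card κ') :
    Nat.card {c : ParabolicIntertwiner κ x x' // Function.Injective c.γ.mulVec} ≤
      Nat.card {γ : Matrix κ ι F // Function.Injective γ.mulVec} * (Nat.card (Matrix ι ι F) *
        (Nat.card (Matrix ι (ι ⊕ κ') F) * Nat.card (ParabolicIntertwiner κ' x x'))) := by
  choose k k' hk hk' hkγ using fun γ : {γ : Matrix κ ι F // Function.Injective γ.mulVec} =>
    exists_mul_eq_fromRows_one_zero hcard γ.2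
  let normalize (γ : {γ : Matrix κ ι F // Function.Injective γ.mulVec}) (A : Matrix ι ι F)
      (c : ParabolicIntertwiner κ x x') : ParabolicIntertwiner (ι ⊕ κ') x x' :=
    shear (fromCols A 0) (conj (hk γ) (hk' γ) c)
  have hα (c : {c : ParabolicIntertwiner κ x x' // Function.Injective c.γ.mulVec}) :
      (normalize ⟨c.1.γ, c.2⟩ c.1.α c.1).α = 0 := by
    simp only [normalize, shear, conj, hkγ ⟨c.1.γ, c.2⟩, fromCols_mul_fromRows, Matrix.mul_one,
      Matrix.mul_zero, add_zero, sub_self]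
  have hγ (c : {c : ParabolicIntertwiner κ x x' // Function.Injective c.γ.mulVec}) :
      (normalize ⟨c.1.γ, c.2⟩ c.1.α c.1).γ = fromRows 1 0 := hkγ ⟨c.1.γ, c.2⟩
  rw [← Nat.card_prod, ← Nat.card_prod, ← Nat.card_prod]
  refine Nat.card_le_card_of_injective (fun c => (⟨c.1.γ, c.2⟩, c.1.α,
    (normalize ⟨c.1.γ, c.2⟩ c.1.α c.1).δ.toRows₁, reduce (hα c) (hγ c))) ?_
  intro c c' h
  simp only [Prod.mk.injEq] at h
  obtain ⟨hγ_eq, hα_eq, hδ₁, hreduce⟩ := h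
  have hnormalize := eq_of_reduce_eq (hα c) (hγ c) (hα c') (hγ c') hreduce hδ₁
  rw [hγ_eq, hα_eq] at hnormalize
  exact Subtype.ext (conj_injective _ _ (shear_injective _ hnormalize))

lemma card_le_card_γ_eq_zero_add (hx : ActsIrreducibly x) :
    Nat.card (ParabolicIntertwiner κ x x') ≤
      Nat.card {c : ParabolicIntertwiner κ x x' // c.γ = 0} +
        Nat.card {c : ParabolicIntertwiner κ x x' // Function.Injective c.γ.mulVec} := by
  have hcases (c : ParabolicIntertwiner κ x x') : c.γ = 0 ∨ Function.Injective c.γ.mulVec :=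
    hx.eq_zero_or_mulVec_injective c.block_eqs.2.2.1
  classical
  rw [← Nat.card_sum]
  refine Nat.card_le_card_of_surjective
    (Sum.elim (fun c => c.1) (fun c => c.1)) fun c => ?_
  rcases hcases c with h | h
  · exact ⟨.inl ⟨c, h⟩, rfl⟩
  · exact ⟨.inr ⟨c, h⟩, rfl⟩

end Counting

section Bound

variable {F ι : Type} [Field F] [Finite F] [Fintype ι] [DecidableEq ι] {x x' : Matrix ι ι F}

lemma card_γ_eq_zero_le_mul_card_GL (hq : 3 ≤ Nat.card F) (κ : Type) [Fintype κ]
    [DecidableEq κ] :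
    (Nat.card {c : ParabolicIntertwiner κ x x' // c.γ = 0} : ℝ) ≤
      Nat.card (Intertwiner x x') * (2 * (Nat.card F : ℝ) ^ Fintype.card κ) *
        Nat.card (GL κ F) * (Nat.card F : ℝ) ^ (2 * Fintype.card ι * Fintype.card κ) := by
  have hcount := card_γ_eq_zero_le (κ := κ) (x := x) (x' := x')
  rw [card_comm_eq_card_conjClasses_mul_card, natCard_matrix] at hcount
  calc (Nat.card {c : ParabolicIntertwiner κ x x' // c.γ = 0} : ℝ)
      ≤ Nat.card (Intertwiner x x') * (Nat.card (ConjClasses (GL κ F)) * Nat.card (GL κ F) *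
        ((Nat.card F : ℝ) ^ (Fintype.card ι * Fintype.card κ) *
          (Nat.card F : ℝ) ^ (Fintype.card ι * Fintype.card κ))) := mod_cast hcount
    _ ≤ Nat.card (Intertwiner x x') * (2 * (Nat.card F : ℝ) ^ Fintype.card κ *
        Nat.card (GL κ F) * ((Nat.card F : ℝ) ^ (Fintype.card ι * Fintype.card κ) *
          (Nat.card F : ℝ) ^ (Fintype.card ι * Fintype.card κ))) := by
      gcongr
      exact card_conjClasses_GL_le hq κ
    _ = _ := by rw [← pow_add, ← two_mul, mul_assoc 2]; ring

lemma card_γ_injective_le_mul_card_GL [Nonempty ι] (hq : 2 ≤ Nat.card F) {κ κ' : Type}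
    [Fintype κ] [DecidableEq κ] [Fintype κ'] [DecidableEq κ']
    (hcard : Fintype.card κ = Fintype.card ι + Fintype.card κ') {a : ℝ} (ha : 0 ≤ a)
    (hind : (Nat.card (ParabolicIntertwiner κ' x x') : ℝ) ≤
      a * (4 * (Nat.card F : ℝ) ^ Fintype.card κ') * Nat.card (GL κ' F) *
        (Nat.card F : ℝ) ^ (2 * Fintype.card ι * Fintype.card κ')) :
    (Nat.card {c : ParabolicIntertwiner κ x x' // Function.Injective c.γ.mulVec} : ℝ) ≤
      a * (2 * (Nat.card F : ℝ) ^ Fintype.card κ) * Nat.card (GL κ F) *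
        (Nat.card F : ℝ) ^ (2 * Fintype.card ι * Fintype.card κ) := by
  have hcount := card_γ_injective_le (x := x) (x' := x') hcard
  have hGL := card_injective_mul_card_GL_le (F := F) hcard
  rw [natCard_matrix, natCard_matrix, Fintype.card_sum] at hcount
  rw [natCard_matrix] at hGL
  have hd : 1 ≤ Fintype.card ι := Fintype.card_pos
  rw [hcard]
  set q := Nat.card F
  set d := Fintype.card ι
  set m := Fintype.card κ'
  set I := Nat.card {γ : Matrix κ ι F // Function.Injective γ.mulVec}
  have hq' : (2 : ℝ) ≤ q := mod_cast hq
  have hqd : 2 ≤ (q : ℝ) ^ d := hq'.trans (le_self_pow₀ (by linarith) (by omega))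
  calc (Nat.card {c : ParabolicIntertwiner κ x x' // Function.Injective c.γ.mulVec} : ℝ)
      ≤ I * ((q : ℝ) ^ (d * d) * ((q : ℝ) ^ (d * (d + m)) *
          Nat.card (ParabolicIntertwiner κ' x x'))) := mod_cast hcount
    _ ≤ I * ((q : ℝ) ^ (d * d) * ((q : ℝ) ^ (d * (d + m)) *
          (a * (4 * (q : ℝ) ^ m) * Nat.card (GL κ' F) * (q : ℝ) ^ (2 * d * m)))) := by gcongr
    _ = (I * (Nat.card (GL κ' F) * (q : ℝ) ^ (d * m)) : ℝ) *
          (a * (2 * (2 * (q : ℝ) ^ m)) * (q : ℝ) ^ (2 * d * (d + m))) := by ring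
    _ ≤ Nat.card (GL κ F) *
          (a * (2 * ((q : ℝ) ^ d * (q : ℝ) ^ m)) * (q : ℝ) ^ (2 * d * (d + m))) := by
        gcongr
        exact mod_cast hGL
    _ = _ := by ring

end Bound

end ParabolicIntertwiner

lemma ActsIrreducibly.card_parabolicIntertwiner_le {F ι : Type} [Field F] [Finite F] [Fintype ι]
    [DecidableEq ι] [Nonempty ι] {x : Matrix ι ι F} (hx : ActsIrreducibly x)
    (hq : 3 ≤ Nat.card F) (x' : Matrix ι ι F) (κ : Type) [Fintype κ] [DecidableEq κ] :
    (Nat.card (ParabolicIntertwiner κ x x') : ℝ) ≤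
      Nat.card (Intertwiner x x') * (4 * (Nat.card F : ℝ) ^ Fintype.card κ) *
        Nat.card (GL κ F) * (Nat.card F : ℝ) ^ (2 * Fintype.card ι * Fintype.card κ) := by
  induction hm : Fintype.card κ using Nat.strong_induction_on generalizing κ with
  | _ m ih =>
  subst hm
  have hinj : (Nat.card {c : ParabolicIntertwiner κ x x' // Function.Injective c.γ.mulVec} : ℝ) ≤
      Nat.card (Intertwiner x x') * (2 * (Nat.card F : ℝ) ^ Fintype.card κ) *
        Nat.card (GL κ F) * (Nat.card F : ℝ) ^ (2 * Fintype.card ι * Fintype.card κ) := by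
    rcases le_or_gt (Fintype.card ι) (Fintype.card κ) with hle | hlt
    · obtain ⟨m', hm'⟩ := Nat.exists_eq_add_of_le hle
      have hlt : Fintype.card (Fin m') < Fintype.card κ := by
        have : 0 < Fintype.card ι := Fintype.card_pos
        rw [Fintype.card_fin]
        omega
      exact ParabolicIntertwiner.card_γ_injective_le_mul_card_GL (by omega)
        (by rw [hm', Fintype.card_fin]) (Nat.cast_nonneg _) (ih _ hlt (Fin m') rfl)
    · have : IsEmpty {c : ParabolicIntertwiner κ x x' // Function.Injective c.γ.mulVec} := by
        refine ⟨fun c => hlt.not_ge ?_⟩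
        simpa using LinearMap.finrank_le_finrank_of_injective (f := c.1.γ.mulVecLin) c.2
      rw [Nat.card_of_isEmpty, Nat.cast_zero]
      positivity
  calc (Nat.card (ParabolicIntertwiner κ x x') : ℝ)
      ≤ Nat.card {c : ParabolicIntertwiner κ x x' // c.γ = 0} +
        Nat.card {c : ParabolicIntertwiner κ x x' // Function.Injective c.γ.mulVec} :=
        mod_cast ParabolicIntertwiner.card_le_card_γ_eq_zero_add hx
    _ ≤ _ := add_le_add (ParabolicIntertwiner.card_γ_eq_zero_le_mul_card_GL hq κ) hinj
    _ = _ := by ring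

end Intertwiners

section FieldExtensions

open IntermediateField

lemma isSquare_algebraMap_of_even_finrank {E K : Type*} [Field E] [Field K] [Finite K]
    [Algebra E K] (h : Even (Module.finrank E K)) (x : E) : IsSquare (algebraMap E K x) := by
  have := Fintype.ofFinite K
  have := Fintype.ofInjective _ (algebraMap E K).injective
  rcases eq_or_ne x 0 with rfl | hx
  · simp
  by_cases hchar : ringChar K = 2
  · exact FiniteField.isSquare_of_char_two hchar _
  obtain ⟨t, ht⟩ := h
  have hcard : Fintype.card K = (Fintype.card E ^ t) ^ 2 := by
    rw [Module.card_eq_pow_finrank (K := E), ht, ← pow_mul, mul_two]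
  have hodd : Odd (Fintype.card E ^ t) := by
    have := FiniteField.odd_card_of_char_ne_two hchar
    rw [hcard] at this
    exact (Nat.odd_pow_iff two_ne_zero).1 (Nat.odd_iff.2 this)
  obtain ⟨s, hs⟩ := hodd
  have hpow : x ^ (2 * s) = 1 := by
    refine mul_right_cancel₀ hx ?_
    rw [← pow_succ, ← hs, FiniteField.pow_card_pow, one_mul]
  have hhalf : Fintype.card K / 2 = 2 * s * (s + 1) := by
    rw [hcard, hs, show (2 * s + 1) ^ 2 = 2 * (2 * s * (s + 1)) + 1 by ring]
    omega
  rw [FiniteField.isSquare_iff hchar (by simpa using hx), ← map_pow, hhalf, pow_mul, hpow,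
    one_pow, map_one]

variable {F K ι : Type*} [Field F] [Field K] [Algebra F K]

lemma aeval_charpoly_eq_zero_of_intertwiner [Fintype ι] [DecidableEq ι]
    (b : Module.Basis ι F K) {x x' : K}
    (α : Intertwiner (Algebra.leftMulMatrix b x) (Algebra.leftMulMatrix b x')) :
    Polynomial.aeval x' (Algebra.leftMulMatrix b x).charpoly = 0 := by
  have hconj : Algebra.leftMulMatrix b x' =
      α.1.1 * Algebra.leftMulMatrix b x * α.1.1⁻¹ := by
    rw [α.2, Matrix.mul_assoc, ← coe_units_inv, Units.mul_inv, Matrix.mul_one]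
  apply Algebra.leftMulMatrix_injective b
  rw [map_zero, ← Polynomial.aeval_algHom_apply, ← charpoly_units_conj α.1, ← hconj,
    aeval_self_charpoly]

variable [Finite K]

lemma adjoin_eq_top_of_not_isSquare {k : ℕ} (hk : Module.finrank F K = 2 ^ k) {x : K}
    (hx : ¬ IsSquare x) : F⟮x⟯ = ⊤ := by
  have : FiniteDimensional F K := .of_finite
  have hdvd : Module.finrank F⟮x⟯ K ∣ 2 ^ k :=
    hk ▸ Dvd.intro_left _ (Module.finrank_mul_finrank F F⟮x⟯ K)
  obtain ⟨j, -, hj⟩ := (Nat.dvd_prime_pow Nat.prime_two).1 hdvd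
  rcases j with _ | j
  · exact IntermediateField.finrank_eq_one_iff_eq_top.1 hj
  · refine absurd ?_ hx
    refine isSquare_algebraMap_of_even_finrank (E := F⟮x⟯) ?_ (AdjoinSimple.gen F x)
    rw [hj, pow_succ']
    exact even_two_mul _

variable [Fintype ι] [DecidableEq ι] (b : Module.Basis ι F K) {x : K}

lemma actsIrreducibly_leftMulMatrix (hx : F⟮x⟯ = ⊤) :
    ActsIrreducibly (Algebra.leftMulMatrix b x) := by
  have : FiniteDimensional F K := .of_finite
  intro W hW
  refine (eq_or_ne W ⊥).imp_right fun hbot => ?_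
  obtain ⟨v, hv, hv0⟩ := W.ne_bot_iff.1 hbot
  have hpoly (p : Polynomial F) (w) (hw : w ∈ W) :
      Algebra.leftMulMatrix b (Polynomial.aeval x p) *ᵥ w ∈ W := by
    induction p using Polynomial.induction_on with
    | C a => simpa [Algebra.algebraMap_eq_smul_one, smul_mulVec] using W.smul_mem a hw
    | add p r hp hr => simpa only [map_add, add_mulVec] using W.add_mem hp hr
    | monomial n a h =>
      rw [pow_succ', mul_left_comm, map_mul, Polynomial.aeval_X, map_mul, ← mulVec_mulVec]
      exact hW _ h
  refine W.eq_top_iff'.2 fun w => ?_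
  obtain ⟨p, hp⟩ : b.equivFun.symm w / b.equivFun.symm v ∈ (Polynomial.aeval (R := F) x).range := by
    rw [← Algebra.adjoin_singleton_eq_range_aeval,
      ← adjoin_simple_toSubalgebra_of_isAlgebraic (Algebra.IsAlgebraic.isAlgebraic x), hx]
    trivial
  have hw : Algebra.leftMulMatrix b (Polynomial.aeval x p) *ᵥ v = w := by
    have hmul := Algebra.leftMulMatrix_mulVec_repr b (Polynomial.aeval x p) (b.equivFun.symm v)
    have hv0' : b.equivFun.symm v ≠ 0 := b.equivFun.symm.map_ne_zero_iff.2 hv0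
    rw [AlgHom.toRingHom_eq_coe, RingHom.coe_coe] at hp
    rwa [hp, div_mul_cancel₀ _ hv0', ← b.equivFun_apply, ← b.equivFun_apply,
      b.equivFun.apply_symm_apply, b.equivFun.apply_symm_apply, ← hp] at hmul
  exact hw ▸ hpoly p v hv

lemma sum_card_intertwiner_leftMulMatrix_le [Nonempty ι] [Finite F] (hx : F⟮x⟯ = ⊤)
    (S : Finset Kˣ) :
    ∑ x' ∈ S, Nat.card (Intertwiner (Algebra.leftMulMatrix b x) (Algebra.leftMulMatrix b x')) ≤
      Fintype.card ι * Nat.card F ^ Fintype.card ι := by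
  classical
  let p := (Algebra.leftMulMatrix b x).charpoly
  have hp : p.Monic := charpoly_monic _
  let R : Finset Kˣ := S.filter fun x' => Polynomial.aeval (x' : K) p = 0
  have hR : R.card ≤ Fintype.card ι := calc
    R.card ≤ (p.aroots K).toFinset.card := by
      refine Finset.card_le_card_of_injOn (fun x' => (x' : K)) (fun x' hx' => ?_)
        Units.val_injective.injOn
      simpa [hp.ne_zero, p] using (Finset.mem_filter.1 hx').2
    _ ≤ p.natDegree := (Multiset.toFinset_card_le _).trans <|
      (Polynomial.card_roots' _).trans Polynomial.natDegree_map_le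
    _ = Fintype.card ι := charpoly_natDegree_eq_dim _
  have hsupport : ∀ x' ∈ S, Nat.card (Intertwiner (Algebra.leftMulMatrix b x)
      (Algebra.leftMulMatrix b x')) ≠ 0 → Polynomial.aeval (x' : K) p = 0 := fun x' _ hne =>
    aeval_charpoly_eq_zero_of_intertwiner b (Nat.card_ne_zero.1 hne).1.some
  rw [← Finset.sum_filter_of_ne hsupport]
  exact (Finset.sum_le_card_nsmul _ _ _ fun x' _ =>
    (actsIrreducibly_leftMulMatrix b hx).card_intertwiner_le _).trans
      (Nat.mul_le_mul_right _ hR)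

lemma exists_intertwiner_leftMulMatrix_pow_card [Fintype F] :
    ∃ α : GL ι F, ∀ x : K, α.1 * Algebra.leftMulMatrix b x =
      Algebra.leftMulMatrix b (x ^ Fintype.card F) * α.1 := by
  have : FiniteDimensional F K := .of_finite
  let φ : K ≃ₐ[F] K := FiniteField.frobeniusAlgEquivOfAlgebraic F K
  have hφ (x : K) : φ x = x ^ Fintype.card F := rfl
  refine ⟨⟨LinearMap.toMatrix b b φ.toLinearMap, LinearMap.toMatrix b b φ.symm.toLinearMap,
    ?_, ?_⟩, fun x => ?_⟩
  · rw [← LinearMap.toMatrix_comp, ← LinearMap.toMatrix_one b]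
    congr 1
    ext
    simp
  · rw [← LinearMap.toMatrix_comp, ← LinearMap.toMatrix_one b]
    congr 1
    ext
    simp
  · simp only [Algebra.leftMulMatrix_apply]
    rw [← LinearMap.toMatrix_comp, ← LinearMap.toMatrix_comp]
    congr 1
    ext y
    simp [← hφ]

lemma eq_zero_of_leftMulMatrix_mul_eq_mul_fromBlocks_one {κ σ : Type*} [Fintype κ]
    [Fintype σ] [DecidableEq σ] (hx : F⟮x⟯ = ⊤) (hx1 : x ≠ 1)
    (hκ : Fintype.card κ < Fintype.card ι) {l : Matrix κ κ F} {N : Matrix ι (κ ⊕ σ) F}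
    (h : Algebra.leftMulMatrix b x * N = N * fromBlocks l 0 0 (1 : Matrix σ σ F)) : N = 0 := by
  rw [← fromCols_toCols N, mul_fromCols, fromCols_mul_fromBlocks, fromCols_inj.eq_iff] at h
  simp only [Matrix.mul_zero, Matrix.mul_one, add_zero, zero_add] at h
  obtain ⟨h₁, h₂⟩ := h
  have hN₁ : N.toCols₁ = 0 := (actsIrreducibly_leftMulMatrix b hx).eq_zero_of_card_lt h₁ hκ
  have hN₂ : N.toCols₂ = 0 := calc
    N.toCols₂ = Algebra.leftMulMatrix b ((x - 1)⁻¹ * (x - 1)) * N.toCols₂ := by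
      rw [inv_mul_cancel₀ (sub_ne_zero.2 hx1), map_one, Matrix.one_mul]
    _ = 0 := by
      rw [map_mul, map_sub, map_one, Matrix.mul_assoc, Matrix.sub_mul, Matrix.one_mul, h₂,
        sub_self, Matrix.mul_zero]
  rw [← fromCols_toCols N, hN₁, hN₂, fromCols_zero]

end FieldExtensions

section DualGroup

open scoped ComplexConjugate

lemma addChar_sum_norm_sq_sum {A : Type*} [AddCommGroup A] [Fintype A] (f : A → ℂ) :
    ∑ ψ : AddChar A ℂ, ‖∑ a, ψ a * f a‖ ^ 2 = Nat.card A * ∑ a, ‖f a‖ ^ 2 := by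
  classical
  have hexpand (ψ : AddChar A ℂ) : (∑ a, ψ a * f a) * conj (∑ a, ψ a * f a) =
      ∑ a, ∑ a', f a * conj (f a') * ψ (a - a') := by
    simp_rw [map_sum, map_mul, Finset.sum_mul_sum, sub_eq_add_neg, AddChar.map_add_eq_mul,
      AddChar.map_neg_eq_conj]
    exact Finset.sum_congr rfl fun a _ => Finset.sum_congr rfl fun a' _ => by ring
  have horth (a a' : A) : ∑ ψ : AddChar A ℂ, f a * conj (f a') * ψ (a - a') =
      if a = a' then Nat.card A * (f a * conj (f a)) else 0 := by
    rw [← Finset.mul_sum, AddChar.sum_apply_eq_ite]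
    simp only [sub_eq_zero, Nat.card_eq_fintype_card]
    split_ifs with h
    · rw [← h, mul_comm]
    · rw [mul_zero]
  have hcomplex : ∑ ψ : AddChar A ℂ, (∑ a, ψ a * f a) * conj (∑ a, ψ a * f a) =
      Nat.card A * ∑ a, f a * conj (f a) := by
    simp_rw [hexpand]
    rw [Finset.sum_comm, Finset.mul_sum]
    refine Finset.sum_congr rfl fun a _ => ?_
    rw [Finset.sum_comm]
    simp_rw [horth]
    rw [Finset.sum_ite_eq, if_pos (Finset.mem_univ a)]
  simp_rw [Complex.mul_conj'] at hcomplex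
  exact_mod_cast hcomplex

lemma card_addChar_pow_eq_self_le {A : Type*} [AddCommGroup A] [Finite A] [IsAddCyclic A]
    {m : ℕ} (hm : 2 ≤ m) : Nat.card {ψ : AddChar A ℂ // ψ ^ m = ψ} ≤ m := by
  classical
  obtain ⟨t, ht⟩ := IsAddCyclic.exists_generator (α := A)
  let R := (Polynomial.nthRoots (m - 1) (1 : ℂ)).toFinset
  have hroot (ψ : {ψ : AddChar A ℂ // ψ ^ m = ψ}) : ψ.1 t ∈ R := by
    rw [Multiset.mem_toFinset, Polynomial.mem_nthRoots (by omega)]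
    refine mul_right_cancel₀ (AddChar.val_isUnit ψ.1 t).ne_zero ?_
    rw [← pow_succ, Nat.sub_add_cancel (by omega), ← AddChar.pow_apply, ψ.2, one_mul]
  have hinj : Function.Injective
      fun ψ : {ψ : AddChar A ℂ // ψ ^ m = ψ} => (⟨ψ.1 t, hroot ψ⟩ : R) := by
    refine fun ψ ψ' h => Subtype.ext (DFunLike.ext _ _ fun a => ?_)
    obtain ⟨n, rfl⟩ := (mem_multiples_iff_mem_zmultiples).2 (ht a)
    have h' : ψ.1 t = ψ'.1 t := congrArg Subtype.val h
    simp only [AddChar.map_nsmul_eq_pow, h']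
  calc Nat.card {ψ : AddChar A ℂ // ψ ^ m = ψ} ≤ Nat.card R := Nat.card_le_card_of_injective _ hinj
    _ = R.card := Nat.card_eq_finsetCard R
    _ ≤ m - 1 := (Multiset.toFinset_card_le _).trans (Polynomial.card_nthRoots _ _)
    _ ≤ m := Nat.sub_le _ _

section Orbits

variable {α : Type*} {T : α → α} {k : ℕ}

lemma minimalPeriod_eq_two_pow_succ {a : α} (hT : Function.IsPeriodicPt T (2 ^ (k + 1)) a)
    (ha : ¬ Function.IsPeriodicPt T (2 ^ k) a) : Function.minimalPeriod T a = 2 ^ (k + 1) := by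
  obtain ⟨j, hj, hperiod⟩ := (Nat.dvd_prime_pow Nat.prime_two).1 hT.minimalPeriod_dvd
  rcases hj.eq_or_lt with rfl | hlt
  · exact hperiod
  · refine absurd ((Function.isPeriodicPt_minimalPeriod T a).trans_dvd ?_) ha
    exact hperiod ▸ pow_dvd_pow 2 (Nat.lt_succ_iff.1 hlt)

variable [Fintype α] {f : α → ℝ}

lemma minimalPeriod_mul_le_sum (hf : ∀ a, 0 ≤ f a) (hfT : ∀ a, f (T a) = f a) (a : α) :
    Function.minimalPeriod T a * f a ≤ ∑ a, f a := by
  classical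
  have hiter (n : ℕ) : f (T^[n] a) = f a := by
    induction n with
    | zero => rfl
    | succ n ih => rw [Function.iterate_succ_apply', hfT, ih]
  calc Function.minimalPeriod T a * f a
      = ∑ n ∈ Finset.range (Function.minimalPeriod T a), f (T^[n] a) := by simp [hiter]
    _ = ∑ a' ∈ (Finset.range (Function.minimalPeriod T a)).image fun n => T^[n] a, f a' := by
      refine (Finset.sum_image ?_).symm
      simpa using Function.iterate_injOn_Iio_minimalPeriod
    _ ≤ ∑ a, f a :=
      Finset.sum_le_sum_of_subset_of_nonneg (Finset.subset_univ _) fun a' _ _ => hf a'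

open Classical in
lemma one_le_sum_div_two_pow_add_sum_periodic (hf : ∀ a, 0 ≤ f a) (hfT : ∀ a, f (T a) = f a)
    (hT : ∀ a, Function.IsPeriodicPt T (2 ^ (k + 1)) a) (hone : ∃ a, 1 ≤ f a) :
    1 ≤ (∑ a, f a) / 2 ^ (k + 1) + ∑ a with Function.IsPeriodicPt T (2 ^ k) a, f a := by
  obtain ⟨a, ha⟩ := hone
  have hsum : 0 ≤ (∑ a, f a) / 2 ^ (k + 1) :=
    div_nonneg (Finset.sum_nonneg fun a _ => hf a) (by positivity)
  have hsum' : 0 ≤ ∑ a with Function.IsPeriodicPt T (2 ^ k) a, f a :=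
    Finset.sum_nonneg fun a _ => hf a
  by_cases hper : Function.IsPeriodicPt T (2 ^ k) a
  · have : f a ≤ ∑ a with Function.IsPeriodicPt T (2 ^ k) a, f a :=
      Finset.single_le_sum (fun a _ => hf a) (by simpa using hper)
    linarith
  · have horbit := minimalPeriod_mul_le_sum hf hfT a
    rw [minimalPeriod_eq_two_pow_succ (hT a) hper] at horbit
    push_cast at horbit
    have : 1 ≤ (∑ a, f a) / 2 ^ (k + 1) := by
      rw [one_le_div (by positivity)]
      exact (le_mul_of_one_le_right (by positivity) ha).trans horbit
    linarith

end Orbits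

end DualGroup

section BlockUpperTriangular

section Basic

variable {F ι κ : Type*} [Field F] [Fintype ι] [DecidableEq ι] [Fintype κ] [DecidableEq κ]

/-- The block upper triangular matrix with diagonal blocks `a`, `l` and off-diagonal block `u`. -/
noncomputable def blockUpper (a : GL ι F) (l : GL κ F) (u : Matrix ι κ F) : GL (ι ⊕ κ) F :=
  (isUnit_fromBlocks_zero₂₁.2 ⟨a.isUnit, l.isUnit⟩ : IsUnit (fromBlocks a.1 u 0 l.1)).unit

lemma coe_blockUpper (a : GL ι F) (l : GL κ F) (u : Matrix ι κ F) :
    (blockUpper a l u).1 = fromBlocks a.1 u 0 l.1 := rfl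

lemma blockUpper_mul (a a' : GL ι F) (l l' : GL κ F) (u u' : Matrix ι κ F) :
    blockUpper a l u * blockUpper a' l' u' =
      blockUpper (a * a') (l * l') (a.1 * u' + u * l'.1) := by
  apply Units.ext
  simp [coe_blockUpper, fromBlocks_multiply]

lemma blockUpper_one : blockUpper (1 : GL ι F) (1 : GL κ F) 0 = 1 :=
  Units.ext <| by simp [coe_blockUpper]

variable (F ι κ) in
/-- The embedding of `GL ι F × GL κ F` as block diagonal matrices. -/
noncomputable def blockDiagonalHom : GL ι F × GL κ F →* GL (ι ⊕ κ) F where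
  toFun p := blockUpper p.1 p.2 0
  map_one' := blockUpper_one
  map_mul' p p' := by simp [blockUpper_mul]

lemma coe_blockDiagonalHom (p : GL ι F × GL κ F) :
    (blockDiagonalHom F ι κ p).1 = fromBlocks p.1.1 0 0 p.2.1 := rfl

variable {K : Type*} [Field K] [Algebra F K]

/-- The action of `Kˣ` on `K` by multiplication, in coordinates. -/
noncomputable def mulGL (b : Module.Basis ι F K) : Kˣ →* GL ι F :=
  Units.map (Algebra.leftMulMatrix b : K →* Matrix ι ι F)

lemma coe_mulGL (b : Module.Basis ι F K) (x : Kˣ) : (mulGL b x).1 = Algebra.leftMulMatrix b x := rfl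

/-- The group of pairs of a unit `x` of `K` and a block upper triangular matrix
`blockUpper (mulGL b x) l u`. -/
@[ext] structure FieldParabolic (b : Module.Basis ι F K) (κ : Type*) [Fintype κ]
    [DecidableEq κ] where
  x : Kˣ
  l : GL κ F
  u : Matrix ι κ F

namespace FieldParabolic

variable {b : Module.Basis ι F K}

noncomputable instance : Group (FieldParabolic b κ) :=
  let _ : Mul (FieldParabolic b κ) :=
    ⟨fun p p' => ⟨p.x * p'.x, p.l * p'.l, (mulGL b p.x).1 * p'.u + p.u * p'.l.1⟩⟩
  let _ : One (FieldParabolic b κ) := ⟨⟨1, 1, 0⟩⟩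
  let _ : Inv (FieldParabolic b κ) :=
    ⟨fun p => ⟨p.x⁻¹, p.l⁻¹, -((mulGL b p.x⁻¹).1 * p.u * (p.l⁻¹).1)⟩⟩
  Group.ofLeftAxioms
    (fun p p' p'' => FieldParabolic.ext (mul_assoc _ _ _) (mul_assoc _ _ _) <| by
      change (mulGL b (p.x * p'.x)).1 * p''.u + ((mulGL b p.x).1 * p'.u + p.u * p'.l.1) * p''.l.1 =
        (mulGL b p.x).1 * ((mulGL b p'.x).1 * p''.u + p'.u * p''.l.1) + p.u * (p'.l * p''.l).1
      simp only [map_mul, Units.val_mul, Matrix.add_mul, Matrix.mul_add, Matrix.mul_assoc,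
        add_assoc])
    (fun p => FieldParabolic.ext (one_mul _) (one_mul _) <| by
      change (mulGL b 1).1 * p.u + 0 * p.l.1 = p.u
      simp)
    (fun p => FieldParabolic.ext (inv_mul_cancel _) (inv_mul_cancel _) <| by
      change (mulGL b p.x⁻¹).1 * p.u + -((mulGL b p.x⁻¹).1 * p.u * (p.l⁻¹).1) * p.l.1 = 0
      have hl : (p.l⁻¹).1 * p.l.1 = 1 := p.l.inv_mul
      rw [Matrix.neg_mul, Matrix.mul_assoc _ _ p.l.1, hl, Matrix.mul_one, add_neg_cancel])

/-- Forgets the unit of `K`. -/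
noncomputable def toGL : FieldParabolic b κ →* GL (ι ⊕ κ) F where
  toFun p := blockUpper (mulGL b p.x) p.l p.u
  map_one' := by
    change blockUpper (mulGL b 1) 1 0 = 1
    rw [map_one, blockUpper_one]
  map_mul' p p' := by
    rw [blockUpper_mul, ← map_mul]
    rfl

/-- The diagonal block in `GL κ F`. -/
def levi : FieldParabolic b κ →* GL κ F where
  toFun p := p.l
  map_one' := rfl
  map_mul' _ _ := rfl

/-- The diagonal block in `Kˣ`. -/
def unit : FieldParabolic b κ →* Kˣ where
  toFun p := p.x
  map_one' := rfl
  map_mul' _ _ := rfl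

/-- A parabolic element consists of its three blocks. -/
def equivProd : FieldParabolic b κ ≃ GL κ F × Kˣ × Matrix ι κ F where
  toFun p := (p.l, p.x, p.u)
  invFun p := ⟨p.2.1, p.1, p.2.2⟩
  left_inv _ := rfl
  right_inv _ := rfl

end FieldParabolic

end Basic

section Integrality

open scoped ComplexConjugate

variable {P L G : Type} [Group P] [Group L] [Group G] [Fintype P] [Fintype L] [DecidableEq L]

/-- The fibre product of two copies of `P` over `L`. -/
def fiberProduct (lam : P →* L) : Subgroup (P × P) :=
  (lam.comp (.fst P P)).eqLocus (lam.comp (.snd P P))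

lemma sum_fiberProduct_mul (lam : P →* L) [Fintype (fiberProduct lam)] (f g : P → ℂ) :
    ∑ h : fiberProduct lam, f h.1.1 * g h.1.2 =
      ∑ l, (∑ p with lam p = l, f p) * ∑ p with lam p = l, g p := by
  have hsubtype : ∑ h : fiberProduct lam, f h.1.1 * g h.1.2 =
      ∑ h : P × P with lam h.1 = lam h.2, f h.1 * g h.2 :=
    (Finset.sum_subtype _ (fun _ => by rw [Finset.mem_filter_univ]; rfl)
      fun h : P × P => f h.1 * g h.2).symm
  rw [hsubtype, Finset.sum_filter, Fintype.sum_prod_type]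
  simp_rw [Finset.sum_mul_sum, Finset.sum_filter]
  conv_rhs => rw [Finset.sum_comm]
  refine Finset.sum_congr rfl fun p _ => ?_
  simp [eq_comm]

lemma card_fiberProduct (lam : P →* L) :
    (Nat.card (fiberProduct lam) : ℂ) = ∑ l, (Finset.card {p | lam p = l} : ℂ) ^ 2 := by
  have := Fintype.ofFinite (fiberProduct lam)
  simpa [sq] using sum_fiberProduct_mul lam (fun _ => 1) (fun _ => 1)

lemma IsIrrChar.exists_natCast_eq_average_sum_fiber [Finite G] {χ : G → ℂ} (hχ : IsIrrChar G χ)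
    (φ : P →* G) (lam : P →* L) (c c' : P →* ℂ) :
    ∃ n : ℕ, (∑ l, (Finset.card {p | lam p = l} : ℂ) ^ 2)⁻¹ *
      ∑ l, (∑ p with lam p = l, c p * χ (φ p)) * conj (∑ p with lam p = l, c' p * χ (φ p)) = n := by
  have := Fintype.ofFinite (fiberProduct lam)
  let π₁ : fiberProduct lam →* P := (MonoidHom.fst P P).comp (fiberProduct lam).subtype
  let π₂ : fiberProduct lam →* P := (MonoidHom.snd P P).comp (fiberProduct lam).subtype
  let conjc' : P →* ℂ := (starRingEnd ℂ : ℂ →* ℂ).comp c'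
  obtain ⟨n, hn⟩ := hχ.exists_natCast_eq_average_mul_conj (φ.comp π₁) (φ.comp π₂)
    (c.comp π₁ * conjc'.comp π₂)
  refine ⟨n, ?_⟩
  rw [← hn, ← card_fiberProduct]
  simp_rw [map_sum]
  rw [← sum_fiberProduct_mul lam (fun p => c p * χ (φ p)) fun p => conj (c' p * χ (φ p))]
  congr 1
  refine Finset.sum_congr rfl fun h _ => ?_
  rw [map_mul]
  exact mul_mul_mul_comm _ _ _ _

end Integrality

end BlockUpperTriangular

section Multiplicity

open scoped ComplexConjugate

variable {F K ι κ : Type} [Field F] [Fintype F] [Field K] [Algebra F K]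
  [Fintype ι] [DecidableEq ι] [Fintype κ] [DecidableEq κ]
  (b : Module.Basis ι F K) (χ : GL (ι ⊕ κ) F → ℂ)

/-- The sum of `χ` over the coset of the unipotent radical of the parabolic subgroup of type
`(ι, κ)` that has diagonal blocks `mulGL b x` and `l`. -/
noncomputable def radicalSum (l : GL κ F) (x : Kˣ) : ℂ :=
  ∑ u : Matrix ι κ F, χ (blockUpper (mulGL b x) l u)

variable [Fintype K] [DecidableEq K]

variable (K) in
/-- The units of `K` that are not squares. -/
def nonsquareUnits : Finset Kˣ := Finset.univ.filter fun x => ¬IsSquare (x : K)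

lemma mem_nonsquareUnits {x : Kˣ} : x ∈ nonsquareUnits K ↔ ¬IsSquare (x : K) :=
  Finset.mem_filter_univ x

/-- The coefficient of the character `ψ` of `Kˣ` in the restriction of `radicalSum b χ l` to the
units of `K` that are not squares. -/
noncomputable def nonsquareFourier (ψ : AddChar (Additive Kˣ) ℂ) (l : GL κ F) : ℂ :=
  ∑ x ∈ nonsquareUnits K, ψ (.ofMul x) * radicalSum b χ l x

lemma sum_addChar_norm_sq_nonsquareFourier (l : GL κ F) :
    ∑ ψ : AddChar (Additive Kˣ) ℂ, ‖nonsquareFourier b χ ψ l‖ ^ 2 =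
      Nat.card Kˣ * ∑ x ∈ nonsquareUnits K, ‖radicalSum b χ l x‖ ^ 2 := by
  have hparseval := addChar_sum_norm_sq_sum (A := Additive Kˣ) fun x =>
    if IsSquare (x.toMul : K) then 0 else radicalSum b χ l x.toMul
  convert hparseval using 1
  · refine Finset.sum_congr rfl fun ψ _ => ?_
    simp_rw [nonsquareFourier, nonsquareUnits, Finset.sum_filter, mul_ite, mul_zero, ite_not]
    rw [← Additive.ofMul.sum_comp]
    rfl
  · simp_rw [nonsquareUnits, Finset.sum_filter, ite_not, apply_ite norm, ite_pow, norm_zero,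
      zero_pow two_ne_zero]
    rw [← Additive.ofMul.sum_comp]
    rfl

variable (K) in
/-- The quadratic character of `K` on units, with complex values. -/
noncomputable def quadraticHom : Kˣ →* ℂ :=
  ((Int.castRingHom ℂ : ℤ →* ℂ).comp (quadraticChar K).toMonoidHom).comp (Units.coeHom K)

lemma one_sub_quadraticHom (x : Kˣ) :
    1 - quadraticHom K x = if IsSquare (x : K) then 0 else 2 := by
  have hval : quadraticHom K x = (quadraticChar K x : ℂ) := rfl
  split_ifs with hx
  · simp [hval, (quadraticChar_one_iff_isSquare x.ne_zero).2 hx]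
  · rw [hval, quadraticChar_neg_one_iff_not_isSquare.2 hx]
    norm_num

lemma sum_one_sub_quadraticHom_mul_radicalSum (ψ : AddChar (Additive Kˣ) ℂ) (l : GL κ F) :
    ∑ x, ψ (.ofMul x) * (1 - quadraticHom K x) * radicalSum b χ l x =
      2 * nonsquareFourier b χ ψ l := by
  simp_rw [nonsquareFourier, nonsquareUnits, Finset.mul_sum, Finset.sum_filter,
    one_sub_quadraticHom, ite_not]
  refine Finset.sum_congr rfl fun x _ => ?_
  split_ifs <;> ring

variable [DecidableEq F]

/-- The normalised total mass of the Fourier coefficients at `ψ`. For irreducible `χ` it is a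
natural number, being a signed sum of multiplicities of four linear characters. -/
noncomputable def nonsquareMultiplicity (ψ : AddChar (Additive Kˣ) ℂ) : ℝ :=
  4 / (Nat.card (GL κ F) * (Nat.card Kˣ * Nat.card (Matrix ι κ F)) ^ 2) *
    ∑ l : GL κ F, ‖nonsquareFourier b χ ψ l‖ ^ 2

lemma nonsquareMultiplicity_nonneg (ψ : AddChar (Additive Kˣ) ℂ) :
    0 ≤ nonsquareMultiplicity b χ ψ := by
  unfold nonsquareMultiplicity
  positivity

variable {b} in
noncomputable instance FieldParabolic.instFintype : Fintype (FieldParabolic b κ) :=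
  Fintype.ofEquiv _ FieldParabolic.equivProd.symm

lemma sum_levi_eq {M : Type*} [AddCommMonoid M] (l : GL κ F) (f : FieldParabolic b κ → M) :
    ∑ p with FieldParabolic.levi p = l, f p = ∑ x, ∑ u, f ⟨x, l, u⟩ := by
  rw [Finset.sum_filter, ← FieldParabolic.equivProd.symm.sum_comp, Fintype.sum_prod_type,
    Fintype.sum_eq_single l, Fintype.sum_prod_type]
  · exact Finset.sum_congr rfl fun x _ => Finset.sum_congr rfl fun u _ => if_pos rfl
  · exact fun l' hl' => Finset.sum_eq_zero fun xu _ => if_neg hl'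

lemma card_levi_eq (l : GL κ F) :
    Finset.card {p : FieldParabolic b κ | FieldParabolic.levi p = l} =
      Nat.card Kˣ * Nat.card (Matrix ι κ F) := by
  rw [Finset.card_eq_sum_ones, sum_levi_eq]
  simp

variable {χ}

lemma exists_natCast_eq_average_radicalSum (hχ : IsIrrChar _ χ) (c c' : Kˣ →* ℂ) :
    ∃ n : ℕ, (Nat.card (GL κ F) * (Nat.card Kˣ * Nat.card (Matrix ι κ F)) ^ 2 : ℂ)⁻¹ *
      ∑ l : GL κ F, (∑ x, c x * radicalSum b χ l x) * conj (∑ x, c' x * radicalSum b χ l x) =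
        n := by
  have hsum (c : Kˣ →* ℂ) (l : GL κ F) : ∑ x, c x * radicalSum b χ l x =
      ∑ p : FieldParabolic b κ with FieldParabolic.levi p = l,
        c.comp FieldParabolic.unit p * χ (FieldParabolic.toGL p) := by
    simp_rw [sum_levi_eq, radicalSum, Finset.mul_sum]
    rfl
  obtain ⟨n, hn⟩ := hχ.exists_natCast_eq_average_sum_fiber (P := FieldParabolic b κ)
    FieldParabolic.toGL FieldParabolic.levi (c.comp FieldParabolic.unit)
    (c'.comp FieldParabolic.unit)
  refine ⟨n, ?_⟩
  rw [← hn]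
  simp [hsum, card_levi_eq]

lemma exists_natCast_eq_nonsquareMultiplicity (hχ : IsIrrChar _ χ)
    (ψ : AddChar (Additive Kˣ) ℂ) : ∃ n : ℕ, nonsquareMultiplicity b χ ψ = n := by
  let c : Kˣ →* ℂ := ψ.toMonoidHom.comp (MulEquiv.multiplicativeAdditive Kˣ).symm.toMonoidHom
  let D (c : Kˣ →* ℂ) (l : GL κ F) : ℂ := ∑ x, c x * radicalSum b χ l x
  have htwo (l : GL κ F) : 2 * nonsquareFourier b χ ψ l = D c l - D (c * quadraticHom K) l := by
    rw [← sum_one_sub_quadraticHom_mul_radicalSum, ← Finset.sum_sub_distrib]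
    refine Finset.sum_congr rfl fun x _ => ?_
    rw [mul_sub, mul_one, sub_mul]
    rfl
  obtain ⟨n₁, h₁⟩ := exists_natCast_eq_average_radicalSum b hχ c c
  obtain ⟨n₂, h₂⟩ := exists_natCast_eq_average_radicalSum b hχ c (c * quadraticHom K)
  obtain ⟨n₃, h₃⟩ := exists_natCast_eq_average_radicalSum b hχ (c * quadraticHom K) c
  obtain ⟨n₄, h₄⟩ := exists_natCast_eq_average_radicalSum b hχ (c * quadraticHom K)
    (c * quadraticHom K)
  have hint : (nonsquareMultiplicity b χ ψ : ℂ) = n₁ - n₂ - n₃ + n₄ := by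
    have hnorm (l : GL κ F) : 4 * (‖nonsquareFourier b χ ψ l‖ : ℂ) ^ 2 =
        (D c l - D (c * quadraticHom K) l) * conj (D c l - D (c * quadraticHom K) l) := by
      rw [← htwo, Complex.mul_conj']
      push_cast [norm_mul]
      norm_num [mul_pow]
    rw [nonsquareMultiplicity, ← h₁, ← h₂, ← h₃, ← h₄, ← mul_sub, ← mul_sub, ← mul_add,
      ← Finset.sum_sub_distrib, ← Finset.sum_sub_distrib, ← Finset.sum_add_distrib]
    push_cast
    rw [div_eq_inv_mul, mul_assoc, Finset.mul_sum]
    simp_rw [hnorm, map_sub]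
    congr 1
    exact Finset.sum_congr rfl fun l _ => by ring
  have hint' : nonsquareMultiplicity b χ ψ = ((n₁ - n₂ - n₃ + n₄ : ℤ) : ℝ) := by
    exact_mod_cast hint
  have hnonneg : (0 : ℤ) ≤ n₁ - n₂ - n₃ + n₄ := by
    exact_mod_cast hint' ▸ nonsquareMultiplicity_nonneg b χ ψ
  lift (n₁ - n₂ - n₃ + n₄ : ℤ) to ℕ using hnonneg with n
  exact ⟨n, hint'⟩

end Multiplicity

section Frobenius

lemma IsIrrChar.apply_eq_of_mul_eq {G : Type} [Group G] {χ : G → ℂ} (hχ : IsIrrChar G χ)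
    {g g' h : G} (hg : h * g = g' * h) : χ g' = χ g := by
  rw [← hχ.apply_conj g h, hg, mul_inv_cancel_right]

lemma isSquare_pow_iff_of_odd {M : Type*} [CommGroupWithZero M] {n : ℕ} (hn : Odd n) {x : M}
    (hx : x ≠ 0) : IsSquare (x ^ n) ↔ IsSquare x := by
  refine ⟨fun h => ?_, fun h => h.pow n⟩
  obtain ⟨k, rfl⟩ := hn
  have hdiv : x = x ^ (2 * k + 1) / (x ^ k * x ^ k) := by
    rw [eq_div_iff (by simp [hx]), pow_succ', two_mul, pow_add]
  exact hdiv ▸ h.div ⟨x ^ k, rfl⟩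

lemma bijective_pow_card_units (F : Type*) {K : Type*} [Field F] [Finite F] [Field K] [Finite K]
    [Algebra F K] : Function.Bijective fun x : Kˣ => x ^ Nat.card F := by
  have := Fintype.ofFinite F
  rw [Nat.card_eq_fintype_card]
  refine Finite.injective_iff_bijective.1 fun x y h => Units.ext ?_
  have h' : (x : K) ^ Fintype.card F = (y : K) ^ Fintype.card F := by
    simpa using congrArg Units.val h
  exact (FiniteField.frobeniusAlgEquivOfAlgebraic F K).injective h'

variable {F K ι κ : Type} [Field F] [Fintype F] [Field K] [Algebra F K]
  [Fintype ι] [DecidableEq ι] [Fintype κ] [DecidableEq κ]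
  (b : Module.Basis ι F K) {χ : GL (ι ⊕ κ) F → ℂ}

lemma radicalSum_pow_card [Finite K] (hχ : IsIrrChar _ χ) (l : GL κ F) (x : Kˣ) :
    radicalSum b χ l (x ^ Nat.card F) = radicalSum b χ l x := by
  rw [Nat.card_eq_fintype_card]
  obtain ⟨α, hα⟩ := exists_intertwiner_leftMulMatrix_pow_card b
  have hα' : α * mulGL b x = mulGL b (x ^ Fintype.card F) * α :=
    Units.ext <| by simpa [coe_mulGL] using hα x
  have hbij : Function.Bijective fun u : Matrix ι κ F => α.1 * u :=
    Finite.injective_iff_bijective.1 <| Function.LeftInverse.injective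
      (g := fun u => α⁻¹.1 * u) fun u => mul_mul_cancel_of_mul_eq_one α.inv_mul u
  refine (Fintype.sum_bijective _ hbij _ _ fun u => ?_).symm
  refine (hχ.apply_eq_of_mul_eq (h := blockUpper α 1 0) ?_).symm
  simp [blockUpper_mul, hα']

variable [DecidableEq F] [Fintype K] [DecidableEq K]

lemma nonsquareMultiplicity_pow_card (hodd : Odd (Nat.card F)) (hχ : IsIrrChar _ χ)
    (ψ : AddChar (Additive Kˣ) ℂ) :
    nonsquareMultiplicity b χ (ψ ^ Nat.card F) = nonsquareMultiplicity b χ ψ := by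
  have hfourier (l : GL κ F) :
      nonsquareFourier b χ (ψ ^ Nat.card F) l = nonsquareFourier b χ ψ l := by
    refine Finset.sum_bijective _ (bijective_pow_card_units F) (fun x => ?_) fun x _ => ?_
    · rw [mem_nonsquareUnits, mem_nonsquareUnits, Units.val_pow_eq_pow_val,
        isSquare_pow_iff_of_odd hodd x.ne_zero]
    · rw [AddChar.pow_apply, ofMul_pow, AddChar.map_nsmul_eq_pow, radicalSum_pow_card b hχ]
  simp only [nonsquareMultiplicity, hfourier]

end Frobenius

section Bessel

variable {F K ι κ : Type} [Field F] [Fintype F] [DecidableEq F] [Field K] [Algebra F K]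
  [Fintype ι] [DecidableEq ι] [Fintype κ] [DecidableEq κ]

lemma sum_card_conj_blockUpper_le (a a' : GL ι F) :
    ∑ l : GL κ F, ∑ u, ∑ u',
      Nat.card {h : GL (ι ⊕ κ) F // h * blockUpper a l u = blockUpper a' l u' * h} ≤
    Nat.card (ParabolicIntertwiner κ a.1 a'.1) := by
  simp_rw [← Nat.card_sigma]
  refine Nat.card_le_card_of_injective (fun t =>
    { z := t.1.1, u := t.2.1, u' := t.2.2.1
      α := t.2.2.2.1.1.toBlocks₁₁, β := t.2.2.2.1.1.toBlocks₁₂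
      γ := t.2.2.2.1.1.toBlocks₂₁, δ := t.2.2.2.1.1.toBlocks₂₂
      isUnit_z := t.1.isUnit
      isUnit_fromBlocks := by
        rw [fromBlocks_toBlocks]
        exact t.2.2.2.1.isUnit
      fromBlocks_mul := by
        rw [fromBlocks_toBlocks]
        exact congrArg Units.val t.2.2.2.2 }) ?_
  rintro ⟨l, u, u', h, hh⟩ ⟨l', v, v', h', hh'⟩ heq
  simp only [ParabolicIntertwiner.mk.injEq] at heq
  obtain ⟨hl, rfl, rfl, h₁₁, h₁₂, h₂₁, h₂₂⟩ := heq
  obtain rfl := Units.ext hl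
  obtain rfl : h = h' := Units.ext <| by
    rw [← fromBlocks_toBlocks h.1, h₁₁, h₁₂, h₂₁, h₂₂, fromBlocks_toBlocks]
  rfl

variable (b : Module.Basis ι F K) (S : Finset (Irr (GL (ι ⊕ κ) F)))

lemma sum_norm_sq_sum_radicalSum_le (X : Finset Kˣ) {c : Kˣ → ℂ} (hc : ∀ x, ‖c x‖ = 1) :
    ∑ χ ∈ S, ∑ l, ‖∑ x ∈ X, c x * radicalSum b χ.1 l x‖ ^ 2 ≤ ∑ x ∈ X, ∑ x' ∈ X,
      (Nat.card (ParabolicIntertwiner κ (mulGL b x).1 (mulGL b x').1) : ℝ) := by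
  have hbessel (l : GL κ F) : ∑ χ ∈ S, ‖∑ x ∈ X, c x * radicalSum b χ.1 l x‖ ^ 2 ≤
      ∑ x ∈ X, ∑ x' ∈ X, ∑ u, ∑ u', (Nat.card {h : GL (ι ⊕ κ) F //
        h * blockUpper (mulGL b x) l u = blockUpper (mulGL b x') l u' * h} : ℝ) := by
    convert sum_norm_sq_character_le S (fun i : X × Matrix ι κ F => c i.1)
      (fun i => blockUpper (mulGL b i.1) l i.2) using 2 with χ
    · simp_rw [Fintype.sum_prod_type, ← Finset.mul_sum, ← Finset.sum_coe_sort X]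
      rfl
    · simp_rw [hc, one_mul, Fintype.sum_prod_type, ← Finset.sum_coe_sort X]
      exact Finset.sum_congr rfl fun x _ => Finset.sum_comm
  rw [Finset.sum_comm]
  calc _ ≤ _ := Finset.sum_le_sum fun l _ => hbessel l
    _ = ∑ x ∈ X, ∑ x' ∈ X, ∑ l, ∑ u, ∑ u', (Nat.card {h : GL (ι ⊕ κ) F //
        h * blockUpper (mulGL b x) l u = blockUpper (mulGL b x') l u' * h} : ℝ) := by
      rw [Finset.sum_comm]
      exact Finset.sum_congr rfl fun x _ => Finset.sum_comm
    _ ≤ _ := Finset.sum_le_sum fun x _ => Finset.sum_le_sum fun x' _ =>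
      mod_cast sum_card_conj_blockUpper_le _ _

variable [Fintype K] [DecidableEq K]

lemma sum_norm_sq_nonsquareFourier_le (ψ : AddChar (Additive Kˣ) ℂ) :
    ∑ χ ∈ S, ∑ l, ‖nonsquareFourier b χ.1 ψ l‖ ^ 2 ≤
      ∑ x ∈ nonsquareUnits K, ∑ x' ∈ nonsquareUnits K,
        (Nat.card (ParabolicIntertwiner κ (mulGL b x).1 (mulGL b x').1) : ℝ) :=
  sum_norm_sq_sum_radicalSum_le b S _ fun _ => ψ.norm_apply _

lemma sum_sum_addChar_norm_sq_nonsquareFourier_le :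
    ∑ χ ∈ S, ∑ ψ : AddChar (Additive Kˣ) ℂ, ∑ l, ‖nonsquareFourier b χ.1 ψ l‖ ^ 2 ≤
      Nat.card Kˣ * ∑ x ∈ nonsquareUnits K,
        (Nat.card (ParabolicIntertwiner κ (mulGL b x).1 (mulGL b x).1) : ℝ) := by
  have hbessel (x : Kˣ) : ∑ χ ∈ S, ∑ l, ‖radicalSum b χ.1 l x‖ ^ 2 ≤
      (Nat.card (ParabolicIntertwiner κ (mulGL b x).1 (mulGL b x).1) : ℝ) := by
    simpa using sum_norm_sq_sum_radicalSum_le b S {x} (c := fun _ => 1) (by simp)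
  calc _ = Nat.card Kˣ * ∑ x ∈ nonsquareUnits K, ∑ χ ∈ S, ∑ l, ‖radicalSum b χ.1 l x‖ ^ 2 := by
        rw [Finset.sum_comm (s := nonsquareUnits K), Finset.mul_sum]
        refine Finset.sum_congr rfl fun χ _ => ?_
        rw [Finset.sum_comm, Finset.sum_comm (s := nonsquareUnits K), Finset.mul_sum]
        exact Finset.sum_congr rfl fun l _ => sum_addChar_norm_sq_nonsquareFourier b χ.1 l
    _ ≤ _ := mul_le_mul_of_nonneg_left (Finset.sum_le_sum fun x _ => hbessel x)
        (Nat.cast_nonneg _)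

end Bessel

section Counting

open scoped IntermediateField

variable {F K ι κ : Type} [Field F] [Field K] [Algebra F K] [Fintype ι]

lemma natCard_pow_card_basis (b : Module.Basis ι F K) :
    Nat.card F ^ Fintype.card ι = Nat.card K := by
  have := Module.Finite.of_basis b
  rw [Module.natCard_eq_pow_finrank (K := F) (V := K), Module.finrank_eq_card_basis b]

variable [Fintype K] [DecidableEq K] {k : ℕ}

lemma adjoin_eq_top_of_mem_nonsquareUnits (hk : Module.finrank F K = 2 ^ k) {x : Kˣ}
    (hx : x ∈ nonsquareUnits K) : F⟮(x : K)⟯ = ⊤ :=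
  adjoin_eq_top_of_not_isSquare hk (mem_nonsquareUnits.1 hx)

lemma sum_nonsquareUnits_le {f : Kˣ → ℝ} {C : ℝ} (hC : 0 ≤ C)
    (hf : ∀ x ∈ nonsquareUnits K, f x ≤ C) : ∑ x ∈ nonsquareUnits K, f x ≤ Nat.card Kˣ * C := by
  refine (Finset.sum_le_card_nsmul _ _ _ hf).trans ?_
  rw [nsmul_eq_mul, Nat.card_eq_fintype_card]
  gcongr
  exact Finset.card_le_univ _

variable [DecidableEq ι] [Fintype κ] [DecidableEq κ] (b : Module.Basis ι F K)

section Finite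

variable [Finite F]

lemma card_parabolicIntertwiner_mulGL_le (hq : 3 ≤ Nat.card F)
    (hk : Module.finrank F K = 2 ^ k) {x : Kˣ} (hx : x ∈ nonsquareUnits K) (x' : Kˣ) :
    (Nat.card (ParabolicIntertwiner κ (mulGL b x).1 (mulGL b x').1) : ℝ) ≤
      Nat.card (Intertwiner (mulGL b x).1 (mulGL b x').1) * (4 * Nat.card F ^ Fintype.card κ *
        (Nat.card (GL κ F) * Nat.card (Matrix ι κ F) ^ 2)) := by
  have := b.index_nonempty
  have hirr := actsIrreducibly_leftMulMatrix b (adjoin_eq_top_of_mem_nonsquareUnits hk hx)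
  refine (hirr.card_parabolicIntertwiner_le hq _ κ).trans_eq ?_
  rw [natCard_matrix, coe_mulGL, coe_mulGL]
  push_cast
  ring

lemma sum_card_parabolicIntertwiner_self_le (hq : 3 ≤ Nat.card F)
    (hk : Module.finrank F K = 2 ^ k) :
    ∑ x ∈ nonsquareUnits K,
        (Nat.card (ParabolicIntertwiner κ (mulGL b x).1 (mulGL b x).1) : ℝ) ≤
      Nat.card Kˣ * (Nat.card K * (4 * Nat.card F ^ Fintype.card κ *
        (Nat.card (GL κ F) * Nat.card (Matrix ι κ F) ^ 2))) := by
  have := b.index_nonempty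
  refine sum_nonsquareUnits_le (by positivity) fun x hx => ?_
  refine (card_parabolicIntertwiner_mulGL_le b hq hk hx x).trans ?_
  have hself := (actsIrreducibly_leftMulMatrix b
    (adjoin_eq_top_of_mem_nonsquareUnits hk hx)).card_intertwiner_le (mulGL b x).1
  rw [natCard_pow_card_basis b] at hself
  gcongr
  exact hself

lemma sum_sum_card_parabolicIntertwiner_le (hq : 3 ≤ Nat.card F)
    (hk : Module.finrank F K = 2 ^ k) :
    ∑ x ∈ nonsquareUnits K, ∑ x' ∈ nonsquareUnits K,
        (Nat.card (ParabolicIntertwiner κ (mulGL b x).1 (mulGL b x').1) : ℝ) ≤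
      Nat.card Kˣ * (2 ^ k * Nat.card K * (4 * Nat.card F ^ Fintype.card κ *
        (Nat.card (GL κ F) * Nat.card (Matrix ι κ F) ^ 2))) := by
  have := b.index_nonempty
  refine sum_nonsquareUnits_le (by positivity) fun x hx => ?_
  have hsum := sum_card_intertwiner_leftMulMatrix_le b
    (adjoin_eq_top_of_mem_nonsquareUnits hk hx) (nonsquareUnits K)
  rw [natCard_pow_card_basis b, ← Module.finrank_eq_card_basis b, hk] at hsum
  refine (Finset.sum_le_sum fun x' _ =>
    card_parabolicIntertwiner_mulGL_le b hq hk hx x').trans ?_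
  rw [← Finset.sum_mul]
  refine mul_le_mul_of_nonneg_right ?_ (by positivity)
  exact_mod_cast hsum

end Finite

variable [Fintype F] [DecidableEq F] (S : Finset (Irr (GL (ι ⊕ κ) F)))

lemma sum_sum_nonsquareMultiplicity_le (hq : 3 ≤ Nat.card F)
    (hk : Module.finrank F K = 2 ^ k) :
    ∑ χ ∈ S, ∑ ψ, nonsquareMultiplicity b χ.1 ψ ≤
      16 * Nat.card K * Nat.card F ^ Fintype.card κ := by
  simp_rw [nonsquareMultiplicity, ← Finset.mul_sum]
  have hbound := (sum_sum_addChar_norm_sq_nonsquareFourier_le b S).trans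
    (mul_le_mul_of_nonneg_left (sum_card_parabolicIntertwiner_self_le b hq hk)
      (Nat.cast_nonneg _))
  refine (mul_le_mul_of_nonneg_left hbound (by positivity)).trans_eq ?_
  field_simp
  norm_num

lemma sum_nonsquareMultiplicity_le (hq : 3 ≤ Nat.card F) (hk : Module.finrank F K = 2 ^ k)
    (ψ : AddChar (Additive Kˣ) ℂ) :
    ∑ χ ∈ S, nonsquareMultiplicity b χ.1 ψ ≤ 24 * 2 ^ k * Nat.card F ^ Fintype.card κ := by
  have hKF : Nat.card F ≤ Nat.card K :=
    Nat.card_le_card_of_injective _ (algebraMap F K).injective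
  have hunits : Nat.card K ≤ 3 / 2 * (Nat.card Kˣ : ℝ) := by
    have hcardUnits : Nat.card Kˣ = Nat.card K - 1 := Nat.card_units K
    have : 2 * Nat.card K ≤ 3 * Nat.card Kˣ := by omega
    have : (2 * Nat.card K : ℝ) ≤ 3 * Nat.card Kˣ := by exact_mod_cast this
    linarith
  simp_rw [nonsquareMultiplicity, ← Finset.mul_sum]
  have hbound := (sum_norm_sq_nonsquareFourier_le b S ψ).trans
    (sum_sum_card_parabolicIntertwiner_le b hq hk)
  refine (mul_le_mul_of_nonneg_left hbound (by positivity)).trans ?_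
  calc _ = 16 * 2 ^ k * (Nat.card F : ℝ) ^ Fintype.card κ * (Nat.card K / Nat.card Kˣ) := by
        field_simp
        norm_num
    _ ≤ 16 * 2 ^ k * (Nat.card F : ℝ) ^ Fintype.card κ * (3 / 2) := by
        refine mul_le_mul_of_nonneg_left ((div_le_iff₀ ?_).2 hunits) (by positivity)
        exact_mod_cast Nat.card_pos
    _ = _ := by ring

lemma exists_one_le_nonsquareMultiplicity {χ : GL (ι ⊕ κ) F → ℂ} (hχ : IsIrrChar _ χ) {x : Kˣ}
    (hx : x ∈ nonsquareUnits K) {l : GL κ F} (hl : radicalSum b χ l x ≠ 0) :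
    ∃ ψ, 1 ≤ nonsquareMultiplicity b χ ψ := by
  have hpos : 0 < ∑ ψ, ‖nonsquareFourier b χ ψ l‖ ^ 2 := by
    rw [sum_addChar_norm_sq_nonsquareFourier]
    exact mul_pos (mod_cast Nat.card_pos) <| Finset.sum_pos' (fun _ _ => by positivity)
      ⟨x, hx, pow_pos (norm_pos_iff.2 hl) 2⟩
  obtain ⟨ψ, -, hψ⟩ := Finset.exists_ne_zero_of_sum_ne_zero hpos.ne'
  have hmult : 0 < nonsquareMultiplicity b χ ψ :=
    mul_pos (div_pos four_pos (mul_pos (mod_cast Nat.card_pos)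
      (pow_pos (mul_pos (mod_cast Nat.card_pos) (mod_cast Nat.card_pos)) 2))) <|
    Finset.sum_pos' (fun _ _ => by positivity)
      ⟨l, Finset.mem_univ l, hψ.symm.lt_of_le (by positivity)⟩
  obtain ⟨n, hn⟩ := exists_natCast_eq_nonsquareMultiplicity b hχ ψ
  refine ⟨ψ, ?_⟩
  rw [hn] at hmult ⊢
  exact_mod_cast hmult

end Counting

lemma three_le_natCard_of_odd (F : Type*) [Finite F] [Nontrivial F] (hodd : Odd (Nat.card F)) :
    3 ≤ Nat.card F := by
  have := Finite.one_lt_card (α := F)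
  rcases hodd with ⟨j, hj⟩
  omega

lemma addChar_pow_natCard_eq_self {K : Type*} [Field K] [Finite K]
    (ψ : AddChar (Additive Kˣ) ℂ) : ψ ^ Nat.card K = ψ := by
  have := Fintype.ofFinite K
  refine DFunLike.ext _ _ fun a => ?_
  have ha : Nat.card K • a = a := by
    change Additive.ofMul (a.toMul ^ Nat.card K) = a
    rw [Nat.card_eq_fintype_card]
    exact congrArg Additive.ofMul (Units.ext (FiniteField.pow_card a.toMul.1))
  rw [AddChar.pow_apply, ← AddChar.map_nsmul_eq_pow, ha]

lemma isPeriodicPt_pow_iff {M : Type*} [Monoid M] (m n : ℕ) (x : M) :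
    Function.IsPeriodicPt (fun x : M => x ^ m) n x ↔ x ^ m ^ n = x := by
  rw [Function.IsPeriodicPt, Function.IsFixedPt, pow_iterate]

lemma sq_le_three_pow (w : ℕ) : w ^ 2 ≤ 3 ^ w := by
  induction w with
  | zero => simp
  | succ w ih =>
    rcases w with _ | _ | w
    · simp
    · norm_num
    · calc (w + 3) ^ 2 ≤ (w + 2) ^ 2 * 3 := by ring_nf; lia
        _ ≤ 3 ^ (w + 2) * 3 := Nat.mul_le_mul_right 3 ih
        _ = 3 ^ (w + 3) := (pow_succ ..).symm

section Exceptional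

variable {F K ι κ : Type} [Field F] [Fintype F] [Field K] [Fintype K] [DecidableEq K]
  [Algebra F K] [Fintype ι] [DecidableEq ι] [Fintype κ] [DecidableEq κ]
  (b : Module.Basis ι F K) (S : Finset (Irr (GL (ι ⊕ κ) F))) {k : ℕ}

lemma card_le_add_of_radicalSum_ne_zero (hodd : Odd (Nat.card F))
    (hk : Module.finrank F K = 2 ^ (k + 1))
    (hS : ∀ χ ∈ S, ∃ x ∈ nonsquareUnits K, ∃ l, radicalSum b χ.1 l x ≠ 0) :
    (S.card : ℝ) ≤ 16 * Nat.card K * Nat.card F ^ Fintype.card κ / 2 ^ (k + 1) +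
      Nat.card F ^ 2 ^ k * (24 * 2 ^ (k + 1) * Nat.card F ^ Fintype.card κ) := by
  classical
  have hq := three_le_natCard_of_odd F hodd
  let T : AddChar (Additive Kˣ) ℂ → AddChar (Additive Kˣ) ℂ := fun ψ => ψ ^ Nat.card F
  let Z : Finset (AddChar (Additive Kˣ) ℂ) := {ψ | Function.IsPeriodicPt T (2 ^ k) ψ}
  have hT (ψ) : Function.IsPeriodicPt T (2 ^ (k + 1)) ψ := by
    rw [isPeriodicPt_pow_iff, ← hk, Module.finrank_eq_card_basis b,
      natCard_pow_card_basis b, addChar_pow_natCard_eq_self]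
  have hZ : Z.card ≤ Nat.card F ^ 2 ^ k := by
    rw [← Nat.subtype_card Z (p := fun ψ => ψ ^ Nat.card F ^ 2 ^ k = ψ)
      fun ψ => (Finset.mem_filter_univ ψ).trans (isPeriodicPt_pow_iff ..)]
    exact card_addChar_pow_eq_self_le <|
      (by omega : 2 ≤ Nat.card F).trans (Nat.le_self_pow (by positivity) _)
  have hone (χ) (hχ : χ ∈ S) : 1 ≤ (∑ ψ, nonsquareMultiplicity b χ.1 ψ) / 2 ^ (k + 1) +
      ∑ ψ ∈ Z, nonsquareMultiplicity b χ.1 ψ := by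
    obtain ⟨x, hx, l, hl⟩ := hS χ hχ
    exact one_le_sum_div_two_pow_add_sum_periodic (nonsquareMultiplicity_nonneg b χ.1)
      (nonsquareMultiplicity_pow_card b hodd χ.2) hT
      (exists_one_le_nonsquareMultiplicity b χ.2 hx hl)
  calc (S.card : ℝ) = ∑ χ ∈ S, 1 := by simp
    _ ≤ (∑ χ ∈ S, ∑ ψ, nonsquareMultiplicity b χ.1 ψ) / 2 ^ (k + 1) +
        ∑ ψ ∈ Z, ∑ χ ∈ S, nonsquareMultiplicity b χ.1 ψ := by
      rw [Finset.sum_comm (s := Z), Finset.sum_div, ← Finset.sum_add_distrib]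
      exact Finset.sum_le_sum hone
    _ ≤ 16 * Nat.card K * Nat.card F ^ Fintype.card κ / 2 ^ (k + 1) +
        Z.card * (24 * 2 ^ (k + 1) * Nat.card F ^ Fintype.card κ) := by
      refine add_le_add (div_le_div_of_nonneg_right
        (sum_sum_nonsquareMultiplicity_le b S hq hk) (by positivity)) ?_
      rw [← nsmul_eq_mul]
      exact Finset.sum_le_card_nsmul _ _ _ fun ψ _ => sum_nonsquareMultiplicity_le b S hq hk ψ
    _ ≤ _ := by
      gcongr
      exact_mod_cast hZ

lemma card_le_div_two_pow_of_radicalSum_ne_zero (hodd : Odd (Nat.card F))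
    (hk : Module.finrank F K = 2 ^ (k + 1))
    (hS : ∀ χ ∈ S, ∃ x ∈ nonsquareUnits K, ∃ l, radicalSum b χ.1 l x ≠ 0) :
    (S.card : ℝ) ≤ 56 / 2 ^ k * Nat.card F ^ Fintype.card (ι ⊕ κ) := by
  have hq := three_le_natCard_of_odd F hodd
  have hcard := card_le_add_of_radicalSum_ne_zero b S hodd hk hS
  rw [← natCard_pow_card_basis b, ← Module.finrank_eq_card_basis b, hk, pow_succ 2 k,
    pow_mul] at hcard
  rw [Fintype.card_sum, ← Module.finrank_eq_card_basis b, hk, pow_succ 2 k, pow_add, pow_mul]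
  have hsq : ((2 : ℝ) ^ k) ^ 2 ≤ (Nat.card F : ℝ) ^ 2 ^ k := by
    exact_mod_cast (sq_le_three_pow (2 ^ k)).trans (Nat.pow_le_pow_left hq _)
  push_cast at hcard
  set Q : ℝ := (Nat.card F : ℝ) ^ 2 ^ k
  set w : ℝ := 2 ^ k
  have hw : 0 < w := by positivity
  calc _ ≤ _ := hcard
    _ = 8 / w * (Q ^ 2 * Nat.card F ^ Fintype.card κ) +
        48 / w * (Q * w ^ 2 * Nat.card F ^ Fintype.card κ) := by
      field_simp
      ring
    _ ≤ 8 / w * (Q ^ 2 * Nat.card F ^ Fintype.card κ) +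
        48 / w * (Q * Q * Nat.card F ^ Fintype.card κ) := by gcongr
    _ = _ := by ring

end Exceptional

section Vanishing

open scoped IntermediateField

variable {F K ι κ σ : Type} [Field F] [Field K] [Algebra F K] [Fintype ι] [DecidableEq ι]
  [Fintype κ] [DecidableEq κ] [Fintype σ] [DecidableEq σ] (b : Module.Basis ι F K)

lemma exists_leftMulMatrix_mul_sub_mul_eq [Finite F] {x : Kˣ} (hx : F⟮(x : K)⟯ = ⊤)
    (hx1 : (x : K) ≠ 1) (hκ : Fintype.card κ < Fintype.card ι) (l : GL κ F)
    (u : Matrix ι (κ ⊕ σ) F) :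
    ∃ N : Matrix ι (κ ⊕ σ) F, (mulGL b x).1 * N - N * (blockDiagonalHom F κ σ (l, 1)).1 = u := by
  have := Module.Finite.of_basis b
  have : Finite K := Module.finite_of_finite F
  refine Finite.injective_iff_surjective.1 (fun N N' h => sub_eq_zero.1 ?_) u
  refine eq_zero_of_leftMulMatrix_mul_eq_mul_fromBlocks_one (σ := σ) b hx hx1 hκ (l := l.1) ?_
  rw [← sub_eq_zero] at h ⊢
  rw [← h, coe_mulGL, coe_blockDiagonalHom, Units.val_one, Matrix.mul_sub, Matrix.sub_mul]
  abel

lemma apply_blockDiagonalHom_eq_zero_of_radicalSum_eq_zero [Fintype F]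
    {χ : GL (ι ⊕ (κ ⊕ σ)) F → ℂ} (hχ : IsIrrChar _ χ) {x : Kˣ}
    (hx : F⟮(x : K)⟯ = ⊤) (hx1 : (x : K) ≠ 1) (hκ : Fintype.card κ < Fintype.card ι) {l : GL κ F}
    (hsum : radicalSum b χ (blockDiagonalHom F κ σ (l, 1)) x = 0) :
    χ (blockDiagonalHom F ι (κ ⊕ σ) (mulGL b x, blockDiagonalHom F κ σ (l, 1))) = 0 := by
  set l₁ := blockDiagonalHom F κ σ (l, 1)
  have hconj (u) : χ (blockUpper (mulGL b x) l₁ u) = χ (blockUpper (mulGL b x) l₁ 0) := by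
    obtain ⟨N, hN⟩ := exists_leftMulMatrix_mul_sub_mul_eq b hx hx1 hκ l u
    refine (hχ.apply_eq_of_mul_eq (h := blockUpper 1 1 N) ?_).symm
    simp [blockUpper_mul, ← hN, l₁]
  simp only [radicalSum, hconj, Finset.sum_const, Finset.card_univ, smul_eq_zero,
    Fintype.card_ne_zero, false_or] at hsum
  exact hsum

end Vanishing

section GroupAlgebra

open MonoidAlgebra

/-- The linear extension of a function `f` on `G` to the group algebra. Characters are evaluated
on virtual group elements through it. -/
noncomputable def linearExtension {G : Type*} (f : G → ℂ) :
    MonoidAlgebra ℂ G →ₗ[ℂ] ℂ :=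
  (MonoidAlgebra.basis G ℂ).constr ℂ f

lemma linearExtension_of {G : Type*} [Monoid G] (f : G → ℂ) (g : G) :
    linearExtension f (of ℂ G g) = f g := by
  simpa [linearExtension] using (MonoidAlgebra.basis G ℂ).constr_basis ℂ f g

lemma linearExtension_mapDomainAlgHom {G H : Type*} [Monoid G] [Monoid H] (f : H → ℂ)
    (φ : G →* H) (a : MonoidAlgebra ℂ G) :
    linearExtension f (mapDomainAlgHom ℂ ℂ φ a) = linearExtension (f ∘ φ) a := by
  induction a using MonoidAlgebra.induction_on with
  | of g =>
    have hmap : mapDomainAlgHom ℂ ℂ φ (of ℂ G g) = of ℂ H (φ g) := by simp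
    rw [hmap, linearExtension_of, linearExtension_of, Function.comp_apply]
  | add a b ha hb => rw [map_add, map_add, ha, hb, map_add]
  | smul c a ha => rw [map_smul, map_smul, ha, map_smul]

lemma linearExtension_character {G V : Type*} [Group G] [AddCommGroup V] [Module ℂ V]
    (ρ : Representation ℂ G V) (a : MonoidAlgebra ℂ G) :
    linearExtension ρ.character a = LinearMap.trace ℂ V (ρ.asAlgebraHom a) := by
  induction a using MonoidAlgebra.induction_on with
  | of g => rw [linearExtension_of, Representation.asAlgebraHom_of, Representation.character]
  | add a b ha hb => rw [map_add, map_add, map_add, ha, hb]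
  | smul c a ha => rw [map_smul, map_smul, map_smul, ha]

lemma IsIrrChar.isIntegral_linearExtension {G : Type} [Group G] {χ : G → ℂ} (hχ : IsIrrChar G χ)
    {a : MonoidAlgebra ℂ G} {N : ℕ} (hN : 1 ≤ N) (ha : a ^ (N + 1) = a) :
    IsIntegral ℤ (linearExtension χ a) := by
  obtain ⟨V, -, rfl⟩ := hχ
  let ρ : Representation ℂ G V := V.ρ
  have hpow : ρ.asAlgebraHom a ^ (N + 1) = ρ.asAlgebraHom a := by rw [← map_pow, ha]
  exact linearExtension_character ρ a ▸ isIntegral_trace_of_pow_succ_eq_self hN hpow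

lemma linearExtension_mul_eq_zero {A G H : Type*} [Monoid A] [Monoid G] [Monoid H] {f : G → ℂ}
    {α : A →* G} {φ : H →* G} {s : Set A} (hf : ∀ x ∈ s, ∀ l, f (α x * φ l) = 0)
    {η : MonoidAlgebra ℂ A} (hη : η ∈ Submodule.span ℂ (of ℂ A '' s)) (T : MonoidAlgebra ℂ H) :
    linearExtension f (mapDomainAlgHom ℂ ℂ α η * mapDomainAlgHom ℂ ℂ φ T) = 0 := by
  induction hη using Submodule.span_induction with
  | zero => simp
  | add a b _ _ ha hb => rw [map_add, add_mul, map_add, ha, hb, add_zero]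
  | smul c a _ ha => rw [map_smul, smul_mul_assoc, map_smul, ha, smul_zero]
  | mem _ hx =>
    obtain ⟨x, hx, rfl⟩ := hx
    induction T using MonoidAlgebra.induction_on with
    | of l =>
      have hmap : mapDomainAlgHom ℂ ℂ α (of ℂ A x) * mapDomainAlgHom ℂ ℂ φ (of ℂ H l) =
          of ℂ G (α x * φ l) := by simp
      rw [hmap, linearExtension_of, hf x hx]
    | add a b ha hb => rw [map_add, mul_add, map_add, ha, hb, add_zero]
    | smul c a ha => rw [map_smul, mul_smul_comm, map_smul, ha, smul_zero]

lemma commute_mapDomainAlgHom {A G H : Type*} [Monoid A] [Monoid G] [Monoid H] {α : A →* G}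
    {φ : H →* G} (hcomm : ∀ x l, Commute (α x) (φ l)) (a : MonoidAlgebra ℂ A)
    (T : MonoidAlgebra ℂ H) :
    Commute (mapDomainAlgHom ℂ ℂ α a) (mapDomainAlgHom ℂ ℂ φ T) := by
  induction a using MonoidAlgebra.induction_on with
  | add a b ha hb => rw [map_add]; exact ha.add_left hb
  | smul c a ha => rw [map_smul]; exact ha.smul_left c
  | of x =>
    induction T using MonoidAlgebra.induction_on with
    | of l => simp [Commute, SemiconjBy, (hcomm x l).eq]
    | add a b ha hb => rw [map_add]; exact ha.add_right hb
    | smul c a ha => rw [map_smul]; exact ha.smul_right c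

end GroupAlgebra

section NonsquareInvolution

open Polynomial

lemma exists_X_pow_sub_one_dvd_X_mul_sq_sub_one {M : ℕ} (hM : 0 < M) :
    ∃ c : ℂ[X], X ^ M - 1 ∣ X * c ^ 2 - 1 := by
  have exists_sq_eq_inv (z : ℂ) : ∃ w : ℂ, w ^ 2 = z⁻¹ := IsAlgClosed.exists_pow_nat_eq _ two_pos
  choose w hw using exists_sq_eq_inv
  refine ⟨Lagrange.interpolate (nthRootsFinset M (1 : ℂ)) id w, ?_⟩
  rw [X_pow_sub_one_eq_prod hM (Complex.isPrimitiveRoot_exp M hM.ne')]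
  refine Finset.prod_dvd_of_coprime
    (fun x _ y _ hxy => isCoprime_X_sub_C_of_isUnit_sub (sub_ne_zero.2 hxy).isUnit) fun z hz => ?_
  have hz0 : z ≠ 0 := by
    rintro rfl
    simpa [hM.ne'] using (mem_nthRootsFinset hM 1).1 hz
  have heval : eval z (Lagrange.interpolate (nthRootsFinset M (1 : ℂ)) id w) = w z :=
    Lagrange.eval_interpolate_at_node (v := id) w (Set.injOn_id _) hz
  rw [dvd_iff_isRoot, IsRoot.def, eval_sub, eval_mul, eval_pow, heval, hw, eval_X, eval_one,
    mul_inv_cancel₀ hz0, sub_self]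

lemma not_isSquare_of_forall_mem_zpowers {K : Type*} [Field K] [Finite K] (hK : ringChar K ≠ 2)
    {t : Kˣ} (ht : ∀ x, x ∈ Subgroup.zpowers t) : ¬IsSquare (t : K) := by
  intro hsq
  obtain ⟨a, ha⟩ := FiniteField.exists_nonsquare hK
  have ha0 : a ≠ 0 := fun h => ha (h ▸ IsSquare.zero)
  obtain ⟨n, hn⟩ := Submonoid.mem_powers_iff _ _ |>.1 (mem_powers_iff_mem_zpowers.2
    (ht (Units.mk0 a ha0)))
  have hpow : (t : K) ^ n = a := by rw [← Units.val_pow_eq_pow_val, hn, Units.val_mk0]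
  exact ha (hpow ▸ hsq.pow n)

-- With `t` a generator of `Kˣ` and `c(z)² = z⁻¹` on the roots of unity, `η = t c(t²)` squares to
-- one and only involves odd powers of `t`.
lemma exists_sq_eq_one_mem_span_nonsquareUnits (K : Type) [Field K] [Fintype K] [DecidableEq K]
    (hK : ringChar K ≠ 2) :
    ∃ η ∈ Submodule.span ℂ (MonoidAlgebra.of ℂ Kˣ '' nonsquareUnits K), η ^ 2 = 1 := by
  obtain ⟨t, ht⟩ := IsCyclic.exists_generator (α := Kˣ)
  obtain ⟨c, w, hcw⟩ := exists_X_pow_sub_one_dvd_X_mul_sq_sub_one (Fintype.card_pos (α := Kˣ))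
  let τ := MonoidAlgebra.of ℂ Kˣ t
  refine ⟨τ * aeval (τ ^ 2) c, ?_, ?_⟩
  · rw [aeval_eq_sum_range, Finset.mul_sum]
    refine Submodule.sum_mem _ fun j _ => ?_
    rw [mul_smul_comm]
    refine Submodule.smul_mem _ _ (Submodule.subset_span ⟨t ^ (2 * j + 1), ?_, ?_⟩)
    · rw [Finset.mem_coe, mem_nonsquareUnits, Units.val_pow_eq_pow_val,
        isSquare_pow_iff_of_odd (odd_two_mul_add_one j) t.ne_zero]
      exact not_isSquare_of_forall_mem_zpowers hK ht
    · rw [map_pow, pow_succ', pow_mul]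
  · have hτ : aeval (τ ^ 2) (X ^ Fintype.card Kˣ - 1 : ℂ[X]) = 0 := by
      have : t ^ Fintype.card Kˣ = 1 := pow_card_eq_one
      rw [map_sub, map_pow, aeval_X, map_one, pow_right_comm, ← map_pow, this, map_one, one_pow,
        sub_self]
    have hc := congrArg (aeval (τ ^ 2)) hcw
    rw [map_mul, hτ, zero_mul, map_sub, map_mul, map_pow, aeval_X, map_one, sub_eq_zero] at hc
    rw [mul_pow, hc]

end NonsquareInvolution

section NondivisibleIrr

open MonoidAlgebra

lemma IsIrrChar.comp_mulEquiv {G H : Type} [Group G] [Group H] [Finite H] {χ : H → ℂ}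
    (hχ : IsIrrChar H χ) (e : G ≃* H) : IsIrrChar G (χ ∘ e) := by
  have := Fintype.ofFinite H
  have := Fintype.ofEquiv H e.symm.toEquiv
  obtain ⟨V, hV, rfl⟩ := hχ
  rw [FDRep.simple_iff_char_is_norm_one] at hV
  refine ⟨FDRep.of ((V.ρ : H →* _).comp e.toMonoidHom), ?_, rfl⟩
  rw [FDRep.simple_iff_char_is_norm_one, Nat.card_congr e.toEquiv, ← hV]
  refine Fintype.sum_equiv e.toEquiv _ _ fun g => ?_
  change V.character (e g) * V.character (e g⁻¹) = _
  rw [map_inv]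
  rfl

/-- Transport of irreducible characters along a group isomorphism. -/
def irrCongr {G H : Type} [Group G] [Group H] [Finite G] [Finite H] (e : G ≃* H) :
    Irr G ≃ Irr H where
  toFun χ := ⟨χ.1 ∘ e.symm, χ.2.comp_mulEquiv e.symm⟩
  invFun χ := ⟨χ.1 ∘ e, χ.2.comp_mulEquiv e⟩
  left_inv χ := by ext; simp
  right_inv χ := by ext; simp

/-- The irreducible characters whose value at the group algebra element `a` is not divisible
by `2 ^ r`. -/
def nondivisibleIrr {G : Type} [Group G] (a : MonoidAlgebra ℂ G) (r : ℕ) : Set (Irr G) :=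
  {χ | ¬NatDvdAlg (2 ^ r) (linearExtension χ.1 a)}

lemma nondivisibleIrr_zero {G : Type} [Group G] {a : MonoidAlgebra ℂ G} {N : ℕ} (hN : 1 ≤ N)
    (ha : a ^ (N + 1) = a) : nondivisibleIrr a 0 = ∅ := by
  refine Set.eq_empty_of_forall_notMem fun χ hχ => hχ ?_
  rw [NatDvdAlg, pow_zero, Nat.cast_one, div_one]
  exact χ.2.isIntegral_linearExtension hN ha

lemma ncard_nondivisibleIrr_mapDomainAlgHom {G H : Type} [Group G] [Group H] [Finite G] [Finite H]
    (e : G ≃* H) (a : MonoidAlgebra ℂ G) (r : ℕ) :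
    (nondivisibleIrr (mapDomainAlgHom ℂ ℂ (e : G →* H) a) r).ncard =
      (nondivisibleIrr a r).ncard := by
  refine Set.ncard_congr' ((irrCongr e).symm.subtypeEquiv fun χ => ?_)
  simp only [nondivisibleIrr, Set.mem_ofPred_eq, linearExtension_mapDomainAlgHom]
  rfl

-- If `χ` vanishes on `α x * φ l` for all `x ∈ s`, then `χ ((1 + η) / 2 * T) = χ T / 2`.
lemma nondivisibleIrr_succ_subset {A G H : Type} [Group A] [Group G] [Group H] (α : A →* G)
    (φ : H →* G) {s : Set A} {η : MonoidAlgebra ℂ A} (hη : η ∈ Submodule.span ℂ (of ℂ A '' s))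
    (T : MonoidAlgebra ℂ H) (r : ℕ) :
    nondivisibleIrr (mapDomainAlgHom ℂ ℂ φ T) (r + 1) ⊆
      {χ | ∃ x ∈ s, ∃ l, χ.1 (α x * φ l) ≠ 0} ∪
        nondivisibleIrr (mapDomainAlgHom ℂ ℂ α ((1 / 2 : ℂ) • (1 + η)) * mapDomainAlgHom ℂ ℂ φ T)
          r := by
  intro χ hχ
  refine or_iff_not_imp_left.2 fun hvanish => ?_
  simp only [Set.mem_ofPred_eq, not_exists, not_and, not_not] at hvanish
  have hhalf : linearExtension χ.1
      (mapDomainAlgHom ℂ ℂ α ((1 / 2 : ℂ) • (1 + η)) * mapDomainAlgHom ℂ ℂ φ T) =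
        1 / 2 * linearExtension χ.1 (mapDomainAlgHom ℂ ℂ φ T) := by
    rw [map_smul, smul_mul_assoc, map_smul, map_add, map_one, add_mul, one_mul, map_add,
      linearExtension_mul_eq_zero hvanish hη, add_zero, smul_eq_mul]
  rw [nondivisibleIrr, Set.mem_ofPred_eq, NatDvdAlg] at hχ ⊢
  rw [hhalf]
  convert hχ using 2
  push_cast
  rw [pow_succ]
  field_simp

end NondivisibleIrr

section BlockEmbeddings

variable (F : Type*) [Field F]

section

variable (ι κ : Type*) [Fintype ι] [DecidableEq ι] [Fintype κ] [DecidableEq κ]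

/-- The embedding of `GL ι F` in `GL (ι ⊕ κ) F` as the upper left block. -/
noncomputable def blockInl : GL ι F →* GL (ι ⊕ κ) F :=
  (blockDiagonalHom F ι κ).comp (MonoidHom.inl _ _)

/-- The embedding of `GL κ F` in `GL (ι ⊕ κ) F` as the lower right block. -/
noncomputable def blockInr : GL κ F →* GL (ι ⊕ κ) F :=
  (blockDiagonalHom F ι κ).comp (MonoidHom.inr _ _)

variable {F ι κ}

lemma blockInl_mul_blockInr (a : GL ι F) (l : GL κ F) :
    blockInl F ι κ a * blockInr F ι κ l = blockDiagonalHom F ι κ (a, l) := by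
  simp [blockInl, blockInr, ← map_mul]

lemma commute_blockInl_blockInr (a : GL ι F) (l : GL κ F) :
    Commute (blockInl F ι κ a) (blockInr F ι κ l) :=
  (MonoidHom.commute_inl_inr a l).map (blockDiagonalHom F ι κ)

lemma coe_blockInl (a : GL ι F) : (blockInl F ι κ a).1 = fromBlocks a.1 0 0 1 := rfl

lemma coe_blockInr (l : GL κ F) : (blockInr F ι κ l).1 = fromBlocks 1 0 0 l.1 := rfl

/-- The isomorphism of general linear groups that relabels the basis vectors. -/
noncomputable def reindexGL (F : Type*) [Field F] (e : ι ≃ κ) : GL ι F ≃* GL κ F :=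
  Units.mapEquiv (Matrix.reindexAlgEquiv F F e).toMulEquiv

lemma coe_reindexGL (e : ι ≃ κ) (a : GL ι F) : (reindexGL F e a).1 = Matrix.reindex e e a.1 := rfl

end

variable (ι κ σ : Type*) [Fintype ι] [DecidableEq ι] [Fintype κ] [DecidableEq κ] [Fintype σ]
  [DecidableEq σ]

lemma reindexGL_sumAssoc_comp_blockInl_comp_blockInl :
    (reindexGL F (Equiv.sumAssoc ι κ σ) : _ →* _).comp
      ((blockInl F (ι ⊕ κ) σ).comp (blockInl F ι κ)) = blockInl F ι (κ ⊕ σ) := by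
  refine MonoidHom.ext fun a => Units.ext ?_
  simp only [MonoidHom.comp_apply, MonoidHom.coe_coe, coe_reindexGL, coe_blockInl]
  ext (i | i | i) (j | j | j) <;> simp [Matrix.one_apply]

lemma reindexGL_sumAssoc_comp_blockInl_comp_blockInr :
    (reindexGL F (Equiv.sumAssoc ι κ σ) : _ →* _).comp
      ((blockInl F (ι ⊕ κ) σ).comp (blockInr F ι κ)) =
        (blockInr F ι (κ ⊕ σ)).comp (blockInl F κ σ) := by
  refine MonoidHom.ext fun a => Units.ext ?_
  simp only [MonoidHom.comp_apply, MonoidHom.coe_coe, coe_reindexGL, coe_blockInl, coe_blockInr]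
  ext (i | i | i) (j | j | j) <;> simp [Matrix.one_apply]

/-- Splitting off the last `d` of `s + d` indices and moving them to the front. -/
def splitOffEquiv (s d : ℕ) : κ ⊕ Fin (s + d) ≃ Fin d ⊕ (κ ⊕ Fin s) :=
  ((Equiv.refl κ).sumCongr finSumFinEquiv.symm).trans <|
    (Equiv.sumAssoc κ (Fin s) (Fin d)).symm.trans (Equiv.sumComm (κ ⊕ Fin s) (Fin d))

lemma reindexGL_splitOffEquiv_comp_blockInl (s d : ℕ) :
    (reindexGL F (splitOffEquiv κ s d) : _ →* _).comp (blockInl F κ (Fin (s + d))) =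
      (blockInr F (Fin d) (κ ⊕ Fin s)).comp (blockInl F κ (Fin s)) := by
  refine MonoidHom.ext fun a => Units.ext ?_
  simp only [MonoidHom.comp_apply, MonoidHom.coe_coe, coe_reindexGL, coe_blockInl, coe_blockInr]
  ext (i | i | i) (j | j | j) <;> simp [splitOffEquiv, Matrix.one_apply, Fin.ext_iff] <;>
    omega

end BlockEmbeddings

section Halving

open MonoidAlgebra

variable {F K ι κ : Type} [Field F] [Field K] [Algebra F K] [Fintype ι] [DecidableEq ι]
  [Fintype κ] [DecidableEq κ] (b : Module.Basis ι F K)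

/-- The element `P ⊗ T` of the group algebra of the block diagonal subgroup, with `Kˣ` acting on
the first block by multiplication. -/
noncomputable def fieldTensor (P : MonoidAlgebra ℂ Kˣ) (T : MonoidAlgebra ℂ (GL κ F)) :
    MonoidAlgebra ℂ (GL (ι ⊕ κ) F) :=
  mapDomainAlgHom ℂ ℂ ((blockInl F ι κ).comp (mulGL b)) P * mapDomainAlgHom ℂ ℂ (blockInr F ι κ) T

variable {b} in
lemma fieldTensor_pow_succ {P : MonoidAlgebra ℂ Kˣ} (hP : IsIdempotentElem P)
    {T : MonoidAlgebra ℂ (GL κ F)} {N : ℕ} (hT : T ^ (N + 1) = T) :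
    fieldTensor b P T ^ (N + 1) = fieldTensor b P T := by
  rw [fieldTensor, (commute_mapDomainAlgHom (fun x l => commute_blockInl_blockInr (mulGL b x) l)
    P T).mul_pow, ← map_pow, ← map_pow, hP.pow_succ_eq, hT]

lemma mapDomainAlgHom_reindexGL_sumAssoc_blockInl_fieldTensor (σ : Type) [Fintype σ]
    [DecidableEq σ] (P : MonoidAlgebra ℂ Kˣ) (T : MonoidAlgebra ℂ (GL κ F)) :
    mapDomainAlgHom ℂ ℂ (reindexGL F (Equiv.sumAssoc ι κ σ) : _ →* _)
        (mapDomainAlgHom ℂ ℂ (blockInl F (ι ⊕ κ) σ) (fieldTensor b P T)) =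
      mapDomainAlgHom ℂ ℂ ((blockInl F ι (κ ⊕ σ)).comp (mulGL b)) P *
        mapDomainAlgHom ℂ ℂ ((blockInr F ι (κ ⊕ σ)).comp (blockInl F κ σ)) T := by
  rw [← reindexGL_sumAssoc_comp_blockInl_comp_blockInl,
    ← reindexGL_sumAssoc_comp_blockInl_comp_blockInr, fieldTensor, map_mul, map_mul]
  simp only [mapDomainAlgHom_comp, AlgHom.comp_apply]

lemma isIdempotentElem_half_smul_one_add {R : Type*} [Ring R] [Algebra ℂ R] {η : R}
    (hη : η ^ 2 = 1) : IsIdempotentElem ((1 / 2 : ℂ) • (1 + η)) := by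
  have hsq : (1 + η) * (1 + η) = (2 : ℂ) • (1 + η) := by
    rw [two_smul, add_mul, one_mul, mul_add, mul_one, ← sq, hη, add_comm η 1]
  rw [IsIdempotentElem, smul_mul_smul_comm, hsq, smul_smul]
  norm_num

variable [Finite F] [Fintype K] [DecidableEq K] {k : ℕ}

lemma ncard_exists_apply_ne_zero_le (hodd : Odd (Nat.card F))
    (hk : Module.finrank F K = 2 ^ (k + 1)) (hκ : Fintype.card κ < 2 ^ (k + 1)) (σ : Type)
    [Fintype σ] [DecidableEq σ] :
    ({χ : Irr (GL (ι ⊕ (κ ⊕ σ)) F) | ∃ x ∈ (nonsquareUnits K : Set Kˣ), ∃ l : GL κ F,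
        χ.1 ((blockInl F ι (κ ⊕ σ)).comp (mulGL b) x *
          (blockInr F ι (κ ⊕ σ)).comp (blockInl F κ σ) l) ≠ 0}.ncard : ℝ) ≤
      56 / 2 ^ k * Nat.card F ^ Fintype.card (ι ⊕ (κ ⊕ σ)) := by
  have := Fintype.ofFinite F
  rw [Set.ncard_eq_toFinset_card _]
  refine card_le_div_two_pow_of_radicalSum_ne_zero b _ hodd hk fun χ hχ => ?_
  rw [Set.Finite.mem_toFinset] at hχ
  obtain ⟨x, hx, l, hne⟩ := hχ
  refine ⟨x, hx, blockInl F κ σ l, fun hsum => hne ?_⟩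
  have hx1 : (x : K) ≠ 1 := fun h => mem_nonsquareUnits.1 hx (h ▸ IsSquare.one)
  rw [MonoidHom.comp_apply, MonoidHom.comp_apply, blockInl_mul_blockInr]
  rw [← hk, Module.finrank_eq_card_basis b] at hκ
  exact apply_blockDiagonalHom_eq_zero_of_radicalSum_eq_zero b χ.2
    (adjoin_eq_top_of_mem_nonsquareUnits hk hx) hx1 hκ hsum

lemma ncard_nondivisibleIrr_succ_le (hodd : Odd (Nat.card F))
    (hk : Module.finrank F K = 2 ^ (k + 1)) (hκ : Fintype.card κ < 2 ^ (k + 1)) (σ : Type)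
    [Fintype σ] [DecidableEq σ] {η : MonoidAlgebra ℂ Kˣ}
    (hη : η ∈ Submodule.span ℂ (of ℂ Kˣ '' nonsquareUnits K)) (T : MonoidAlgebra ℂ (GL κ F))
    (r : ℕ) :
    ((nondivisibleIrr (mapDomainAlgHom ℂ ℂ
        ((blockInr F ι (κ ⊕ σ)).comp (blockInl F κ σ)) T) (r + 1)).ncard : ℝ) ≤
      56 / 2 ^ k * Nat.card F ^ Fintype.card (ι ⊕ (κ ⊕ σ)) +
        (nondivisibleIrr (mapDomainAlgHom ℂ ℂ (blockInl F (ι ⊕ κ) σ)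
          (fieldTensor b ((1 / 2 : ℂ) • (1 + η)) T)) r).ncard := by
  rw [← ncard_nondivisibleIrr_mapDomainAlgHom (reindexGL F (Equiv.sumAssoc ι κ σ)),
    mapDomainAlgHom_reindexGL_sumAssoc_blockInl_fieldTensor]
  have hsubset := nondivisibleIrr_succ_subset ((blockInl F ι (κ ⊕ σ)).comp (mulGL b))
    ((blockInr F ι (κ ⊕ σ)).comp (blockInl F κ σ)) hη T r
  have hncard := (Set.ncard_le_ncard hsubset).trans (Set.ncard_union_le _ _)
  refine (Nat.cast_le.2 hncard).trans ?_
  rw [Nat.cast_add]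
  gcongr
  exact ncard_exists_apply_ne_zero_le b hodd hk hκ σ

end Halving

section Asymptotics

open MonoidAlgebra Filter

lemma exists_algebra_finrank_eq (F : Type) [Field F] [Finite F] {d : ℕ} (hd : d ≠ 0) :
    ∃ (K : Type) (_ : Field K) (_ : Algebra F K), Module.finrank F K = d := by
  obtain ⟨p, hp⟩ := CharP.exists F
  have : Fact p.Prime := ⟨CharP.char_is_prime F p⟩
  have : NeZero d := ⟨hd⟩
  exact ⟨FiniteField.Extension F p d, inferInstance, inferInstance,
    FiniteField.finrank_extension F p d⟩

lemma ringChar_ne_two_of_odd_natCard {F : Type*} (K : Type*) [Field F] [Finite F] [Field K]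
    [Algebra F K] (hodd : Odd (Nat.card F)) : ringChar K ≠ 2 := by
  have := Fintype.ofFinite F
  rw [← Algebra.ringChar_eq F K]
  intro htwo
  have heven := FiniteField.even_card_iff_char_two.1 htwo
  rw [← Nat.card_eq_fintype_card, Nat.odd_iff.1 hodd] at heven
  exact one_ne_zero heven

lemma exists_lt_two_pow_succ_and_div_two_pow_le (m : ℕ) (c : ℝ) {ε : ℝ} (hε : 0 < ε) :
    ∃ k : ℕ, m < 2 ^ (k + 1) ∧ c / 2 ^ k ≤ ε := by
  have hlim : Tendsto (fun k : ℕ => c / (2 : ℝ) ^ k) atTop (nhds 0) :=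
    tendsto_const_nhds.div_atTop (tendsto_pow_atTop_atTop_of_one_lt one_lt_two)
  obtain ⟨k, hkε, hkm⟩ := ((hlim.eventually_le_const hε).and (eventually_ge_atTop m)).exists
  exact ⟨k, (hkm.trans_lt k.lt_succ_self).trans Nat.lt_two_pow_self, hkε⟩

/-- For every `T` in a group algebra `ℂ[GL κ F]` with `T ^ (N + 1) = T`, a condition that keeps
the values of characters at `T` integral, the number of irreducible characters of `GL (κ ⊕ Fin s) F`
whose value at `T` is not divisible by `2 ^ r` is negligible against `|F| ^ (|κ| + s)`. -/
def NegligibleNondivisibleIrr (F : Type) [Field F] (r : ℕ) : Prop :=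
  ∀ (κ : Type) [Fintype κ] [DecidableEq κ] (T : MonoidAlgebra ℂ (GL κ F)) (N : ℕ), 1 ≤ N →
    T ^ (N + 1) = T → ∀ ε : ℝ, 0 < ε → ∀ᶠ s in atTop,
      ((nondivisibleIrr (mapDomainAlgHom ℂ ℂ (blockInl F κ (Fin s)) T) r).ncard : ℝ) ≤
        ε * Nat.card F ^ (Fintype.card κ + s)

lemma negligibleNondivisibleIrr_zero (F : Type) [Field F] : NegligibleNondivisibleIrr F 0 := by
  intro κ _ _ T N hN hT ε hε
  refine Eventually.of_forall fun s => ?_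
  rw [nondivisibleIrr_zero hN (by rw [← map_pow, hT]), Set.ncard_empty, Nat.cast_zero]
  positivity

variable {F : Type} [Field F] [Finite F]

lemma NegligibleNondivisibleIrr.succ {r : ℕ} (hodd : Odd (Nat.card F))
    (ih : NegligibleNondivisibleIrr F r) : NegligibleNondivisibleIrr F (r + 1) := by
  classical
  intro κ _ _ T N hN hT ε hε
  obtain ⟨k, hκ, hkε⟩ := exists_lt_two_pow_succ_and_div_two_pow_le (Fintype.card κ) 56 (half_pos hε)
  let d := 2 ^ (k + 1)
  have hd : 0 < d := by positivity
  obtain ⟨K, _, _, hfinrank⟩ := exists_algebra_finrank_eq F hd.ne'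
  have : FiniteDimensional F K := Module.finite_of_finrank_pos (hfinrank ▸ hd)
  have : Finite K := Module.finite_of_finite F
  have := Fintype.ofFinite K
  let b : Module.Basis (Fin d) F K := Module.finBasisOfFinrankEq F K hfinrank
  obtain ⟨η, hη, hη_sq⟩ := exists_sq_eq_one_mem_span_nonsquareUnits K
    (ringChar_ne_two_of_odd_natCard K hodd)
  have htensor := fieldTensor_pow_succ (b := b) (isIdempotentElem_half_smul_one_add hη_sq) hT
  rw [← map_add_atTop_eq_nat d, eventually_map]
  filter_upwards [ih (Fin d ⊕ κ) _ N hN htensor (ε / 2) (half_pos hε)] with s hs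
  have hstep := ncard_nondivisibleIrr_succ_le b hodd hfinrank hκ (Fin s) hη T r
  rw [← reindexGL_splitOffEquiv_comp_blockInl, mapDomainAlgHom_comp, AlgHom.comp_apply,
    ncard_nondivisibleIrr_mapDomainAlgHom] at hstep
  have hcard : Fintype.card (Fin d ⊕ (κ ⊕ Fin s)) = Fintype.card κ + (s + d) := by
    simp only [Fintype.card_sum, Fintype.card_fin]; ring
  have hcard' : Fintype.card (Fin d ⊕ κ) + s = Fintype.card κ + (s + d) := by
    simp only [Fintype.card_sum, Fintype.card_fin]; ring
  rw [hcard] at hstep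
  rw [hcard'] at hs
  calc _ ≤ _ := hstep
    _ ≤ ε / 2 * Nat.card F ^ (Fintype.card κ + (s + d)) +
        ε / 2 * Nat.card F ^ (Fintype.card κ + (s + d)) := by gcongr
    _ = ε * Nat.card F ^ (Fintype.card κ + (s + d)) := by ring

lemma negligibleNondivisibleIrr_of_odd (hodd : Odd (Nat.card F)) (r : ℕ) :
    NegligibleNondivisibleIrr F r := by
  induction r with
  | zero => exact negligibleNondivisibleIrr_zero F
  | succ r ih => exact ih.succ hodd

lemma reindexGL_finSumFinEquiv_blockInl {F : Type*} [Field F] (n₀ n : ℕ) (g : GL (Fin n₀) F) :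
    reindexGL F finSumFinEquiv (blockInl F (Fin n₀) (Fin n) g) =
      glEmbed (Nat.le_add_right n₀ n) g := by
  have reindex_eq (m : ℕ) (h : n₀ + m = n₀ + n) :
      Matrix.reindex finSumFinEquiv finSumFinEquiv
          (fromBlocks g.1 0 0 (1 : Matrix (Fin n) (Fin n) F)) =
        Matrix.reindex (finSumFinEquiv.trans (finCongr h)) (finSumFinEquiv.trans (finCongr h))
          (fromBlocks g.1 0 0 (1 : Matrix (Fin m) (Fin m) F)) := by
    obtain rfl : m = n := Nat.add_left_cancel h
    rfl
  exact Units.ext (reindex_eq (n₀ + n - n₀) (by omega))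

lemma card_not_natDvdAlg_eq_ncard_nondivisibleIrr {G : Type} [Group G] (g : G) (r : ℕ) :
    Nat.card {χ : G → ℂ // IsIrrChar G χ ∧ ¬NatDvdAlg (2 ^ r) (χ g)} =
      (nondivisibleIrr (of ℂ G g) r).ncard := by
  simp only [nondivisibleIrr, linearExtension_of]
  exact Nat.card_congr (Equiv.subtypeSubtypeEquivSubtypeInter (IsIrrChar G)
    (fun χ => ¬NatDvdAlg (2 ^ r) (χ g))).symm

lemma eventually_card_not_natDvdAlg_glEmbed_le (hodd : Odd (Nat.card F)) (r n₀ : ℕ)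
    (g : GL (Fin n₀) F) {ε : ℝ} (hε : 0 < ε) :
    ∀ᶠ n in atTop, (Nat.card {χ : GL (Fin (n₀ + n)) F → ℂ //
        IsIrrChar _ χ ∧ ¬NatDvdAlg (2 ^ r) (χ (glEmbed (Nat.le_add_right n₀ n) g))} : ℝ) ≤
      ε * Nat.card F ^ (n₀ + n) := by
  have hpow : MonoidAlgebra.of ℂ (GL (Fin n₀) F) g ^ (orderOf g + 1) = MonoidAlgebra.of ℂ _ g := by
    rw [← map_pow, pow_succ, pow_orderOf_eq_one, one_mul]
  filter_upwards [negligibleNondivisibleIrr_of_odd hodd r (Fin n₀) _ _ (orderOf_pos g) hpow ε hε]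
    with n hn
  let e : GL (Fin n₀ ⊕ Fin n) F ≃* GL (Fin (n₀ + n)) F := reindexGL F finSumFinEquiv
  have hmap : mapDomainAlgHom ℂ ℂ (e : _ →* _)
      (mapDomainAlgHom ℂ ℂ (blockInl F (Fin n₀) (Fin n)) (MonoidAlgebra.of ℂ (GL (Fin n₀) F) g)) =
        MonoidAlgebra.of ℂ (GL (Fin (n₀ + n)) F) (glEmbed (Nat.le_add_right n₀ n) g) := by
    simp [e, ← reindexGL_finSumFinEquiv_blockInl]
  rw [Fintype.card_fin] at hn
  rwa [card_not_natDvdAlg_eq_ncard_nondivisibleIrr, ← hmap, ncard_nondivisibleIrr_mapDomainAlgHom]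

end Asymptotics

theorem two_power_divisibility_of_character_values
    (q : ℕ) (hq : IsPrimePow q) (hodd : Odd q)
    (F : Type) [Field F] [Fintype F] (hFq : Fintype.card F = q)
    (r n₀ : ℕ) (hr : 0 < r) (hn₀ : 0 < n₀) (g : GL (Fin n₀) F) :
    Filter.Tendsto
      (fun n : ℕ =>
        (Nat.card {χ : GL (Fin (n₀ + n)) F → ℂ //
            IsIrrChar _ χ ∧ ¬ NatDvdAlg (2 ^ r) (χ (glEmbed (Nat.le_add_right n₀ n) g))} : ℝ) /
          (Nat.card {χ : GL (Fin (n₀ + n)) F → ℂ // IsIrrChar _ χ} : ℝ))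
      Filter.atTop (nhds 0) := by
  rw [← Nat.card_eq_fintype_card] at hFq
  subst hFq
  have hF : (0 : ℝ) < Nat.card F := mod_cast Nat.card_pos
  rw [Metric.tendsto_nhds]
  intro ε hε
  filter_upwards [eventually_card_not_natDvdAlg_glEmbed_le hodd r n₀ g
    (by positivity : 0 < ε / 4)] with n hbad
  have hirr := pow_div_two_le_card_irr_GL F (n := n₀ + n) (by omega)
  rw [Real.dist_0_eq_abs, abs_of_nonneg (by positivity)]
  calc _ ≤ ε / 4 * Nat.card F ^ (n₀ + n) / (Nat.card F ^ (n₀ + n) / 2) :=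
        div_le_div₀ (by positivity) hbad (by positivity) hirr
    _ = ε / 2 := by field_simp; norm_num
    _ < ε := half_lt_self hε
end

section
/- Let ℓ be an odd prime, q a prime power coprime to ℓ, t the multiplicative order of q modulo ℓ, and τ = v_ℓ(q^t − 1). For all positive integers A and B, writing h = gcd(B, t), one has v_ℓ( ∏_{i=1}^{A} (q^{B·i} − 1) ) = ⌊Ah/t⌋ · (v_ℓ(B/h) + τ) + v_ℓ( ⌊Ah/t⌋! ). -/
/-!
Replacing `q` by `x = q ^ B`, whose order modulo `ℓ` is `d = t / h`, reduces the theorem to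
`∏ i ≤ A, (x ^ i - 1)`. The prime `ℓ` divides only the factors with `i = d * j`, `j ≤ A / d`, and
by lifting the exponent such a factor has valuation `v (x ^ d - 1) + v j`; the terms `v j` add up
to `v ((A / d)!)`. Since `B * d = t * (B / h)`, lifting the exponent once more gives
`v (x ^ d - 1) = τ + v (B / h)`.
-/

open Finset

theorem sum_Icc_filter_dvd {M : Type*} [AddCommMonoid M] {d : ℕ} (hd : 0 < d) (n : ℕ) (f : ℕ → M) :
    ∑ i ∈ Icc 1 n with d ∣ i, f i = ∑ j ∈ Icc 1 (n / d), f (d * j) := by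
  have multiples : {i ∈ Icc 1 n | d ∣ i} = (Icc 1 (n / d)).image (d * ·) := by
    ext i
    simp only [mem_filter, mem_image, mem_Icc, Nat.le_div_iff_mul_le hd]
    constructor
    · rintro ⟨⟨hi, hin⟩, j, rfl⟩
      exact ⟨j, ⟨Nat.pos_of_mul_pos_left hi, by rwa [mul_comm]⟩, rfl⟩
    · rintro ⟨j, ⟨hj, hjn⟩, rfl⟩
      exact ⟨⟨Nat.mul_pos hd hj, by rwa [mul_comm]⟩, dvd_mul_right d j⟩
  rw [multiples, sum_image fun i _ j _ => Nat.eq_of_mul_eq_mul_left hd]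

theorem orderOf_natCast_pos_of_coprime {m a : ℕ} [NeZero m] (h : a.Coprime m) :
    0 < orderOf (a : ZMod m) := by
  rw [← ZMod.coe_unitOfCoprime a h, orderOf_units]
  exact orderOf_pos _

theorem dvd_pow_sub_one_iff_orderOf_dvd {m a : ℕ} (ha : 0 < a) (n : ℕ) :
    m ∣ a ^ n - 1 ↔ orderOf (a : ZMod m) ∣ n := by
  rw [orderOf_dvd_iff_pow_eq_one, ← ZMod.natCast_eq_zero_iff,
    Nat.cast_sub (Nat.one_le_pow n a ha), sub_eq_zero, Nat.cast_pow, Nat.cast_one]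

section Valuation

variable {p : ℕ} [Fact p.Prime]

theorem padicValNat_prod {ι : Type*} {s : Finset ι} {f : ι → ℕ} (hf : ∀ i ∈ s, f i ≠ 0) :
    padicValNat p (∏ i ∈ s, f i) = ∑ i ∈ s, padicValNat p (f i) := by
  simp only [← Nat.factorization_def _ (Fact.out : p.Prime), Nat.factorization_prod_apply hf]

theorem padicValNat_factorial_eq_sum (n : ℕ) :
    padicValNat p n.factorial = ∑ i ∈ Icc 1 n, padicValNat p i := by
  rw [← prod_Ico_id_eq_factorial, Ico_add_one_right_eq_Icc]
  exact padicValNat_prod fun i hi => Nat.one_le_iff_ne_zero.mp (mem_Icc.mp hi).1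

theorem padicValNat_pow_sub_one (hp : Odd p) {x k : ℕ} (hx : 1 < x) (hpx : p ∣ x - 1)
    (hk : k ≠ 0) : padicValNat p (x ^ k - 1) = padicValNat p (x - 1) + padicValNat p k := by
  have hpx' : ¬p ∣ x := fun hdvd =>
    (Fact.out : p.Prime).not_dvd_one <| (Nat.dvd_sub_iff_right hx.le hdvd).mp hpx
  simpa only [one_pow] using padicValNat.pow_sub_pow hp hx hpx hpx' hk

variable {x : ℕ}

theorem padicValNat_pow_orderOf_mul_sub_one (hp : Odd p) (hx : 1 < x) (hxp : x.Coprime p) {k : ℕ}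
    (hk : k ≠ 0) :
    padicValNat p (x ^ (orderOf (x : ZMod p) * k) - 1) =
      padicValNat p (x ^ orderOf (x : ZMod p) - 1) + padicValNat p k := by
  rw [pow_mul]
  exact padicValNat_pow_sub_one hp
    (Nat.one_lt_pow (orderOf_natCast_pos_of_coprime hxp).ne' hx)
    ((dvd_pow_sub_one_iff_orderOf_dvd (by lia) _).mpr dvd_rfl) hk

theorem padicValNat_prod_pow_sub_one (hp : Odd p) (hx : 1 < x) (hxp : x.Coprime p) {d : ℕ}
    (hd : d = orderOf (x : ZMod p)) (n : ℕ) :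
    padicValNat p (∏ i ∈ Icc 1 n, (x ^ i - 1)) =
      n / d * padicValNat p (x ^ d - 1) + padicValNat p (n / d).factorial := by
  have hd_pos : 0 < d := hd ▸ orderOf_natCast_pos_of_coprime hxp
  have factor_ne_zero : ∀ i ∈ Icc 1 n, x ^ i - 1 ≠ 0 := fun i hi =>
    Nat.sub_ne_zero_of_lt <| Nat.one_lt_pow (Nat.one_le_iff_ne_zero.mp (mem_Icc.mp hi).1) hx
  have dvd_of_padicValNat_ne_zero : ∀ i ∈ Icc 1 n, padicValNat p (x ^ i - 1) ≠ 0 → d ∣ i :=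
    fun i hi hval => hd ▸ (dvd_pow_sub_one_iff_orderOf_dvd (by lia) i).mp
      ((dvd_iff_padicValNat_ne_zero (factor_ne_zero i hi)).mpr hval)
  calc padicValNat p (∏ i ∈ Icc 1 n, (x ^ i - 1))
      = ∑ i ∈ Icc 1 n, padicValNat p (x ^ i - 1) := padicValNat_prod factor_ne_zero
    _ = ∑ i ∈ Icc 1 n with d ∣ i, padicValNat p (x ^ i - 1) :=
        (sum_filter_of_ne dvd_of_padicValNat_ne_zero).symm
    _ = ∑ j ∈ Icc 1 (n / d), padicValNat p (x ^ (d * j) - 1) := sum_Icc_filter_dvd hd_pos n _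
    _ = ∑ j ∈ Icc 1 (n / d), (padicValNat p (x ^ d - 1) + padicValNat p j) :=
        sum_congr rfl fun j hj => hd ▸ padicValNat_pow_orderOf_mul_sub_one hp hx hxp
          (Nat.one_le_iff_ne_zero.mp (mem_Icc.mp hj).1)
    _ = n / d * padicValNat p (x ^ d - 1) + padicValNat p (n / d).factorial := by
        rw [sum_add_distrib, sum_const, Nat.card_Icc, Nat.add_sub_cancel, smul_eq_mul,
          padicValNat_factorial_eq_sum]

end Valuation

theorem lifting_the_exponent_product_general
    (ℓ : ℕ) (hℓ : ℓ.Prime) (hodd : Odd ℓ)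
    (q : ℕ) (hq : 1 < q) (hco : Nat.Coprime q ℓ)
    (t : ℕ) (ht : t = orderOf (q : ZMod ℓ))
    (τ : ℕ) (hτ : τ = padicValNat ℓ (q ^ t - 1))
    (A B : ℕ) (hB : 0 < B) (h : ℕ) (hh : h = Nat.gcd B t) :
    padicValNat ℓ (∏ i ∈ Finset.Icc 1 A, (q ^ (B * i) - 1)) =
      (A * h / t) * (padicValNat ℓ (B / h) + τ) +
        padicValNat ℓ (Nat.factorial (A * h / t)) := by
  have : Fact ℓ.Prime := ⟨hℓ⟩
  have hh_pos : 0 < h := hh ▸ Nat.gcd_pos_of_pos_left t hB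
  have hhB : h ∣ B := hh ▸ Nat.gcd_dvd_left B t
  have hht : h ∣ t := hh ▸ Nat.gcd_dvd_right B t
  have order_pow : t / h = orderOf ((q ^ B : ℕ) : ZMod ℓ) := by
    rw [Nat.cast_pow, orderOf_pow' _ hB.ne', ← ht, hh, Nat.gcd_comm]
  have quotient : A * h / t = A / (t / h) := by
    rw [← Nat.mul_div_mul_right A (t / h) hh_pos, Nat.div_mul_cancel hht]
  have valuation_pow : padicValNat ℓ ((q ^ B) ^ (t / h) - 1) = padicValNat ℓ (B / h) + τ := by
    have exponent : B * (t / h) = t * (B / h) := by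
      rw [← Nat.mul_div_assoc B hht, ← Nat.mul_div_assoc t hhB, mul_comm]
    rw [← pow_mul, exponent, hτ, add_comm, ht]
    exact padicValNat_pow_orderOf_mul_sub_one hodd hq hco
      (Nat.div_pos (Nat.le_of_dvd hB hhB) hh_pos).ne'
  simp only [pow_mul]
  rw [padicValNat_prod_pow_sub_one hodd (Nat.one_lt_pow hB.ne' hq) (hco.pow_left B) order_pow A,
    valuation_pow, quotient]

theorem lifting_the_exponent_product
    (ℓ : ℕ) (hℓ : ℓ.Prime) (hodd : Odd ℓ)
    (q : ℕ) (hq : IsPrimePow q) (hco : Nat.Coprime q ℓ)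
    (t : ℕ) (ht : t = orderOf (q : ZMod ℓ))
    (τ : ℕ) (hτ : τ = padicValNat ℓ (q ^ t - 1))
    (A B : ℕ) (hA : 0 < A) (hB : 0 < B) (h : ℕ) (hh : h = Nat.gcd B t) :
    padicValNat ℓ (∏ i ∈ Finset.Icc 1 A, (q ^ (B * i) - 1)) =
      (A * h / t) * (padicValNat ℓ (B / h) + τ) +
        padicValNat ℓ (Nat.factorial (A * h / t)) :=
  lifting_the_exponent_product_general ℓ hℓ hodd q hq.one_lt hco t ht τ hτ A B hB h hh
end
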